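/- arXiv:2411.15088 — 3 statements merged into one kernel-verified Lean document; each statement's English description precedes it below -/
import Mathlib

section
/- The absolute values of the coefficients of the chromatic polynomial of a finite simple graph form a unimodal sequence: if G has n vertices, P_G(λ) = Σ_{i=0}^{n} c_{n−i} λ^{n−i}, and h_i = |c_{n−i}|, then there exists an index j with 0 ≤ j ≤ n such that h_0 ≤ h_1 ≤ … ≤ h_j and h_j ≥ h_{j+1} ≥ … ≥ h_n. -/
open Polynomial

/-- The number of proper colorings of the finite simple graph `G` with `k` colors. -/
def SimpleGraph.numColorings {V : Type*} [Fintype V] [DecidableEq V]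
    (G : SimpleGraph V) [DecidableRel G.Adj] (k : ℕ) : ℕ :=
  Fintype.card {f : V → Fin k // ∀ a b, G.Adj a b → f a ≠ f b}

/-!
Let `u k` be the absolute values of the coefficients of the reduced characteristic polynomial of the
cycle matroid of `G`. Since the characteristic polynomial is `X - 1` times the reduced one, the
coefficient of codegree `k` of the chromatic polynomial has absolute value `u (k + 1) + u k`, where
`u 0 = 0`. If `u` is log-concave and positive in between, these sums form a unimodal sequence.

Log-concavity comes from volume polynomials of intervals `[F, G]` of the lattice of flats, whose
derivative at a flat `H` is the product of the volume polynomials of `[F, H]` and `[H, G]`. A volume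
polynomial of degree `d` has a concave `d`-th root to second order at every point lying above its
chords. Intervals of rank three are linear spaces, where the quadratic form is one square minus a
sum of squares. In larger intervals the derivatives are root-concave by induction. This forces all
positive eigenvalues of the normalized Hessian to be at least one, and since any two flats are
linked by a chain of comparable ones, only the point itself spans an eigenspace for those.

At the boundary point `-[S = ∅]` the iterated derivatives at the top flat are, up to sign, factorial
multiples of the numbers `u k`, and truncating the matroid makes every `k` reachable.
-/

namespace ChromaticUnimodality

/-! ### Quadratic forms with one positive eigenvalue -/

section LinearAlgebra

theorem mul_le_sq_of_nonpos_on_ker {V : Type*} [AddCommGroup V] [Module ℝ V]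
    (B : LinearMap.BilinForm ℝ V) (hB : B.IsSymm) (ℓ : V →ₗ[ℝ] ℝ)
    (hneg : ∀ x, ℓ x = 0 → B x x ≤ 0) {w : V} (hw : 0 < B w w) (x : V) :
    B x x * B w w ≤ B x w ^ 2 := by
  have hℓw : ℓ w ≠ 0 := fun h => (hneg w h).not_gt hw
  have hz := hneg (ℓ w • x - ℓ x • w) (by simp [mul_comm])
  have hwx : B w x = B x w := hB.eq w x
  simp only [map_sub, map_smul, LinearMap.sub_apply, LinearMap.smul_apply, smul_eq_mul, hwx] at hz
  have hscaled : ℓ w ^ 2 * (B x x * B w w) ≤ ℓ w ^ 2 * B x w ^ 2 := by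
    nlinarith [sq_nonneg (ℓ w * B x w - ℓ x * B w w)]
  exact le_of_mul_le_mul_left hscaled (by positivity)

open Matrix

variable {ι : Type*} [Fintype ι]

theorem dotProduct_mulVec_nonpos_of_orthogonal {B : Matrix ι ι ℝ} (hB : B.IsHermitian)
    {z : ι → ℝ} (hz : ∀ (μ : ℝ) (e : ι → ℝ), 0 < μ → B *ᵥ e = μ • e → e ⬝ᵥ z = 0) :
    z ⬝ᵥ B *ᵥ z ≤ 0 := by
  classical
  set b := hB.eigenvectorBasis
  have inner_eq (x y : ι → ℝ) : inner ℝ (WithLp.toLp 2 x) (WithLp.toLp 2 y) = x ⬝ᵥ y := by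
    simp [EuclideanSpace.inner_toLp_toLp, dotProduct_comm]
  have hBb (k : ι) : (b k).ofLp ⬝ᵥ B *ᵥ z = hB.eigenvalues k * ((b k).ofLp ⬝ᵥ z) := by
    rw [dotProduct_mulVec, ← mulVec_transpose, ← conjTranspose_eq_transpose_of_trivial, hB.eq,
      hB.mulVec_eigenvectorBasis, smul_dotProduct, smul_eq_mul]
  have hexpand : z ⬝ᵥ B *ᵥ z = ∑ k, hB.eigenvalues k * ((b k).ofLp ⬝ᵥ z) ^ 2 := by
    rw [← inner_eq, ← b.sum_inner_mul_inner]
    refine Finset.sum_congr rfl fun k _ => ?_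
    rw [show b k = WithLp.toLp 2 (b k).ofLp from rfl, inner_eq, inner_eq, hBb, dotProduct_comm z]
    ring
  rw [hexpand]
  refine Finset.sum_nonpos fun k _ => ?_
  rcases le_or_gt (hB.eigenvalues k) 0 with hk | hk
  · exact mul_nonpos_of_nonpos_of_nonneg hk (sq_nonneg _)
  · rw [hz _ _ hk (hB.mulVec_eigenvectorBasis k), sq, mul_zero, mul_zero]

variable {B : Matrix ι ι ℝ} {u : ι → ℝ}

theorem dirichlet_form_eq (hB : B.IsSymm) (hBu : B *ᵥ u = u) (y : ι → ℝ) :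
    (u * y) ⬝ᵥ (u * y) - (u * y) ⬝ᵥ B *ᵥ (u * y) =
      1 / 2 * ∑ i, ∑ j, B i j * u i * u j * (y i - y j) ^ 2 := by
  have hrow (i : ι) : ∑ j, B i j * u j = u i := congrFun hBu i
  have hleft : ∑ i, ∑ j, B i j * u i * u j * y i ^ 2 = (u * y) ⬝ᵥ (u * y) :=
    Finset.sum_congr rfl fun i _ => by
      calc ∑ j, B i j * u i * u j * y i ^ 2 = (u i * y i ^ 2) * ∑ j, B i j * u j := by
            rw [Finset.mul_sum]; exact Finset.sum_congr rfl fun j _ => by ring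
        _ = (u * y) i * (u * y) i := by rw [hrow, Pi.mul_apply]; ring
  have hright : ∑ i, ∑ j, B i j * u i * u j * y j ^ 2 = (u * y) ⬝ᵥ (u * y) := by
    rw [← hleft, Finset.sum_comm]
    exact Finset.sum_congr rfl fun i _ => Finset.sum_congr rfl fun j _ => by
      rw [hB.apply i j]; ring
  have hmixed : ∑ i, ∑ j, B i j * u i * u j * (y i * y j) = (u * y) ⬝ᵥ B *ᵥ (u * y) :=
    Finset.sum_congr rfl fun i _ => by
      rw [mulVec, dotProduct, Finset.mul_sum]
      exact Finset.sum_congr rfl fun j _ => by simp only [Pi.mul_apply]; ring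
  have hsq : ∑ i, ∑ j, B i j * u i * u j * (y i - y j) ^ 2 =
      ∑ i, ∑ j, B i j * u i * u j * y i ^ 2 + ∑ i, ∑ j, B i j * u i * u j * y j ^ 2 -
        2 * ∑ i, ∑ j, B i j * u i * u j * (y i * y j) := by
    simp only [Finset.mul_sum, ← Finset.sum_add_distrib, ← Finset.sum_sub_distrib]
    exact Finset.sum_congr rfl fun i _ => Finset.sum_congr rfl fun j _ => by ring
  rw [hsq, hleft, hright, hmixed]
  ring

theorem exists_eq_smul_of_mulVec_eq_smul (hB : B.IsSymm) (hu : ∀ i, 0 < u i) (hBu : B *ᵥ u = u)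
    (hoff : ∀ i j, i ≠ j → 0 ≤ B i j)
    (hconn : ∀ i j, Relation.EqvGen (fun i j => 0 < B i j) i j)
    {μ : ℝ} (hμ : 1 ≤ μ) {e : ι → ℝ} (he : B *ᵥ e = μ • e) : ∃ c : ℝ, e = c • u := by
  set y : ι → ℝ := e / u
  have hy : u * y = e := funext fun i => mul_div_cancel₀ (e i) (hu i).ne'
  have hterm (i j : ι) : 0 ≤ B i j * u i * u j * (y i - y j) ^ 2 := by
    rcases eq_or_ne i j with rfl | hij
    · simp
    · have := hoff i j hij
      have := hu i
      have := hu j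
      positivity
  have hrow (i : ι) : 0 ≤ ∑ j, B i j * u i * u j * (y i - y j) ^ 2 :=
    Finset.sum_nonneg fun j _ => hterm i j
  have hzero : ∑ i, ∑ j, B i j * u i * u j * (y i - y j) ^ 2 = 0 := by
    have hform := dirichlet_form_eq hB hBu y
    rw [hy, he, dotProduct_smul, smul_eq_mul] at hform
    have hee : 0 ≤ e ⬝ᵥ e := Finset.sum_nonneg fun i _ => mul_self_nonneg (e i)
    exact le_antisymm (by nlinarith) (Finset.sum_nonneg fun i _ => hrow i)
  have hconst (i j : ι) : y i = y j := by
    induction hconn i j with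
    | rel i j hij =>
      have hi := (Finset.sum_eq_zero_iff_of_nonneg fun i _ => hrow i).1 hzero i (Finset.mem_univ i)
      have hj := (Finset.sum_eq_zero_iff_of_nonneg fun j _ => hterm i j).1 hi j (Finset.mem_univ j)
      have hpos : 0 < B i j * u i * u j := mul_pos (mul_pos hij (hu i)) (hu j)
      exact sub_eq_zero.1 (pow_eq_zero_iff two_ne_zero |>.1
        ((mul_eq_zero.1 hj).resolve_left hpos.ne'))
    | refl => rfl
    | symm _ _ _ h => exact h.symm
    | trans _ _ _ _ _ h₁ h₂ => exact h₁.trans h₂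
  rcases isEmpty_or_nonempty ι with _ | ⟨⟨i₀⟩⟩
  · exact ⟨0, Subsingleton.elim _ _⟩
  · exact ⟨y i₀, funext fun i => by rw [← hy, Pi.mul_apply, hconst i i₀]; exact mul_comm _ _⟩

theorem dotProduct_mulVec_nonpos_of_mulVec_self (hB : B.IsSymm) (hu : ∀ i, 0 < u i)
    (hBu : B *ᵥ u = u) (hoff : ∀ i j, i ≠ j → 0 ≤ B i j)
    (hconn : ∀ i j, Relation.EqvGen (fun i j => 0 < B i j) i j)
    (hsq : ∀ x, x ⬝ᵥ B *ᵥ x ≤ B *ᵥ x ⬝ᵥ B *ᵥ x) {z : ι → ℝ} (hz : u ⬝ᵥ z = 0) :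
    z ⬝ᵥ B *ᵥ z ≤ 0 := by
  have hHerm : B.IsHermitian := by rwa [IsHermitian, conjTranspose_eq_transpose_of_trivial]
  refine dotProduct_mulVec_nonpos_of_orthogonal hHerm fun μ e hμ he => ?_
  rcases eq_or_ne e 0 with rfl | hne
  · exact zero_dotProduct z
  have hee : 0 < e ⬝ᵥ e :=
    lt_of_le_of_ne (Finset.sum_nonneg fun i _ => mul_self_nonneg (e i))
      fun h => hne (dotProduct_self_eq_zero.1 h.symm)
  have hμ1 : 1 ≤ μ := by
    have h := hsq e
    simp only [he, dotProduct_smul, smul_dotProduct, smul_eq_mul] at h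
    exact le_of_mul_le_mul_right (by linarith : 1 * (μ * (e ⬝ᵥ e)) ≤ μ * (μ * (e ⬝ᵥ e)))
      (mul_pos hμ hee)
  obtain ⟨c, rfl⟩ := exists_eq_smul_of_mulVec_eq_smul hB hu hBu hoff hconn hμ1 he
  rw [smul_dotProduct, hz, smul_zero]

theorem mulVec_rescale {s : ι → ℝ} (hs : ∀ i, s i ≠ 0) (A : Matrix ι ι ℝ) (x : ι → ℝ) :
    of (fun i j => A i j / (s i * s j)) *ᵥ (s * x) = A *ᵥ x / s := funext fun i => by
  simp only [mulVec, dotProduct, Pi.div_apply, Finset.sum_div]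
  refine Finset.sum_congr rfl fun j _ => ?_
  have := hs j
  simp only [of_apply, Pi.mul_apply]
  field_simp

theorem mul_dotProduct_div {s : ι → ℝ} (hs : ∀ i, s i ≠ 0) (x y : ι → ℝ) :
    (s * x) ⬝ᵥ (y / s) = x ⬝ᵥ y :=
  Finset.sum_congr rfl fun i _ => by
    have := hs i
    simp only [Pi.mul_apply, Pi.div_apply]
    field_simp

theorem dotProduct_mulVec_nonpos_of_le_sum {A : Matrix ι ι ℝ} (hA : A.IsSymm) {w : ι → ℝ}
    (hw : ∀ i, 0 < w i) (hAw : ∀ i, 0 < (A *ᵥ w) i) (hoff : ∀ i j, i ≠ j → 0 ≤ A i j)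
    (hconn : ∀ i j, Relation.EqvGen (fun i j => 0 < A i j) i j)
    (hsq : ∀ x, x ⬝ᵥ A *ᵥ x ≤ ∑ i, w i * (A *ᵥ x) i ^ 2 / (A *ᵥ w) i)
    {z : ι → ℝ} (hz : (A *ᵥ w) ⬝ᵥ z = 0) : z ⬝ᵥ A *ᵥ z ≤ 0 := by
  -- The rescaling is chosen so that `s * w` is fixed by the rescaled matrix `B`.
  set s : ι → ℝ := fun i => √((A *ᵥ w) i / w i)
  have hs (i : ι) : 0 < s i := Real.sqrt_pos.2 (div_pos (hAw i) (hw i))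
  have hsw (i : ι) : (A *ᵥ w) i = s i ^ 2 * w i := by
    rw [Real.sq_sqrt (div_pos (hAw i) (hw i)).le, div_mul_cancel₀ _ (hw i).ne']
  set B : Matrix ι ι ℝ := of fun i j => A i j / (s i * s j)
  have hBs (x : ι → ℝ) : B *ᵥ (s * x) = A *ᵥ x / s := mulVec_rescale (fun i => (hs i).ne') A x
  have hform (x : ι → ℝ) : (s * x) ⬝ᵥ B *ᵥ (s * x) = x ⬝ᵥ A *ᵥ x := by
    rw [hBs, mul_dotProduct_div fun i => (hs i).ne']
  have hBsymm : B.IsSymm :=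
    IsSymm.ext fun i j => by simp only [B, of_apply, hA.apply i j, mul_comm (s i)]
  have hBfix : B *ᵥ (s * w) = s * w := by
    rw [hBs]
    exact funext fun i => by simp only [Pi.div_apply, Pi.mul_apply, hsw]; field_simp [(hs i).ne']
  have hBsq (x : ι → ℝ) : x ⬝ᵥ B *ᵥ x ≤ B *ᵥ x ⬝ᵥ B *ᵥ x := by
    obtain ⟨x, rfl⟩ : ∃ x', x = s * x' :=
      ⟨x / s, funext fun i => (mul_div_cancel₀ (x i) (hs i).ne').symm⟩
    rw [hform, hBs]
    refine (hsq x).trans_eq (Finset.sum_congr rfl fun i _ => ?_)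
    have := (hs i).ne'
    have := (hw i).ne'
    rw [Pi.div_apply, hsw]
    field_simp
  rw [← hform]
  refine dotProduct_mulVec_nonpos_of_mulVec_self hBsymm (fun i => mul_pos (hs i) (hw i)) hBfix
    (fun i j hij => div_nonneg (hoff i j hij) (mul_pos (hs i) (hs j)).le)
    (fun i j => (hconn i j).mono fun i j h => div_pos h (mul_pos (hs i) (hs j))) hBsq ?_
  rw [← hz]
  exact Finset.sum_congr rfl fun i _ => by rw [hsw]; simp only [Pi.mul_apply]; ring

theorem dotProduct_mulVec_mul_le_sq [Nonempty ι] {A : Matrix ι ι ℝ} (hA : A.IsSymm) {w : ι → ℝ}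
    (hw : ∀ i, 0 < w i) (hAw : ∀ i, 0 < (A *ᵥ w) i) (hoff : ∀ i j, i ≠ j → 0 ≤ A i j)
    (hconn : ∀ i j, Relation.EqvGen (fun i j => 0 < A i j) i j)
    (hsq : ∀ x, x ⬝ᵥ A *ᵥ x ≤ ∑ i, w i * (A *ᵥ x) i ^ 2 / (A *ᵥ w) i) (x : ι → ℝ) :
    (x ⬝ᵥ A *ᵥ x) * (w ⬝ᵥ A *ᵥ w) ≤ (x ⬝ᵥ A *ᵥ w) ^ 2 := by
  classical
  have hww : 0 < w ⬝ᵥ A *ᵥ w :=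
    Finset.sum_pos (fun i _ => mul_pos (hw i) (hAw i)) Finset.univ_nonempty
  have hbilin (x y : ι → ℝ) : Matrix.toBilin' A x y = x ⬝ᵥ A *ᵥ y := toBilin'_apply' A x y
  have hsymm : (Matrix.toBilin' A).IsSymm := ⟨fun x y => by
    rw [hbilin, hbilin, dotProduct_comm, ← vecMul_transpose, hA.eq, dotProduct_mulVec]⟩
  simpa only [hbilin] using mul_le_sq_of_nonpos_on_ker _ hsymm (dotProductBilin ℝ ℝ (A *ᵥ w))
    (fun z hz => by
      rw [hbilin]; exact dotProduct_mulVec_nonpos_of_le_sum hA hw hAw hoff hconn hsq hz)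
    (by rwa [hbilin]) x

end LinearAlgebra

/-! ### Rank functions and flats -/

/-- A loopless matroid on the finite ground set `E`, presented by its rank function. -/
structure RankFunction (E : Type*) [DecidableEq E] where
  rk : Finset E → ℕ
  rk_empty : rk ∅ = 0
  rk_singleton (i : E) : rk {i} = 1
  rk_mono : Monotone rk
  rk_union_add_rk_inter_le (S T : Finset E) : rk (S ∪ T) + rk (S ∩ T) ≤ rk S + rk T

namespace RankFunction

variable {E : Type*} [DecidableEq E] (M : RankFunction E)

theorem rk_insert_le (i : E) (S : Finset E) : M.rk (insert i S) ≤ M.rk S + 1 := by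
  have h := M.rk_union_add_rk_inter_le {i} S
  rw [M.rk_singleton, ← Finset.insert_eq] at h
  omega

theorem rk_union_eq {S T : Finset E} (h : ∀ i ∈ T, M.rk (insert i S) = M.rk S) :
    M.rk (S ∪ T) = M.rk S := by
  induction T using Finset.induction_on with
  | empty => rw [Finset.union_empty]
  | insert i T _ ih =>
    have hT := ih fun j hj => h j (Finset.mem_insert_of_mem hj)
    have hi := h i (Finset.mem_insert_self i T)
    have hsub := M.rk_union_add_rk_inter_le (S ∪ T) (insert i S)
    rw [show S ∪ T ∪ insert i S = S ∪ insert i T by grind] at hsub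
    have hinter : M.rk S ≤ M.rk ((S ∪ T) ∩ insert i S) := M.rk_mono (by grind)
    have hunion : M.rk S ≤ M.rk (S ∪ insert i T) := M.rk_mono Finset.subset_union_left
    omega

theorem eq_empty_of_rk_eq_zero {S : Finset E} (h : M.rk S = 0) : S = ∅ := by
  by_contra hS
  obtain ⟨i, hi⟩ := Finset.nonempty_iff_ne_empty.2 hS
  have := M.rk_mono (Finset.singleton_subset_iff.2 hi)
  rw [M.rk_singleton] at this
  omega

theorem nonempty_of_rk_ne_zero {S : Finset E} (h : M.rk S ≠ 0) : S.Nonempty :=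
  Finset.nonempty_iff_ne_empty.2 fun hS => h (hS ▸ M.rk_empty)

/-- A flat: a set whose rank increases whenever an element is added. -/
def IsFlat (F : Finset E) : Prop := ∀ i ∉ F, M.rk F < M.rk (insert i F)

theorem isFlat_empty : M.IsFlat ∅ := fun i _ => by
  simp [M.rk_empty, M.rk_singleton]

theorem isFlat_univ [Fintype E] : M.IsFlat Finset.univ := fun i hi =>
  absurd (Finset.mem_univ i) hi

variable {M} {F G H : Finset E}

theorem IsFlat.rk_insert (hF : M.IsFlat F) {i : E} (hi : i ∉ F) :
    M.rk (insert i F) = M.rk F + 1 :=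
  le_antisymm (M.rk_insert_le i F) (hF i hi)

theorem IsFlat.rk_lt (hF : M.IsFlat F) (h : F ⊂ G) : M.rk F < M.rk G := by
  obtain ⟨i, hi, hiF⟩ := Finset.exists_of_ssubset h
  exact (hF i hiF).trans_le (M.rk_mono (Finset.insert_subset hi h.subset))

variable (M)

open Classical in
/-- The flats strictly between `F` and `G`. -/
noncomputable def between (F G : Finset E) : Finset (Finset E) := {H ∈ Finset.Ioo F G | M.IsFlat H}

variable {M}

theorem mem_between : H ∈ M.between F G ↔ (F ⊂ H ∧ H ⊂ G) ∧ M.IsFlat H := by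
  simp [between]

theorem isFlat_of_mem_between (hH : H ∈ M.between F G) : M.IsFlat H := (mem_between.1 hH).2

theorem left_ssubset_of_mem_between (hH : H ∈ M.between F G) : F ⊂ H := (mem_between.1 hH).1.1

theorem ssubset_right_of_mem_between (hH : H ∈ M.between F G) : H ⊂ G := (mem_between.1 hH).1.2

theorem between_trans_left {K : Finset E} (hH : H ∈ M.between F G) (hK : K ∈ M.between F H) :
    K ∈ M.between F G := by
  rw [mem_between] at *
  exact ⟨⟨hK.1.1, hK.1.2.trans hH.1.2⟩, hK.2⟩

theorem between_trans_right {K : Finset E} (hH : H ∈ M.between F G) (hK : K ∈ M.between H G) :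
    K ∈ M.between F G := by
  rw [mem_between] at *
  exact ⟨⟨hH.1.1.trans hK.1.1, hK.1.2⟩, hK.2⟩

theorem IsFlat.rk_lt_of_mem_between (hF : M.IsFlat F) (hH : H ∈ M.between F G) :
    M.rk F < M.rk H :=
  hF.rk_lt (left_ssubset_of_mem_between hH)

theorem rk_lt_of_mem_between (hH : H ∈ M.between F G) : M.rk H < M.rk G :=
  (isFlat_of_mem_between hH).rk_lt (ssubset_right_of_mem_between hH)

theorem between_eq_empty (hF : M.IsFlat F) (h : M.rk G ≤ M.rk F + 1) : M.between F G = ∅ :=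
  Finset.eq_empty_of_forall_notMem fun H hH => by
    have := hF.rk_lt_of_mem_between hH
    have := rk_lt_of_mem_between hH
    omega

theorem between_induction {P : Finset E → Finset E → Prop}
    (step : ∀ F G, (∀ H ∈ M.between F G, P F H ∧ P H G) → P F G) (F G : Finset E) : P F G := by
  induction hn : G.card - F.card using Nat.strong_induction_on generalizing F G with
  | _ n ih =>
    refine step F G fun H hH => ?_
    have hFH := Finset.card_lt_card (left_ssubset_of_mem_between hH)
    have hHG := Finset.card_lt_card (ssubset_right_of_mem_between hH)
    exact ⟨ih _ (by omega) F H rfl, ih _ (by omega) H G rfl⟩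

variable (M) [Finite E]

/-- The closure of `S`: the smallest flat containing `S`. -/
noncomputable def closure (S : Finset E) : Finset E :=
  (Set.toFinite {i | M.rk (insert i S) = M.rk S}).toFinset

theorem mem_closure {S : Finset E} {i : E} : i ∈ M.closure S ↔ M.rk (insert i S) = M.rk S := by
  simp [closure]

theorem subset_closure (S : Finset E) : S ⊆ M.closure S := fun i hi => by
  rw [mem_closure, Finset.insert_eq_of_mem hi]

theorem rk_closure (S : Finset E) : M.rk (M.closure S) = M.rk S := by
  have h := M.rk_union_eq (T := M.closure S) fun i hi => M.mem_closure.1 hi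
  rwa [Finset.union_eq_right.2 (M.subset_closure S)] at h

theorem isFlat_closure (S : Finset E) : M.IsFlat (M.closure S) := fun i hi => by
  have hne : M.rk (insert i S) ≠ M.rk S := fun h => hi (M.mem_closure.2 h)
  have hle : M.rk S ≤ M.rk (insert i S) := M.rk_mono (Finset.subset_insert i S)
  have hins : M.rk (insert i S) ≤ M.rk (insert i (M.closure S)) :=
    M.rk_mono (Finset.insert_subset_insert i (M.subset_closure S))
  rw [rk_closure]
  omega

variable {M}

theorem IsFlat.closure_subset (hF : M.IsFlat F) {S : Finset E} (h : S ⊆ F) :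
    M.closure S ⊆ F := fun i hi => by
  by_contra hiF
  have hlt := hF i hiF
  have hsub := M.rk_union_add_rk_inter_le F (insert i S)
  rw [show F ∪ insert i S = insert i F by grind] at hsub
  have hinter : M.rk S ≤ M.rk (F ∩ insert i S) := M.rk_mono (by grind)
  rw [M.mem_closure] at hi
  omega

theorem IsFlat.eq_closure (hF : M.IsFlat F) {S : Finset E} (h : S ⊆ F) (hr : M.rk F = M.rk S) :
    F = M.closure S := by
  by_contra hne
  have hlt := (M.isFlat_closure S).rk_lt ((hF.closure_subset h).ssubset_of_ne (Ne.symm hne))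
  rw [rk_closure] at hlt
  omega

section Covers

variable (hF : M.IsFlat F) {i : E} (hi : i ∉ F)
include hF hi

theorem IsFlat.closure_insert_mem_between (hG : M.IsFlat G) (hFG : F ⊆ G) (hiG : i ∈ G)
    (hr : M.rk F + 2 ≤ M.rk G) : M.closure (insert i F) ∈ M.between F G := by
  have hmem : i ∈ M.closure (insert i F) := M.subset_closure _ (Finset.mem_insert_self i F)
  have hrk := M.rk_closure (insert i F)
  rw [hF.rk_insert hi] at hrk
  refine mem_between.2 ⟨⟨?_, ?_⟩, M.isFlat_closure _⟩
  · exact Finset.ssubset_iff_subset_ne.2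
      ⟨(Finset.subset_insert i F).trans (M.subset_closure _), fun h => hi (h ▸ hmem)⟩
  · exact Finset.ssubset_iff_subset_ne.2
      ⟨hG.closure_subset (Finset.insert_subset hiG hFG), fun h => by rw [h] at hrk; omega⟩

theorem IsFlat.eq_closure_insert (hH : M.IsFlat H) (hFH : F ⊆ H) (hiH : i ∈ H)
    (hr : M.rk H = M.rk F + 1) : H = M.closure (insert i F) :=
  hH.eq_closure (Finset.insert_subset hiH hFH) (by rw [hF.rk_insert hi, hr])

theorem IsFlat.sum_between_mem {A : Type*} [AddCommMonoid A] (hG : M.IsFlat G) (hFG : F ⊆ G)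
    (hiG : i ∈ G) (hr : M.rk F + 2 ≤ M.rk G) {f : Finset E → A}
    (hf : ∀ H ∈ M.between F G, i ∈ H → M.rk H ≠ M.rk F + 1 → f H = 0) :
    ∑ H ∈ M.between F G with i ∈ H, f H = f (M.closure (insert i F)) := by
  have hmem : i ∈ M.closure (insert i F) := M.subset_closure _ (Finset.mem_insert_self i F)
  refine Finset.sum_eq_single_of_mem _
    (Finset.mem_filter.2 ⟨hF.closure_insert_mem_between hi hG hFG hiG hr, hmem⟩) fun H hH hne => ?_
  obtain ⟨hH, hiH⟩ := Finset.mem_filter.1 hH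
  exact hf H hH hiH fun hrk => hne <| hF.eq_closure_insert hi (isFlat_of_mem_between hH)
    (left_ssubset_of_mem_between hH).subset hiH hrk

end Covers

variable (M) in
/-- The truncation to rank `k`. -/
def truncate (k : ℕ) (hk : 0 < k) : RankFunction E where
  rk S := min (M.rk S) k
  rk_empty := by simp [M.rk_empty]
  rk_singleton i := by rw [M.rk_singleton]; exact min_eq_left hk
  rk_mono _ _ h := min_le_min_right k (M.rk_mono h)
  rk_union_add_rk_inter_le S T := by
    have := M.rk_union_add_rk_inter_le S T
    have := M.rk_mono (Finset.subset_union_left (s₁ := S) (s₂ := T))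
    have := M.rk_mono (Finset.subset_union_right (s₁ := S) (s₂ := T))
    have := M.rk_mono (Finset.inter_subset_left (s₁ := S) (s₂ := T))
    have := M.rk_mono (Finset.inter_subset_right (s₁ := S) (s₂ := T))
    omega

end RankFunction

/-! ### Chords and derivations -/

section Modular

variable {E A A' : Type*} [AddCommGroup A] [AddCommGroup A']

/-- A modular set function, that is, a constant plus the sum of weights of the elements. -/
def IsModular (y : Finset E → A) : Prop := ∃ (c : A) (a : E → A), ∀ S, y S = c + ∑ i ∈ S, a i

theorem isModular_const (c : A) : IsModular fun _ : Finset E => c :=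
  ⟨c, 0, fun S => by simp⟩

theorem isModular_ite_mem [DecidableEq E] (i : E) (c : A) :
    IsModular fun S : Finset E => if i ∈ S then c else 0 :=
  ⟨0, Pi.single i c, fun S => by simp⟩

theorem IsModular.add {x y : Finset E → A} (hx : IsModular x) (hy : IsModular y) :
    IsModular (x + y) := by
  obtain ⟨c, a, h⟩ := hx
  obtain ⟨d, b, h'⟩ := hy
  exact ⟨c + d, a + b, fun S => by
    simp only [Pi.add_apply, h, h', Finset.sum_add_distrib]; abel⟩

variable [Module ℝ A] [Module ℝ A']

theorem IsModular.map {y : Finset E → A} (hy : IsModular y) (f : A →ₗ[ℝ] A') :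
    IsModular fun S => f (y S) := by
  obtain ⟨c, a, h⟩ := hy
  exact ⟨f c, fun i => f (a i), fun S => by simp only [h, map_add, map_sum]⟩

theorem IsModular.sub {x y : Finset E → A} (hx : IsModular x) (hy : IsModular y) :
    IsModular (x - y) := by
  rw [sub_eq_add_neg]
  exact hx.add (hy.map (-LinearMap.id (R := ℝ)))

/-- The deviation of `x` at `H` from the chord that interpolates `x` between `F` and `G` linearly
in the cardinality. For a strictly concave function of the cardinality it is positive strictly
between `F` and `G`. -/
noncomputable def chordGap (F G : Finset E) (x : Finset E → A) (H : Finset E) : A :=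
  x H - x F - (((H.card : ℝ) - F.card) / ((G.card : ℝ) - F.card)) • (x G - x F)

variable {F G : Finset E}

@[simp]
theorem chordGap_left (x : Finset E → A) : chordGap F G x F = 0 := by
  simp [chordGap]

theorem chordGap_right (hFG : F ⊂ G) (x : Finset E → A) : chordGap F G x G = 0 := by
  have h : ((G.card : ℝ) - F.card) ≠ 0 :=
    sub_ne_zero.2 (by exact_mod_cast (Finset.card_lt_card hFG).ne')
  simp [chordGap, div_self h]

theorem chordGap_of_eq_zero {x : Finset E → A} (hF : x F = 0) (hG : x G = 0) (H : Finset E) :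
    chordGap F G x H = x H := by
  simp [chordGap, hF, hG]

theorem map_chordGap (f : A →ₗ[ℝ] A') (x : Finset E → A) (H : Finset E) :
    f (chordGap F G x H) = chordGap F G (fun S => f (x S)) H := by
  simp [chordGap]

theorem isModular_sub_chordGap (x : Finset E → A) : IsModular (x - chordGap F G x) := by
  refine ⟨x F - ((F.card : ℝ) / ((G.card : ℝ) - F.card)) • (x G - x F),
    fun _ => (((G.card : ℝ) - F.card)⁻¹) • (x G - x F), fun S => ?_⟩
  rw [Finset.sum_const, ← Nat.cast_smul_eq_nsmul ℝ, smul_smul, Pi.sub_apply, chordGap, sub_div,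
    sub_smul, ← div_eq_mul_inv]
  abel

theorem IsModular.chordGap {y : Finset E → A} (hy : IsModular y) :
    IsModular (chordGap F G y) := by
  simpa using hy.sub (isModular_sub_chordGap (F := F) (G := G) y)

end Modular

open MvPolynomial (pderiv mkDerivation)

section Derivations

variable {σ : Type*}

theorem mkDerivation_sub {A : Type*} [AddCommGroup A] [Module ℝ A] [Module (MvPolynomial σ ℝ) A]
    [IsScalarTower ℝ (MvPolynomial σ ℝ) A] (x y : σ → A) (g : MvPolynomial σ ℝ) :
    mkDerivation ℝ (x - y) g = mkDerivation ℝ x g - mkDerivation ℝ y g :=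
  congrArg (· g) ((MvPolynomial.mkDerivationEquiv ℝ).map_sub x y)

theorem mkDerivation_eq_sum_vars (x : σ → MvPolynomial σ ℝ) (g : MvPolynomial σ ℝ) :
    mkDerivation ℝ x g = ∑ s ∈ g.vars, x s * pderiv s g := by
  classical
  set D := ∑ s ∈ g.vars, x s • pderiv (R := ℝ) s
  have hD (f : MvPolynomial σ ℝ) : D f = ∑ s ∈ g.vars, x s * pderiv s f := by
    rw [← Derivation.coeFnAddMonoidHom_apply, map_sum, Finset.sum_apply]
    rfl
  rw [← hD]
  refine MvPolynomial.derivation_eq_of_forall_mem_vars fun s hs => ?_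
  simp only [hD, MvPolynomial.mkDerivation_X, MvPolynomial.pderiv_X, Pi.single_apply, mul_ite,
    mul_one, mul_zero, Finset.sum_ite_eq, if_pos hs]

theorem mkDerivation_eq_sum {T : Finset σ} {x : σ → MvPolynomial σ ℝ} {g : MvPolynomial σ ℝ}
    (hT : ∀ s ∉ T, x s * pderiv s g = 0) : mkDerivation ℝ x g = ∑ s ∈ T, x s * pderiv s g := by
  classical
  rw [mkDerivation_eq_sum_vars, Finset.sum_subset Finset.subset_union_left fun s _ hs => by
    rw [MvPolynomial.pderiv_eq_zero_of_notMem_vars hs, mul_zero]]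
  exact (Finset.sum_subset Finset.subset_union_right fun s _ => hT s).symm

theorem mkDerivation_X_of_isHomogeneous {g : MvPolynomial σ ℝ} {d : ℕ} (hg : g.IsHomogeneous d) :
    mkDerivation ℝ MvPolynomial.X g = (d : ℝ) • g := by
  have hmonomial (m : σ →₀ ℕ) (a : ℝ) : mkDerivation ℝ MvPolynomial.X (MvPolynomial.monomial m a) =
      m.degree • MvPolynomial.monomial m a := by
    have hX (s : σ) := MvPolynomial.X_mul_pderiv_monomial (i := s) (m := m) (r := a)
    rw [mkDerivation_eq_sum (T := m.support) fun s hs => by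
      rw [hX, Finsupp.notMem_support_iff.1 hs, zero_smul]]
    simp only [hX, ← Finset.sum_smul, Finsupp.degree_apply]
  rw [g.as_sum, map_sum, Finset.smul_sum]
  refine Finset.sum_congr rfl fun m hm => ?_
  have hdegree : m.degree = d := by
    rw [Finsupp.degree_eq_weight_one]
    exact hg (MvPolynomial.mem_support_iff.1 hm)
  rw [hmonomial, hdegree, Nat.cast_smul_eq_nsmul]

theorem derivation_comm {D₁ D₂ : Derivation ℝ (MvPolynomial σ ℝ) (MvPolynomial σ ℝ)}
    (h : ∀ s, D₁ (D₂ (MvPolynomial.X s)) = D₂ (D₁ (MvPolynomial.X s))) (g : MvPolynomial σ ℝ) :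
    D₁ (D₂ g) = D₂ (D₁ g) := by
  have hbracket : ⁅D₁, D₂⁆ = 0 := MvPolynomial.derivation_ext fun s => by
    rw [Derivation.commutator_apply, h, sub_self, Derivation.zero_apply]
  exact sub_eq_zero.1 (by rw [← Derivation.commutator_apply, hbracket, Derivation.zero_apply])

theorem pderiv_comm (s t : σ) (g : MvPolynomial σ ℝ) :
    pderiv s (pderiv t g) = pderiv t (pderiv s g) := by
  classical
  refine derivation_comm (fun u => ?_) g
  simp only [MvPolynomial.pderiv_X, Pi.single_apply]
  split_ifs <;> simp

theorem mkDerivation_pderiv (y : σ → MvPolynomial σ ℝ) (t : σ) (g : MvPolynomial σ ℝ) :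
    mkDerivation ℝ y (pderiv t g) =
      pderiv t (mkDerivation ℝ y g) - mkDerivation ℝ (fun s => pderiv t (y s)) g := by
  classical
  have hbracket : ⁅pderiv (R := ℝ) t, mkDerivation ℝ y⁆ = mkDerivation ℝ fun s => pderiv t (y s) :=
    MvPolynomial.derivation_ext fun s => by
      rw [Derivation.commutator_apply, MvPolynomial.mkDerivation_X, MvPolynomial.mkDerivation_X,
        MvPolynomial.pderiv_X, Pi.single_apply]
      split_ifs <;> simp
  rw [← hbracket, Derivation.commutator_apply, sub_sub_cancel]

/-- The derivative in the direction of the constant vector field `x`. -/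
noncomputable def directionalDeriv (x : σ → ℝ) :
    Derivation ℝ (MvPolynomial σ ℝ) (MvPolynomial σ ℝ) :=
  mkDerivation ℝ fun s => MvPolynomial.C (x s)

theorem directionalDeriv_X (x : σ → ℝ) (s : σ) :
    directionalDeriv x (MvPolynomial.X s) = MvPolynomial.C (x s) :=
  MvPolynomial.mkDerivation_X ..

theorem directionalDeriv_comm (x y : σ → ℝ) (g : MvPolynomial σ ℝ) :
    directionalDeriv x (directionalDeriv y g) = directionalDeriv y (directionalDeriv x g) :=
  derivation_comm (fun s => by simp only [directionalDeriv_X, MvPolynomial.derivation_C]) g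

theorem derivation_chordGap_X {E : Type*} {F G : Finset E}
    (D : Derivation ℝ (MvPolynomial (Finset E) ℝ) (MvPolynomial (Finset E) ℝ)) (H : Finset E) :
    D (chordGap F G MvPolynomial.X H) = chordGap F G (fun S => D (MvPolynomial.X S)) H :=
  map_chordGap D.toLinearMap MvPolynomial.X H

theorem pderiv_chordGap_X {E : Type*} [DecidableEq E] {F G S : Finset E} (hSF : S ≠ F)
    (hSG : S ≠ G) (H : Finset E) :
    pderiv S (chordGap F G MvPolynomial.X H : MvPolynomial (Finset E) ℝ) =
      if H = S then 1 else 0 := by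
  simp only [derivation_chordGap_X, MvPolynomial.pderiv_X]
  rw [chordGap_of_eq_zero (Pi.single_eq_of_ne hSF.symm _) (Pi.single_eq_of_ne hSG.symm _),
    Pi.single_apply]

theorem isHomogeneous_chordGap_X {E : Type*} (F G H : Finset E) :
    (chordGap F G MvPolynomial.X H : MvPolynomial (Finset E) ℝ).IsHomogeneous 1 := by
  have hX (S : Finset E) := MvPolynomial.isHomogeneous_X ℝ S
  rw [chordGap, MvPolynomial.smul_eq_C_mul]
  exact ((hX H).sub (hX F)).sub (((hX G).sub (hX F)).C_mul _)

end Derivations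

namespace RankFunction

variable {E : Type*} [DecidableEq E] (M : RankFunction E)

/-- Homogeneous polynomials of degree `d` in variables indexed by sets that involve only the flats
of the interval `[F, G]` and are invariant under translation by modular functions; the analogues
of the elements of degree `d` in the Chow ring of the interval. -/
structure IsIntervalPoly (F G : Finset E) (d : ℕ) (g : MvPolynomial (Finset E) ℝ) : Prop where
  isHomogeneous : g.IsHomogeneous d
  pderiv_eq_zero : ∀ S, ¬(M.IsFlat S ∧ F ⊆ S ∧ S ⊆ G) → pderiv S g = 0
  mkDerivation_eq_zero : ∀ y : Finset E → MvPolynomial (Finset E) ℝ,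
    IsModular y → mkDerivation ℝ y g = 0

variable {M} {F G H : Finset E} {d e : ℕ} {f g : MvPolynomial (Finset E) ℝ}

theorem isIntervalPoly_one (F G : Finset E) : M.IsIntervalPoly F G 0 1 where
  isHomogeneous := MvPolynomial.isHomogeneous_one _ _
  pderiv_eq_zero _ _ := MvPolynomial.pderiv_one
  mkDerivation_eq_zero _ _ := Derivation.map_one_eq_zero _

protected theorem IsIntervalPoly.mul (hf : M.IsIntervalPoly F H d f) (hg : M.IsIntervalPoly H G e g)
    (hFH : F ⊆ H) (hHG : H ⊆ G) : M.IsIntervalPoly F G (d + e) (f * g) where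
  isHomogeneous := hf.isHomogeneous.mul hg.isHomogeneous
  pderiv_eq_zero S hS := by
    rw [MvPolynomial.pderiv_mul, hf.pderiv_eq_zero S fun h => hS ⟨h.1, h.2.1, h.2.2.trans hHG⟩,
      hg.pderiv_eq_zero S fun h => hS ⟨h.1, hFH.trans h.2.1, h.2.2⟩, zero_mul, mul_zero, add_zero]
  mkDerivation_eq_zero y hy := by
    rw [Derivation.leibniz, hf.mkDerivation_eq_zero y hy, hg.mkDerivation_eq_zero y hy, smul_zero,
      smul_zero, add_zero]

theorem IsIntervalPoly.smul (hg : M.IsIntervalPoly F G d g) (a : ℝ) :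
    M.IsIntervalPoly F G d (a • g) where
  isHomogeneous := by
    rw [MvPolynomial.smul_eq_C_mul]
    exact hg.isHomogeneous.C_mul a
  pderiv_eq_zero S hS := by rw [Derivation.map_smul, hg.pderiv_eq_zero S hS, smul_zero]
  mkDerivation_eq_zero y hy := by
    rw [Derivation.map_smul, hg.mkDerivation_eq_zero y hy, smul_zero]

protected theorem IsIntervalPoly.pderiv (hg : M.IsIntervalPoly F G d g) (T : Finset E) :
    M.IsIntervalPoly F G (d - 1) (pderiv T g) where
  isHomogeneous := hg.isHomogeneous.pderiv
  pderiv_eq_zero S hS := by rw [pderiv_comm, hg.pderiv_eq_zero S hS, map_zero]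
  mkDerivation_eq_zero y hy := by
    have hy' : mkDerivation ℝ (fun S => pderiv T (y S)) g = 0 :=
      hg.mkDerivation_eq_zero _ (hy.map (pderiv T).toLinearMap)
    rw [mkDerivation_pderiv, hg.mkDerivation_eq_zero y hy, hy', map_zero, sub_zero]

theorem IsIntervalPoly.mkDerivation_eq_sum_between (hg : M.IsIntervalPoly F G d g)
    {x : Finset E → MvPolynomial (Finset E) ℝ} (hF : x F = 0) (hG : x G = 0) :
    mkDerivation ℝ x g = ∑ H ∈ M.between F G, x H * pderiv H g := by
  refine mkDerivation_eq_sum fun S hS => ?_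
  rcases eq_or_ne S F with rfl | hSF
  · rw [hF, zero_mul]
  rcases eq_or_ne S G with rfl | hSG
  · rw [hG, zero_mul]
  rw [hg.pderiv_eq_zero S fun h => hS (mem_between.2
    ⟨⟨h.2.1.ssubset_of_ne hSF.symm, h.2.2.ssubset_of_ne hSG⟩, h.1⟩), mul_zero]

theorem IsIntervalPoly.mkDerivation_eq_sum_sub (hg : M.IsIntervalPoly F G d g)
    {x y : Finset E → MvPolynomial (Finset E) ℝ} (hy : IsModular y) (hF : x F = y F)
    (hG : x G = y G) :
    mkDerivation ℝ x g = ∑ H ∈ M.between F G, (x H - y H) * pderiv H g := by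
  have h := hg.mkDerivation_eq_sum_between (x := x - y) (by simp [hF]) (by simp [hG])
  rwa [mkDerivation_sub, hg.mkDerivation_eq_zero y hy, sub_zero] at h

theorem IsIntervalPoly.mkDerivation_eq_sum_chordGap (hg : M.IsIntervalPoly F G d g) (hFG : F ⊂ G)
    (x : Finset E → MvPolynomial (Finset E) ℝ) :
    mkDerivation ℝ x g = ∑ H ∈ M.between F G, chordGap F G x H * pderiv H g := by
  rw [hg.mkDerivation_eq_sum_sub (isModular_sub_chordGap (F := F) (G := G) x)]
  · simp only [Pi.sub_apply, sub_sub_cancel]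
  · simp
  · simp [chordGap_right hFG]

theorem IsIntervalPoly.smul_eq_sum (hg : M.IsIntervalPoly F G d g) (hFG : F ⊂ G) :
    (d : ℝ) • g =
      ∑ H ∈ M.between F G, chordGap F G MvPolynomial.X H * pderiv H g := by
  rw [← mkDerivation_X_of_isHomogeneous hg.isHomogeneous, hg.mkDerivation_eq_sum_chordGap hFG]

end RankFunction

/-! ### Volume polynomials -/

namespace RankFunction

variable {E : Type*} [DecidableEq E] {M : RankFunction E} {F G H : Finset E} {e : ℕ}

variable (M) in
/-- The volume polynomial of the interval `[F, G]` of the lattice of flats, defined recursively by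
Euler's identity from its derivatives `volume F H * volume H G`. It plays the role of the degree
of the top power of the divisor `∑ H, x_H * [H]` in the Chow ring of the interval. -/
noncomputable def volume (F G : Finset E) : MvPolynomial (Finset E) ℝ :=
  if M.rk G ≤ M.rk F + 1 then 1 else
    ((M.rk G - M.rk F - 1 : ℕ) : ℝ)⁻¹ • ∑ H ∈ (M.between F G).attach,
      chordGap F G MvPolynomial.X H.1 * (volume F H.1 * volume H.1 G)
termination_by G.card - F.card
decreasing_by
  all_goals
    have := Finset.card_lt_card (left_ssubset_of_mem_between H.2)
    have := Finset.card_lt_card (ssubset_right_of_mem_between H.2)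
    omega

theorem volume_eq_one (h : M.rk G ≤ M.rk F + 1) : M.volume F G = 1 := by
  rw [volume, if_pos h]

theorem smul_volume {d : ℕ} (hd : M.rk G = M.rk F + d + 2) :
    ((d + 1 : ℕ) : ℝ) • M.volume F G = ∑ H ∈ M.between F G,
      chordGap F G MvPolynomial.X H * (M.volume F H * M.volume H G) := by
  rw [volume, if_neg (by omega), show M.rk G - M.rk F - 1 = d + 1 by omega, smul_smul,
    mul_inv_cancel₀ (by positivity), one_smul, Finset.sum_attach (M.between F G) fun H =>
      chordGap F G MvPolynomial.X H * (M.volume F H * M.volume H G)]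

section SymmetricFamily

variable {q : Finset E → MvPolynomial (Finset E) ℝ}
  (hq : ∀ H ∈ M.between F G, M.IsIntervalPoly F G e (q H))
include hq

theorem isIntervalPoly_sum_chordGap_mul (hF : M.IsFlat F) (hG : M.IsFlat G) (hFG : F ⊂ G)
    (hbal : ∀ c : Finset E → MvPolynomial (Finset E) ℝ, IsModular c → c F = 0 → c G = 0 →
      ∑ H ∈ M.between F G, c H * q H = 0) :
    M.IsIntervalPoly F G (e + 1) (∑ H ∈ M.between F G, chordGap F G MvPolynomial.X H * q H) where
  isHomogeneous := MvPolynomial.IsHomogeneous.sum _ _ _ fun H hH => by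
    rw [add_comm]
    exact (isHomogeneous_chordGap_X F G H).mul (hq H hH).isHomogeneous
  pderiv_eq_zero S hS := by
    rw [map_sum]
    refine Finset.sum_eq_zero fun H hH => ?_
    obtain ⟨⟨hFH, hHG⟩, hH'⟩ := mem_between.1 hH
    rw [MvPolynomial.pderiv_mul, (hq H hH).pderiv_eq_zero S hS, pderiv_chordGap_X, if_neg,
      zero_mul, mul_zero, add_zero]
    · rintro rfl; exact hS ⟨hH', hFH.subset, hHG.subset⟩
    · rintro rfl; exact hS ⟨hF, subset_rfl, hFG.subset⟩
    · rintro rfl; exact hS ⟨hG, hFG.subset, subset_rfl⟩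
  mkDerivation_eq_zero y hy := by
    rw [map_sum, ← hbal _ hy.chordGap (chordGap_left y) (chordGap_right hFG y)]
    refine Finset.sum_congr rfl fun H hH => ?_
    rw [Derivation.leibniz, (hq H hH).mkDerivation_eq_zero y hy, derivation_chordGap_X, smul_zero,
      zero_add, smul_eq_mul, mul_comm]
    simp only [MvPolynomial.mkDerivation_X]

variable (hsymm : ∀ H ∈ M.between F G, ∀ K ∈ M.between F G, pderiv K (q H) = pderiv H (q K))
include hsymm

theorem pderiv_sum_chordGap_mul (hFG : F ⊂ G) {K : Finset E} (hK : K ∈ M.between F G) :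
    pderiv K (∑ H ∈ M.between F G, chordGap F G MvPolynomial.X H * q H) =
      ((e + 1 : ℕ) : ℝ) • q K := by
  have hgap : ∑ H ∈ M.between F G, pderiv K (chordGap F G MvPolynomial.X H) * q H = q K := by
    simp only [pderiv_chordGap_X (left_ssubset_of_mem_between hK).ne'
      (ssubset_right_of_mem_between hK).ne, ite_mul, one_mul, zero_mul, Finset.sum_ite_eq',
      if_pos hK]
  have hswap : ∑ H ∈ M.between F G, chordGap F G MvPolynomial.X H * pderiv K (q H) =
      (e : ℝ) • q K := by
    rw [(hq K hK).smul_eq_sum hFG]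
    exact Finset.sum_congr rfl fun H hH => by rw [hsymm H hH K hK]
  simp only [map_sum, MvPolynomial.pderiv_mul, Finset.sum_add_distrib, hgap, hswap]
  rw [Nat.cast_add_one, add_smul, one_smul, add_comm]

theorem sum_isModular_mul_eq_zero (hFG : F ⊂ G) (he : e ≠ 0)
    {c : Finset E → MvPolynomial (Finset E) ℝ} (hc : IsModular c) (hcF : c F = 0) (hcG : c G = 0) :
    ∑ H ∈ M.between F G, c H * q H = 0 := by
  have hinner (K : Finset E) (hK : K ∈ M.between F G) :
      ∑ H ∈ M.between F G, c H * pderiv H (q K) = 0 := by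
    rw [← (hq K hK).mkDerivation_eq_sum_between hcF hcG, (hq K hK).mkDerivation_eq_zero c hc]
  have hscaled : (e : ℝ) • ∑ H ∈ M.between F G, c H * q H = 0 := by
    calc (e : ℝ) • ∑ H ∈ M.between F G, c H * q H
        = ∑ H ∈ M.between F G, ∑ K ∈ M.between F G,
            chordGap F G MvPolynomial.X K * (c H * pderiv H (q K)) := by
          rw [Finset.smul_sum]
          refine Finset.sum_congr rfl fun H hH => ?_
          rw [← mul_smul_comm, (hq H hH).smul_eq_sum hFG, Finset.mul_sum]
          exact Finset.sum_congr rfl fun K hK => by rw [hsymm H hH K hK]; ring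
      _ = ∑ K ∈ M.between F G, chordGap F G MvPolynomial.X K *
            ∑ H ∈ M.between F G, c H * pderiv H (q K) := by
          rw [Finset.sum_comm]; simp only [Finset.mul_sum]
      _ = 0 := Finset.sum_eq_zero fun K hK => by rw [hinner K hK, mul_zero]
  exact (smul_eq_zero.1 hscaled).resolve_left (Nat.cast_ne_zero.2 he)

end SymmetricFamily

theorem sum_between_isModular_eq_zero [Finite E] {A : Type*} [AddCommGroup A]
    (hF : M.IsFlat F) (hG : M.IsFlat G) (hFG : F ⊂ G) (hr : M.rk G = M.rk F + 2) {c : Finset E → A}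
    (hc : IsModular c) (hcF : c F = 0) (hcG : c G = 0) : ∑ H ∈ M.between F G, c H = 0 := by
  obtain ⟨b, a, hca⟩ := hc
  have hval {S : Finset E} (hS : F ⊆ S) : c S = ∑ i ∈ S \ F, a i := by
    rw [← sub_zero (c S), ← hcF, hca, hca, ← Finset.sum_sdiff hS]
    abel
  have hrk (H : Finset E) (hH : H ∈ M.between F G) : M.rk H = M.rk F + 1 := by
    have := hF.rk_lt_of_mem_between hH
    have := rk_lt_of_mem_between hH
    omega
  have hcover (i : E) (hi : i ∈ G \ F) : ∑ H ∈ M.between F G with i ∈ H, a i = a i := by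
    obtain ⟨hiG, hiF⟩ := Finset.mem_sdiff.1 hi
    exact hF.sum_between_mem hiF hG hFG.subset hiG hr.ge fun H hH _ h => absurd (hrk H hH) h
  calc ∑ H ∈ M.between F G, c H = ∑ H ∈ M.between F G, ∑ i ∈ H \ F, a i :=
        Finset.sum_congr rfl fun H hH => hval (left_ssubset_of_mem_between hH).subset
    _ = ∑ i ∈ G \ F, ∑ H ∈ M.between F G with i ∈ H, a i :=
        Finset.sum_comm' fun H i => by
          simp only [Finset.mem_sdiff, Finset.mem_filter]
          constructor
          · rintro ⟨hH, hiH, hiF⟩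
            exact ⟨⟨hH, hiH⟩, (ssubset_right_of_mem_between hH).subset hiH, hiF⟩
          · rintro ⟨⟨hH, hiH⟩, _, hiF⟩
            exact ⟨hH, hiH, hiF⟩
    _ = c G := by rw [hval hFG.subset, Finset.sum_congr rfl hcover]
    _ = 0 := hcG

variable (M) in
/-- The assertion that `volume F G` is an interval polynomial with the derivatives expected of a
volume polynomial; both parts are needed in the induction on the interval. -/
structure VolumeSpec (F G : Finset E) : Prop where
  isIntervalPoly : M.IsIntervalPoly F G (M.rk G - M.rk F - 1) (M.volume F G)
  pderiv_eq : ∀ K ∈ M.between F G, pderiv K (M.volume F G) = M.volume F K * M.volume K G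

section VolumeSpec

variable {K : Finset E}

theorem pderiv_volume_mul_of_ssubset (hFH : M.VolumeSpec F H) (hHG : M.VolumeSpec H G)
    (hK : K ∈ M.between F G) (hHK : H ⊂ K) :
    pderiv K (M.volume F H * M.volume H G) = M.volume F H * M.volume H K * M.volume K G := by
  rw [MvPolynomial.pderiv_mul, hFH.isIntervalPoly.pderiv_eq_zero K fun h => hHK.2 h.2.2,
    hHG.pderiv_eq K (mem_between.2
      ⟨⟨hHK, ssubset_right_of_mem_between hK⟩, isFlat_of_mem_between hK⟩)]
  ring

theorem pderiv_volume_mul_of_ssuperset (hFK : M.VolumeSpec F K) (hKG : M.VolumeSpec K G)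
    (hH : H ∈ M.between F G) (hHK : H ⊂ K) :
    pderiv H (M.volume F K * M.volume K G) = M.volume F H * M.volume H K * M.volume K G := by
  rw [MvPolynomial.pderiv_mul, hKG.isIntervalPoly.pderiv_eq_zero H fun h => hHK.2 h.2.1,
    hFK.pderiv_eq H (mem_between.2
      ⟨⟨left_ssubset_of_mem_between hH, hHK⟩, isFlat_of_mem_between hH⟩)]
  ring

theorem pderiv_volume_mul_comm
    (ih : ∀ H ∈ M.between F G, M.VolumeSpec F H ∧ M.VolumeSpec H G)
    (hH : H ∈ M.between F G) (hK : K ∈ M.between F G) :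
    pderiv K (M.volume F H * M.volume H G) = pderiv H (M.volume F K * M.volume K G) := by
  obtain ⟨hFH, hHG⟩ := ih H hH
  obtain ⟨hFK, hKG⟩ := ih K hK
  rcases eq_or_ne H K with rfl | hne
  · rfl
  by_cases hHK : H ⊆ K
  · rw [pderiv_volume_mul_of_ssubset hFH hHG hK (hHK.ssubset_of_ne hne),
      pderiv_volume_mul_of_ssuperset hFK hKG hH (hHK.ssubset_of_ne hne)]
  by_cases hKH : K ⊆ H
  · rw [pderiv_volume_mul_of_ssuperset hFH hHG hK (hKH.ssubset_of_ne hne.symm),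
      pderiv_volume_mul_of_ssubset hFK hKG hH (hKH.ssubset_of_ne hne.symm)]
  rw [MvPolynomial.pderiv_mul, MvPolynomial.pderiv_mul,
    hFH.isIntervalPoly.pderiv_eq_zero K fun h => hKH h.2.2,
    hHG.isIntervalPoly.pderiv_eq_zero K fun h => hHK h.2.1,
    hFK.isIntervalPoly.pderiv_eq_zero H fun h => hHK h.2.2,
    hKG.isIntervalPoly.pderiv_eq_zero H fun h => hKH h.2.1]
  simp only [zero_mul, mul_zero, add_zero]

variable [Finite E]

theorem volumeSpec_of_forall_between {d : ℕ} (hF : M.IsFlat F) (hG : M.IsFlat G) (hFG : F ⊂ G)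
    (hd : M.rk G = M.rk F + d + 2)
    (ih : ∀ H ∈ M.between F G, M.VolumeSpec F H ∧ M.VolumeSpec H G) : M.VolumeSpec F G := by
  set q : Finset E → MvPolynomial (Finset E) ℝ := fun H => M.volume F H * M.volume H G
  have hq (H : Finset E) (hH : H ∈ M.between F G) : M.IsIntervalPoly F G d (q H) := by
    have h := (ih H hH).1.isIntervalPoly.mul (ih H hH).2.isIntervalPoly
      (left_ssubset_of_mem_between hH).subset (ssubset_right_of_mem_between hH).subset
    have := hF.rk_lt_of_mem_between hH
    have := rk_lt_of_mem_between hH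
    rwa [show M.rk H - M.rk F - 1 + (M.rk G - M.rk H - 1) = d by omega] at h
  have hsymm : ∀ H ∈ M.between F G, ∀ K ∈ M.between F G, pderiv K (q H) = pderiv H (q K) :=
    fun H hH K hK => pderiv_volume_mul_comm ih hH hK
  have hbal (c : Finset E → MvPolynomial (Finset E) ℝ) (hc : IsModular c) (hcF : c F = 0)
      (hcG : c G = 0) : ∑ H ∈ M.between F G, c H * q H = 0 := by
    rcases eq_or_ne d 0 with rfl | hd0
    · rw [← sum_between_isModular_eq_zero hF hG hFG hd hc hcF hcG]
      refine Finset.sum_congr rfl fun H hH => ?_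
      have := hF.rk_lt_of_mem_between hH
      have := rk_lt_of_mem_between hH
      simp only [q]
      rw [volume_eq_one (by omega), volume_eq_one (by omega), mul_one, mul_one]
    · exact sum_isModular_mul_eq_zero hq hsymm hFG hd0 hc hcF hcG
  have hd1 : ((d + 1 : ℕ) : ℝ) ≠ 0 := by positivity
  refine ⟨?_, fun K hK => ?_⟩
  · have h := isIntervalPoly_sum_chordGap_mul hq hF hG hFG hbal
    rw [← smul_volume hd] at h
    rw [show M.rk G - M.rk F - 1 = d + 1 by omega, ← inv_smul_smul₀ hd1 (M.volume F G)]
    exact h.smul _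
  · have h := pderiv_sum_chordGap_mul hq hsymm hFG hK
    rw [← smul_volume hd, Derivation.map_smul] at h
    exact smul_right_injective _ hd1 h

theorem volumeSpec (hF : M.IsFlat F) (hG : M.IsFlat G) (hFG : F ⊂ G) : M.VolumeSpec F G := by
  induction F, G using between_induction (M := M) with
  | step F G ih =>
    have hrk := hF.rk_lt hFG
    obtain hr | ⟨d, hd⟩ : M.rk G = M.rk F + 1 ∨ ∃ d, M.rk G = M.rk F + d + 2 :=
      (Nat.lt_or_ge (M.rk F + 1) (M.rk G)).elim
        (fun h => .inr ⟨M.rk G - M.rk F - 2, by omega⟩) fun h => .inl (by omega)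
    · refine ⟨?_, fun K hK => ?_⟩
      · rw [volume_eq_one hr.le, hr, Nat.add_sub_cancel_left]
        exact isIntervalPoly_one F G
      · rw [between_eq_empty hF hr.le] at hK
        exact absurd hK (Finset.notMem_empty K)
    · exact volumeSpec_of_forall_between hF hG hFG hd fun H hH =>
        have hHflat := isFlat_of_mem_between hH
        ⟨(ih H hH).1 hF hHflat (left_ssubset_of_mem_between hH),
          (ih H hH).2 hHflat hG (ssubset_right_of_mem_between hH)⟩

end VolumeSpec

variable [Finite E]

theorem isIntervalPoly_volume {d : ℕ} (hF : M.IsFlat F) (hG : M.IsFlat G)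
    (hd : M.rk G = M.rk F + d + 1) (hFG : F ⊂ G) : M.IsIntervalPoly F G d (M.volume F G) := by
  have h := (volumeSpec hF hG hFG).isIntervalPoly
  rwa [show M.rk G - M.rk F - 1 = d by omega] at h

theorem pderiv_volume (hF : M.IsFlat F) (hG : M.IsFlat G) (hFG : F ⊂ G) {K : Finset E}
    (hK : K ∈ M.between F G) : pderiv K (M.volume F G) = M.volume F K * M.volume K G :=
  (volumeSpec hF hG hFG).pderiv_eq K hK

end RankFunction

/-! ### Hessians and root-concavity -/

section Hessian

variable {σ : Type*} {t x : σ → ℝ} {g h : MvPolynomial σ ℝ} {a b d : ℕ}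

theorem directionalDeriv_add (x y : σ → ℝ) (g : MvPolynomial σ ℝ) :
    directionalDeriv (x + y) g = directionalDeriv x g + directionalDeriv y g := by
  have h : directionalDeriv (x + y) = directionalDeriv x + directionalDeriv y :=
    MvPolynomial.derivation_ext fun s => by
      simp only [Derivation.add_apply, directionalDeriv_X, Pi.add_apply, map_add]
  rw [h, Derivation.add_apply]

theorem directionalDeriv_smul (c : ℝ) (x : σ → ℝ) (g : MvPolynomial σ ℝ) :
    directionalDeriv (c • x) g = c • directionalDeriv x g := by
  have h : directionalDeriv (c • x) = c • directionalDeriv x :=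
    MvPolynomial.derivation_ext fun s => by
      simp only [Derivation.smul_apply, directionalDeriv_X, Pi.smul_apply, smul_eq_mul, map_mul,
        MvPolynomial.smul_eq_C_mul]
  rw [h, Derivation.smul_apply]

theorem eq_C_of_isHomogeneous_zero (hg : g.IsHomogeneous 0) : g = MvPolynomial.C (g.coeff 0) :=
  MvPolynomial.totalDegree_eq_zero_iff_eq_C.1
    ((MvPolynomial.totalDegree_zero_iff_isHomogeneous _).2 hg)

theorem directionalDeriv_eq_zero (hg : g.IsHomogeneous 0) (x : σ → ℝ) :
    directionalDeriv x g = 0 := by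
  rw [eq_C_of_isHomogeneous_zero hg, MvPolynomial.derivation_C]

/-- The Hessian of `g` at `t`, as a bilinear form. -/
noncomputable def hessian (t : σ → ℝ) (g : MvPolynomial σ ℝ) : LinearMap.BilinForm ℝ (σ → ℝ) :=
  LinearMap.mk₂ ℝ (fun x y => MvPolynomial.eval t (directionalDeriv x (directionalDeriv y g)))
    (fun x y z => by simp only [directionalDeriv_add, map_add])
    (fun c x y => by simp only [directionalDeriv_smul, MvPolynomial.smul_eval, smul_eq_mul])
    (fun x y z => by simp only [directionalDeriv_add, map_add])
    (fun c x y => by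
      simp only [directionalDeriv_smul, Derivation.map_smul, MvPolynomial.smul_eval, smul_eq_mul])

theorem hessian_apply (t x y : σ → ℝ) (g : MvPolynomial σ ℝ) :
    hessian t g x y = MvPolynomial.eval t (directionalDeriv x (directionalDeriv y g)) := rfl

theorem isSymm_hessian (t : σ → ℝ) (g : MvPolynomial σ ℝ) : (hessian t g).IsSymm :=
  ⟨fun x y => by simp only [hessian_apply, directionalDeriv_comm x y]⟩

theorem hessian_mul (t x : σ → ℝ) (g h : MvPolynomial σ ℝ) :
    hessian t (g * h) x x = hessian t g x x * MvPolynomial.eval t h +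
      2 * (MvPolynomial.eval t (directionalDeriv x g) *
        MvPolynomial.eval t (directionalDeriv x h)) +
      MvPolynomial.eval t g * hessian t h x x := by
  simp only [hessian_apply, Derivation.leibniz, map_add, smul_eq_mul, map_mul]
  ring

/-- Concavity of `g ^ (1 / d)` to second order at `t`, cleared of denominators. -/
def IsRootConcaveAt (t : σ → ℝ) (d : ℕ) (g : MvPolynomial σ ℝ) : Prop :=
  ∀ x, d * MvPolynomial.eval t g * hessian t g x x ≤
    (d - 1) * MvPolynomial.eval t (directionalDeriv x g) ^ 2

theorem root_concave_mul_le {a b g g₁ g₂ h h₁ h₂ : ℝ} (ha : 0 < a) (hb : 0 < b) (hg₀ : 0 < g)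
    (hh₀ : 0 < h) (hg : a * g * g₂ ≤ (a - 1) * g₁ ^ 2) (hh : b * h * h₂ ≤ (b - 1) * h₁ ^ 2) :
    (a + b) * (g * h) * (g₂ * h + 2 * (g₁ * h₁) + g * h₂) ≤
      (a + b - 1) * (g₁ * h + g * h₁) ^ 2 := by
  refine le_of_mul_le_mul_left ?_ (mul_pos ha hb)
  have hg' := mul_le_mul_of_nonneg_left hg (show 0 ≤ (a + b) * b * h ^ 2 by positivity)
  have hh' := mul_le_mul_of_nonneg_left hh (show 0 ≤ (a + b) * a * g ^ 2 by positivity)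
  have hsq := sq_nonneg (b * (g₁ * h) - a * (g * h₁))
  linarith [hg', hh', hsq]

theorem IsRootConcaveAt.C_mul (hg : IsRootConcaveAt t d g) (c : ℝ) :
    IsRootConcaveAt t d (MvPolynomial.C c * g) := fun x => by
  have hsq := mul_le_mul_of_nonneg_left (hg x) (sq_nonneg c)
  simp only [hessian_apply, MvPolynomial.C_mul', Derivation.map_smul, MvPolynomial.smul_eval]
    at hsq ⊢
  linarith

theorem IsRootConcaveAt.mul (hg : IsRootConcaveAt t a g) (hh : IsRootConcaveAt t b h)
    (hg_hom : g.IsHomogeneous a) (hh_hom : h.IsHomogeneous b) (hg_pos : 0 < MvPolynomial.eval t g)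
    (hh_pos : 0 < MvPolynomial.eval t h) : IsRootConcaveAt t (a + b) (g * h) := by
  rcases a.eq_zero_or_pos with rfl | ha
  · rw [eq_C_of_isHomogeneous_zero hg_hom, zero_add]
    exact hh.C_mul _
  rcases b.eq_zero_or_pos with rfl | hb
  · rw [eq_C_of_isHomogeneous_zero hh_hom, mul_comm, add_zero]
    exact hg.C_mul _
  intro x
  have hmul := root_concave_mul_le (Nat.cast_pos.2 ha) (Nat.cast_pos.2 hb) hg_pos hh_pos (hg x)
    (hh x)
  rw [hessian_mul, map_mul, Derivation.leibniz, map_add, smul_eq_mul, smul_eq_mul, map_mul,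
    map_mul, Nat.cast_add]
  linarith

theorem isHomogeneous_directionalDeriv (hg : g.IsHomogeneous d) (x : σ → ℝ) :
    (directionalDeriv x g).IsHomogeneous (d - 1) := by
  rw [directionalDeriv, mkDerivation_eq_sum_vars]
  exact MvPolynomial.IsHomogeneous.sum _ _ _ fun s _ => hg.pderiv.C_mul _

theorem eval_directionalDeriv_self (hg : g.IsHomogeneous d) (t : σ → ℝ) :
    MvPolynomial.eval t (directionalDeriv t g) = d * MvPolynomial.eval t g := by
  have h := congrArg (MvPolynomial.eval t) (mkDerivation_X_of_isHomogeneous hg)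
  rw [mkDerivation_eq_sum_vars, MvPolynomial.smul_eval] at h
  rw [directionalDeriv, mkDerivation_eq_sum_vars]
  simpa only [map_sum, map_mul, MvPolynomial.eval_X, MvPolynomial.eval_C] using h

theorem hessian_self_right (hg : g.IsHomogeneous (d + 1)) (t x : σ → ℝ) :
    hessian t g x t = d * MvPolynomial.eval t (directionalDeriv x g) := by
  rw [hessian_apply, directionalDeriv_comm,
    eval_directionalDeriv_self (isHomogeneous_directionalDeriv hg x), Nat.add_sub_cancel]

theorem hessian_self_self (hg : g.IsHomogeneous (d + 1)) (t : σ → ℝ) :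
    hessian t g t t = d * (d + 1) * MvPolynomial.eval t g := by
  rw [hessian_self_right hg, eval_directionalDeriv_self hg, Nat.cast_add_one, mul_assoc]

theorem hessian_self_self_pos (hg : g.IsHomogeneous (d + 2)) (hpos : 0 < MvPolynomial.eval t g) :
    0 < hessian t g t t := by
  rw [hessian_self_self hg]
  positivity

theorem isRootConcaveAt_of_degree_le_one (hg : g.IsHomogeneous d) (hd : d ≤ 1) (t : σ → ℝ) :
    IsRootConcaveAt t d g := fun x => by
  have hx := isHomogeneous_directionalDeriv hg x
  rw [Nat.sub_eq_zero_of_le hd] at hx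
  rw [hessian_apply, directionalDeriv_eq_zero hx, map_zero, mul_zero]
  interval_cases d
  · rw [directionalDeriv_eq_zero hg, map_zero, zero_pow two_ne_zero, mul_zero]
  · rw [Nat.cast_one, sub_self, zero_mul]

theorem isRootConcaveAt_of_hessian_mul_le (hg : g.IsHomogeneous (d + 2))
    (h : ∀ x, hessian t g x x * hessian t g t t ≤ hessian t g x t ^ 2) :
    IsRootConcaveAt t (d + 2) g := fun x => by
  have hx := h x
  rw [hessian_self_self hg, hessian_self_right hg] at hx
  push_cast at hx ⊢
  refine le_of_mul_le_mul_left ?_ (show (0 : ℝ) < d + 1 by positivity)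
  linarith

end Hessian

/-- A set function lying strictly above its chords, linear in the cardinality, between nested
sets: a point at which all volume polynomials are positive. -/
def IsAboveChords {E : Type*} (t : Finset E → ℝ) : Prop :=
  ∀ ⦃F H G⦄, F ⊂ H → H ⊂ G → 0 < chordGap F G t H

theorem C_chordGap {σ E : Type*} (F G : Finset E) (x : Finset E → ℝ) (H : Finset E) :
    (MvPolynomial.C (chordGap F G x H) : MvPolynomial σ ℝ) =
      chordGap F G (fun S => MvPolynomial.C (x S)) H := by
  simp only [chordGap, MvPolynomial.smul_eq_C_mul, smul_eq_mul, map_sub, map_mul]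

theorem eval_chordGap_X {E : Type*} (t : Finset E → ℝ) (F G H : Finset E) :
    MvPolynomial.eval t (chordGap F G MvPolynomial.X H) = chordGap F G t H := by
  simp only [chordGap, map_sub, MvPolynomial.smul_eval, MvPolynomial.eval_X, smul_eq_mul]

namespace RankFunction

variable {E : Type*} [DecidableEq E] {M : RankFunction E} {F G : Finset E} {d : ℕ}
  {t : Finset E → ℝ} {g : MvPolynomial (Finset E) ℝ}

theorem IsIntervalPoly.directionalDeriv_eq_sum (hg : M.IsIntervalPoly F G d g) (hFG : F ⊂ G)
    (x : Finset E → ℝ) :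
    directionalDeriv x g =
      ∑ H ∈ M.between F G, MvPolynomial.C (chordGap F G x H) * pderiv H g := by
  rw [directionalDeriv, hg.mkDerivation_eq_sum_chordGap hFG]
  simp only [C_chordGap]

theorem IsIntervalPoly.eval_directionalDeriv (hg : M.IsIntervalPoly F G d g) (hFG : F ⊂ G)
    (t x : Finset E → ℝ) :
    MvPolynomial.eval t (directionalDeriv x g) =
      ∑ H ∈ M.between F G, chordGap F G x H * MvPolynomial.eval t (pderiv H g) := by
  rw [hg.directionalDeriv_eq_sum hFG]
  simp only [map_sum, map_mul, MvPolynomial.eval_C]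

theorem IsIntervalPoly.hessian_eq_sum (hg : M.IsIntervalPoly F G d g) (hFG : F ⊂ G)
    (t x y : Finset E → ℝ) :
    hessian t g x y = ∑ H ∈ M.between F G,
      chordGap F G y H * MvPolynomial.eval t (directionalDeriv x (pderiv H g)) := by
  rw [hessian_apply, hg.directionalDeriv_eq_sum hFG]
  simp only [map_sum, Derivation.leibniz, MvPolynomial.derivation_C, add_zero, map_mul,
    smul_eq_mul, mul_zero, MvPolynomial.eval_C]

theorem IsIntervalPoly.directionalDeriv_chordGap (hg : M.IsIntervalPoly F G d g) (hFG : F ⊂ G)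
    (x : Finset E → ℝ) : directionalDeriv (chordGap F G x) g = directionalDeriv x g := by
  rw [hg.directionalDeriv_eq_sum hFG, hg.directionalDeriv_eq_sum hFG]
  simp only [chordGap_of_eq_zero (chordGap_left x) (chordGap_right hFG x)]

theorem IsIntervalPoly.hessian_chordGap (hg : M.IsIntervalPoly F G d g) (hFG : F ⊂ G)
    (t x : Finset E → ℝ) :
    hessian t g (chordGap F G x) (chordGap F G x) = hessian t g x x := by
  have h (y : Finset E → ℝ) :
      hessian t g y (chordGap F G x) = hessian t g y x := by
    rw [hessian_apply, hessian_apply, hg.directionalDeriv_chordGap hFG]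
  rw [h, (isSymm_hessian t g).eq, h]

theorem eval_volume_pos [Finite E] (ht : IsAboveChords t) (hF : M.IsFlat F) (hG : M.IsFlat G)
    (hFG : F ⊂ G) : 0 < MvPolynomial.eval t (M.volume F G) := by
  induction F, G using between_induction (M := M) with
  | step F G ih =>
    rcases le_or_gt (M.rk G) (M.rk F + 1) with hr | hr
    · rw [volume_eq_one hr, map_one]
      exact one_pos
    obtain ⟨d, hd⟩ := Nat.exists_eq_add_of_le hr
    have hsum := congrArg (MvPolynomial.eval t)
      (smul_volume (M := M) (F := F) (G := G) (d := d) (by omega))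
    simp only [map_sum, map_mul, MvPolynomial.smul_eval, eval_chordGap_X] at hsum
    refine (mul_pos_iff_of_pos_left (show (0 : ℝ) < (d + 1 : ℕ) by positivity)).1 ?_
    rw [hsum]
    obtain ⟨i, hiG, hiF⟩ := Finset.exists_of_ssubset hFG
    refine Finset.sum_pos (fun H hH => ?_)
      ⟨_, hF.closure_insert_mem_between hiF hG hFG.subset hiG hr⟩
    have hHflat := isFlat_of_mem_between hH
    have hFH := left_ssubset_of_mem_between hH
    have hHG := ssubset_right_of_mem_between hH
    exact mul_pos (ht hFH hHG) (mul_pos ((ih H hH).1 hF hHflat hFH) ((ih H hH).2 hHflat hG hHG))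

end RankFunction

/-! ### Intervals of rank three -/

/-- `chordGap` as a linear functional of the set function. -/
noncomputable def gapFunctional {E : Type*} (F G H : Finset E) : (Finset E → ℝ) →ₗ[ℝ] ℝ where
  toFun x := chordGap F G x H
  map_add' x y := by simp only [chordGap, Pi.add_apply, smul_eq_mul]; ring
  map_smul' a x := by simp only [chordGap, Pi.smul_apply, smul_eq_mul, RingHom.id_apply]; ring

theorem gapFunctional_apply {E : Type*} (F G H : Finset E) (x : Finset E → ℝ) :
    gapFunctional F G H x = chordGap F G x H := rfl

section Incidence

variable {ι κ : Type*} {P : Finset ι} {L : Finset κ} {I : ι → κ → Prop}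
  [∀ a l, Decidable (I a l)]

theorem sum_sq_sum_incident (h : ∀ a ∈ P, ∀ b ∈ P, a ≠ b → {l ∈ L | I a l ∧ I b l}.card = 1)
    (x : ι → ℝ) :
    ∑ l ∈ L, (∑ a ∈ P with I a l, x a) ^ 2 =
      (∑ a ∈ P, x a) ^ 2 + ∑ a ∈ P, x a ^ 2 * (({l ∈ L | I a l}.card : ℝ) - 1) := by
  classical
  have hpair (a : ι) (ha : a ∈ P) (b : ι) (hb : b ∈ P) :
      x a * x b * ({l ∈ L | I a l ∧ I b l}.card : ℝ) =
        x a * x b + if a = b then x a ^ 2 * (({l ∈ L | I a l}.card : ℝ) - 1) else 0 := by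
    split_ifs with hab
    · subst hab
      simp only [and_self]
      ring
    · rw [h a ha b hb hab, Nat.cast_one, mul_one, add_zero]
  calc ∑ l ∈ L, (∑ a ∈ P with I a l, x a) ^ 2
      = ∑ l ∈ L, ∑ a ∈ P, ∑ b ∈ P, if I a l ∧ I b l then x a * x b else 0 := by
        refine Finset.sum_congr rfl fun l _ => ?_
        rw [sq, Finset.sum_filter, Finset.sum_mul_sum]
        refine Finset.sum_congr rfl fun a _ => Finset.sum_congr rfl fun b _ => ?_
        rw [ite_and, ite_mul, mul_ite, mul_zero, zero_mul]
    _ = ∑ a ∈ P, ∑ b ∈ P, x a * x b * ({l ∈ L | I a l ∧ I b l}.card : ℝ) := by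
        rw [Finset.sum_comm]
        refine Finset.sum_congr rfl fun a _ => ?_
        rw [Finset.sum_comm]
        refine Finset.sum_congr rfl fun b _ => ?_
        rw [← Finset.sum_filter, Finset.sum_const, nsmul_eq_mul, mul_comm]
    _ = ∑ a ∈ P, (∑ b ∈ P, x a * x b + x a ^ 2 * (({l ∈ L | I a l}.card : ℝ) - 1)) := by
        refine Finset.sum_congr rfl fun a ha => ?_
        rw [Finset.sum_congr rfl (hpair a ha), Finset.sum_add_distrib, Finset.sum_ite_eq, if_pos ha]
    _ = (∑ a ∈ P, x a) ^ 2 + ∑ a ∈ P, x a ^ 2 * (({l ∈ L | I a l}.card : ℝ) - 1) := by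
        rw [Finset.sum_add_distrib, sq, Finset.sum_mul_sum]

/-- Completing the square in the Hessian of the volume polynomial of a linear space, that is, of
points and lines such that two distinct points lie on exactly one common line. -/
theorem linear_space_form_eq (h : ∀ a ∈ P, ∀ b ∈ P, a ≠ b → {l ∈ L | I a l ∧ I b l}.card = 1)
    (x : ι → ℝ) (y : κ → ℝ) :
    ∑ a ∈ P, x a * (∑ l ∈ L with I a l, (y l - x a) + x a) +
        ∑ l ∈ L, y l * (∑ a ∈ P with I a l, x a - y l) =
      (∑ a ∈ P, x a) ^ 2 - ∑ l ∈ L, (y l - ∑ a ∈ P with I a l, x a) ^ 2 := by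
  have hcross : ∑ a ∈ P, x a * ∑ l ∈ L with I a l, y l =
      ∑ l ∈ L, y l * ∑ a ∈ P with I a l, x a := by
    simp only [Finset.mul_sum, Finset.sum_filter, mul_ite, mul_zero]
    rw [Finset.sum_comm]
    simp only [mul_comm]
  have hpoint : ∑ a ∈ P, x a * (∑ l ∈ L with I a l, (y l - x a) + x a) =
      ∑ a ∈ P, x a * ∑ l ∈ L with I a l, y l -
        ∑ a ∈ P, x a ^ 2 * (({l ∈ L | I a l}.card : ℝ) - 1) := by
    rw [← Finset.sum_sub_distrib]
    refine Finset.sum_congr rfl fun a _ => ?_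
    rw [Finset.sum_sub_distrib, Finset.sum_const, nsmul_eq_mul]
    ring
  have hline : ∑ l ∈ L, y l * (∑ a ∈ P with I a l, x a - y l) =
      ∑ l ∈ L, y l * ∑ a ∈ P with I a l, x a - ∑ l ∈ L, y l ^ 2 := by
    rw [← Finset.sum_sub_distrib]
    exact Finset.sum_congr rfl fun l _ => by ring
  have hsq : ∑ l ∈ L, (y l - ∑ a ∈ P with I a l, x a) ^ 2 =
      ∑ l ∈ L, y l ^ 2 - 2 * ∑ l ∈ L, y l * ∑ a ∈ P with I a l, x a +
        ∑ l ∈ L, (∑ a ∈ P with I a l, x a) ^ 2 := by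
    rw [Finset.mul_sum, ← Finset.sum_sub_distrib, ← Finset.sum_add_distrib]
    exact Finset.sum_congr rfl fun l _ => by ring
  rw [hpoint, hline, hsq, hcross, sum_sq_sum_incident h]
  ring

end Incidence

namespace RankFunction

variable {E : Type*} [DecidableEq E] {M : RankFunction E} {F G H K : Finset E}

theorem eval_directionalDeriv_volume_of_rank_two [Finite E] (hF : M.IsFlat F) (hG : M.IsFlat G)
    (hFG : F ⊂ G) (hr : M.rk G = M.rk F + 2) (t x : Finset E → ℝ) :
    MvPolynomial.eval t (directionalDeriv x (M.volume F G)) =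
      ∑ H ∈ M.between F G, (x H - x F) - (x G - x F) := by
  obtain ⟨i, hiG, hiF⟩ := Finset.exists_of_ssubset hFG
  set y : Finset E → MvPolynomial (Finset E) ℝ :=
    fun S => MvPolynomial.C (x F) + if i ∈ S then MvPolynomial.C (x G - x F) else 0
  have hy : IsModular y := (isModular_const _).add (isModular_ite_mem i _)
  have hrk (H : Finset E) (hH : H ∈ M.between F G) : M.rk H = M.rk F + 1 := by
    have := hF.rk_lt_of_mem_between hH
    have := rk_lt_of_mem_between hH
    omega
  have hsum : ∑ H ∈ M.between F G with i ∈ H, (x G - x F) = x G - x F :=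
    hF.sum_between_mem hiF hG hFG.subset hiG hr.ge fun H hH _ h => absurd (hrk H hH) h
  rw [directionalDeriv, (isIntervalPoly_volume hF hG hr hFG).mkDerivation_eq_sum_sub hy
    (by simp [y, hiF]) (by simp [y, hiG]), map_sum, ← hsum, Finset.sum_filter,
    ← Finset.sum_sub_distrib]
  refine Finset.sum_congr rfl fun H hH => ?_
  rw [pderiv_volume hF hG hFG hH, volume_eq_one (hrk H hH).le,
    volume_eq_one (by have := hrk H hH; omega)]
  split_ifs with hiH <;> simp [y, hiH]

variable (M) in
/-- The flats strictly between `F` and `G` of rank `k` relative to `F`. -/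
noncomputable def betweenOfRank (k : ℕ) (F G : Finset E) : Finset (Finset E) :=
  {H ∈ M.between F G | M.rk H = M.rk F + k}

theorem mem_betweenOfRank {k : ℕ} :
    H ∈ M.betweenOfRank k F G ↔ H ∈ M.between F G ∧ M.rk H = M.rk F + k :=
  Finset.mem_filter

section RankThree

variable (hF : M.IsFlat F) (hG : M.IsFlat G) (hr : M.rk G = M.rk F + 3)

include hF hr in
theorem sum_between_of_rank_three {A : Type*} [AddCommMonoid A] (f : Finset E → A) :
    ∑ H ∈ M.between F G, f H =
      ∑ H ∈ M.betweenOfRank 1 F G, f H + ∑ H ∈ M.betweenOfRank 2 F G, f H := by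
  have hrk (H : Finset E) (hH : H ∈ M.between F G) : M.rk H = M.rk F + 2 ↔ M.rk H ≠ M.rk F + 1 := by
    have := hF.rk_lt_of_mem_between hH
    have := rk_lt_of_mem_between hH
    omega
  rw [betweenOfRank, betweenOfRank, Finset.filter_congr hrk, Finset.sum_filter_add_sum_filter_not]

include hr in
theorem between_point_eq (hH : H ∈ M.betweenOfRank 1 F G) :
    M.between H G = {L ∈ M.betweenOfRank 2 F G | H ⊂ L} := by
  obtain ⟨hH, hrH⟩ := mem_betweenOfRank.1 hH
  ext L
  rw [Finset.mem_filter, mem_betweenOfRank]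
  constructor
  · intro hL
    have := (isFlat_of_mem_between hH).rk_lt_of_mem_between hL
    have := rk_lt_of_mem_between hL
    exact ⟨⟨between_trans_right hH hL, by omega⟩, left_ssubset_of_mem_between hL⟩
  · rintro ⟨⟨hL, -⟩, hHL⟩
    exact mem_between.2 ⟨⟨hHL, ssubset_right_of_mem_between hL⟩, isFlat_of_mem_between hL⟩

include hF in
theorem between_line_eq (hK : K ∈ M.betweenOfRank 2 F G) :
    M.between F K = {H ∈ M.betweenOfRank 1 F G | H ⊂ K} := by
  obtain ⟨hK, hrK⟩ := mem_betweenOfRank.1 hK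
  ext H
  rw [Finset.mem_filter, mem_betweenOfRank]
  constructor
  · intro hH
    have := hF.rk_lt_of_mem_between hH
    have := rk_lt_of_mem_between hH
    exact ⟨⟨between_trans_left hK hH, by omega⟩, ssubset_right_of_mem_between hH⟩
  · rintro ⟨⟨hH, -⟩, hHK⟩
    exact mem_between.2 ⟨⟨left_ssubset_of_mem_between hH, hHK⟩, isFlat_of_mem_between hH⟩

variable [Finite E]

include hF hG hr in
theorem card_lines_through_two_points (hH : H ∈ M.betweenOfRank 1 F G)
    (hK : K ∈ M.betweenOfRank 1 F G) (hHK : H ≠ K) :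
    {L ∈ M.betweenOfRank 2 F G | H ⊂ L ∧ K ⊂ L}.card = 1 := by
  rw [← Finset.filter_filter, ← between_point_eq hr hH]
  obtain ⟨hH, hrH⟩ := mem_betweenOfRank.1 hH
  obtain ⟨hK, hrK⟩ := mem_betweenOfRank.1 hK
  have hHflat := isFlat_of_mem_between hH
  have hKflat := isFlat_of_mem_between hK
  obtain ⟨i, hiK, hiH⟩ : ∃ i ∈ K, i ∉ H := Finset.not_subset.1 fun hKH => by
    have := hKflat.rk_lt (hKH.ssubset_of_ne hHK.symm)
    omega
  have hiF : i ∉ F := fun h => hiH ((left_ssubset_of_mem_between hH).subset h)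
  have hKcl := hF.eq_closure_insert hiF hKflat (left_ssubset_of_mem_between hK).subset hiK hrK
  have hmem (L : Finset E) (hL : L ∈ M.between H G) : K ⊂ L ↔ i ∈ L := by
    refine ⟨fun h => h.subset hiK, fun hiL => ?_⟩
    have hFL := ((left_ssubset_of_mem_between hH).trans (left_ssubset_of_mem_between hL)).subset
    have hKL : K ⊆ L := hKcl ▸
      (isFlat_of_mem_between hL).closure_subset (Finset.insert_subset hiL hFL)
    refine hKL.ssubset_of_ne fun h => ?_
    have := hHflat.rk_lt_of_mem_between hL
    subst h
    omega
  rw [Finset.filter_congr hmem, Finset.card_eq_sum_ones]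
  refine hHflat.sum_between_mem hiH hG (ssubset_right_of_mem_between hH).subset
    ((ssubset_right_of_mem_between hK).subset hiK) (by omega) fun L hL _ hrL => ?_
  have := hHflat.rk_lt_of_mem_between hL
  have := rk_lt_of_mem_between hL
  omega

include hF hG hr in
theorem hessian_volume_of_rank_three (hFG : F ⊂ G) (t : Finset E → ℝ) {x : Finset E → ℝ}
    (hxF : x F = 0) (hxG : x G = 0) :
    hessian t (M.volume F G) x x = (∑ H ∈ M.betweenOfRank 1 F G, x H) ^ 2 -
      ∑ L ∈ M.betweenOfRank 2 F G, (x L - ∑ H ∈ M.betweenOfRank 1 F G with H ⊂ L, x H) ^ 2 := by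
  rw [(isIntervalPoly_volume hF hG hr hFG).hessian_eq_sum hFG, sum_between_of_rank_three hF hr,
    ← linear_space_form_eq fun H hH K hK => card_lines_through_two_points hF hG hr hH hK]
  congr 1
  · refine Finset.sum_congr rfl fun H hH => ?_
    rw [← between_point_eq hr hH, chordGap_of_eq_zero hxF hxG]
    obtain ⟨hH, hrH⟩ := mem_betweenOfRank.1 hH
    rw [pderiv_volume hF hG hFG hH, volume_eq_one hrH.le, one_mul,
      eval_directionalDeriv_volume_of_rank_two (isFlat_of_mem_between hH) hG
        (ssubset_right_of_mem_between hH) (by omega), hxG, zero_sub, sub_neg_eq_add]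
  · refine Finset.sum_congr rfl fun L hL => ?_
    rw [← between_line_eq hF hL, chordGap_of_eq_zero hxF hxG]
    obtain ⟨hL, hrL⟩ := mem_betweenOfRank.1 hL
    rw [pderiv_volume hF hG hFG hL, volume_eq_one (by omega : M.rk G ≤ M.rk L + 1), mul_one,
      eval_directionalDeriv_volume_of_rank_two hF (isFlat_of_mem_between hL)
        (left_ssubset_of_mem_between hL) hrL, hxF, sub_zero]
    simp only [sub_zero]

include hF hG hr in
theorem isRootConcaveAt_volume_of_rank_three (hFG : F ⊂ G) {t : Finset E → ℝ}
    (hpos : 0 < MvPolynomial.eval t (M.volume F G)) :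
    IsRootConcaveAt t 2 (M.volume F G) := by
  have hg : M.IsIntervalPoly F G 2 (M.volume F G) := isIntervalPoly_volume hF hG hr hFG
  let gapSum : (Finset E → ℝ) →ₗ[ℝ] ℝ := ∑ H ∈ M.betweenOfRank 1 F G, gapFunctional F G H
  refine isRootConcaveAt_of_hessian_mul_le (d := 0) hg.isHomogeneous fun x =>
    mul_le_sq_of_nonpos_on_ker _ (isSymm_hessian t _) gapSum (fun y hy => ?_)
      (hessian_self_self_pos hg.isHomogeneous hpos) x
  have hy : ∑ H ∈ M.betweenOfRank 1 F G, chordGap F G y H = 0 := by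
    simpa only [gapSum, LinearMap.sum_apply, gapFunctional_apply] using hy
  rw [← hg.hessian_chordGap hFG, hessian_volume_of_rank_three hF hG hr hFG t (chordGap_left y)
    (chordGap_right hFG y), hy, zero_pow two_ne_zero, zero_sub]
  exact neg_nonpos.2 (Finset.sum_nonneg fun _ _ => sq_nonneg _)

end RankThree

end RankFunction

/-! ### Root-concavity of volume polynomials -/

namespace RankFunction

open Matrix

variable {E : Type*} [DecidableEq E] {M : RankFunction E} {F G H K : Finset E} {d : ℕ}
  {t : Finset E → ℝ} {g : MvPolynomial (Finset E) ℝ}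

variable (M) in
/-- The vector of deviations of `x` from its chord at the flats strictly between `F` and `G`. -/
noncomputable def gapVector (F G : Finset E) (x : Finset E → ℝ) : M.between F G → ℝ :=
  fun H => chordGap F G x H

theorem exists_gapVector_eq (z : M.between F G → ℝ) : ∃ x, M.gapVector F G x = z := by
  classical
  refine ⟨fun S => if hS : S ∈ M.between F G then z ⟨S, hS⟩ else 0, funext fun H => ?_⟩
  have hF : F ∉ M.between F G := fun h => (left_ssubset_of_mem_between h).ne rfl
  have hG : G ∉ M.between F G := fun h => (ssubset_right_of_mem_between h).ne rfl
  rw [gapVector, chordGap_of_eq_zero (by rw [dif_neg hF]) (by rw [dif_neg hG]), dif_pos H.2]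

variable (M) in
/-- The Hessian matrix of `g` at `t` with respect to the flats strictly between `F` and `G`. -/
noncomputable def flatHessian (F G : Finset E) (t : Finset E → ℝ) (g : MvPolynomial (Finset E) ℝ) :
    Matrix (M.between F G) (M.between F G) ℝ :=
  .of fun H K => MvPolynomial.eval t (pderiv K.1 (pderiv H.1 g))

theorem isSymm_flatHessian (F G : Finset E) (t : Finset E → ℝ) (g : MvPolynomial (Finset E) ℝ) :
    (M.flatHessian F G t g).IsSymm :=
  Matrix.IsSymm.ext fun H K => by rw [flatHessian, of_apply, of_apply, pderiv_comm]

theorem IsIntervalPoly.flatHessian_mulVec (hg : M.IsIntervalPoly F G d g) (hFG : F ⊂ G)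
    (t x : Finset E → ℝ) (H : M.between F G) :
    (M.flatHessian F G t g *ᵥ M.gapVector F G x) H =
      MvPolynomial.eval t (directionalDeriv x (pderiv H.1 g)) := by
  rw [(hg.pderiv H).eval_directionalDeriv hFG t x, ← Finset.sum_coe_sort]
  exact Finset.sum_congr rfl fun K _ => mul_comm _ _

theorem IsIntervalPoly.dotProduct_flatHessian_mulVec (hg : M.IsIntervalPoly F G d g) (hFG : F ⊂ G)
    (t x y : Finset E → ℝ) :
    M.gapVector F G y ⬝ᵥ M.flatHessian F G t g *ᵥ M.gapVector F G x = hessian t g x y := by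
  rw [hg.hessian_eq_sum hFG, ← Finset.sum_coe_sort, dotProduct]
  exact Finset.sum_congr rfl fun H _ => by rw [hg.flatHessian_mulVec hFG, gapVector]

theorem IsIntervalPoly.mul_hessian_eq_sum (hg : M.IsIntervalPoly F G (d + 3) g) (hFG : F ⊂ G)
    (t x : Finset E → ℝ) :
    ((d + 1 : ℕ) : ℝ) * hessian t g x x =
      ∑ H ∈ M.between F G, chordGap F G t H * hessian t (pderiv H g) x x := by
  have hx := isHomogeneous_directionalDeriv (isHomogeneous_directionalDeriv hg.isHomogeneous x) x
  rw [hessian_apply, show d + 1 = d + 3 - 1 - 1 by omega, ← eval_directionalDeriv_self hx,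
    directionalDeriv_comm t x, directionalDeriv_comm t x, hg.directionalDeriv_eq_sum hFG]
  simp only [map_sum, Derivation.leibniz, MvPolynomial.derivation_C, smul_eq_mul,
    mul_zero, add_zero, map_mul, MvPolynomial.eval_C, hessian_apply]

section Volume

variable [Finite E] (hF : M.IsFlat F) (hG : M.IsFlat G) (hFG : F ⊂ G)
include hF hG hFG

theorem eval_pderiv_volume_pos (ht : IsAboveChords t) (hH : H ∈ M.between F G) :
    0 < MvPolynomial.eval t (pderiv H (M.volume F G)) := by
  have hHflat := isFlat_of_mem_between hH
  rw [pderiv_volume hF hG hFG hH, map_mul]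
  exact mul_pos (eval_volume_pos ht hF hHflat (left_ssubset_of_mem_between hH))
    (eval_volume_pos ht hHflat hG (ssubset_right_of_mem_between hH))

theorem eval_pderiv_pderiv_volume_pos (ht : IsAboveChords t) (hH : H ∈ M.between F G)
    (hK : K ∈ M.between F G) (hHK : H ⊂ K) :
    0 < MvPolynomial.eval t (pderiv K (pderiv H (M.volume F G))) := by
  have hHflat := isFlat_of_mem_between hH
  have hKflat := isFlat_of_mem_between hK
  have hFH := left_ssubset_of_mem_between hH
  have hKG := ssubset_right_of_mem_between hK
  rw [pderiv_volume hF hG hFG hH, pderiv_volume_mul_of_ssubset (volumeSpec hF hHflat hFH)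
    (volumeSpec hHflat hG (ssubset_right_of_mem_between hH)) hK hHK, map_mul, map_mul]
  exact mul_pos (mul_pos (eval_volume_pos ht hF hHflat hFH)
    (eval_volume_pos ht hHflat hKflat hHK)) (eval_volume_pos ht hKflat hG hKG)

theorem pderiv_pderiv_volume_eq_zero (hH : H ∈ M.between F G) (hHK : ¬H ⊆ K) (hKH : ¬K ⊆ H) :
    pderiv K (pderiv H (M.volume F G)) = 0 := by
  have hHflat := isFlat_of_mem_between hH
  rw [pderiv_volume hF hG hFG hH, MvPolynomial.pderiv_mul,
    (volumeSpec hF hHflat (left_ssubset_of_mem_between hH)).isIntervalPoly.pderiv_eq_zero K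
      fun h => hKH h.2.2,
    (volumeSpec hHflat hG (ssubset_right_of_mem_between hH)).isIntervalPoly.pderiv_eq_zero K
      fun h => hHK h.2.1, zero_mul, mul_zero, add_zero]

theorem flatHessian_volume_nonneg (ht : IsAboveChords t) {H K : M.between F G} (hHK : H ≠ K) :
    0 ≤ M.flatHessian F G t (M.volume F G) H K := by
  have hne : H.1 ≠ K.1 := fun h => hHK (Subtype.ext h)
  by_cases hle : H.1 ⊆ K.1
  · exact (eval_pderiv_pderiv_volume_pos hF hG hFG ht H.2 K.2 (hle.ssubset_of_ne hne)).le
  by_cases hge : K.1 ⊆ H.1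
  · rw [(isSymm_flatHessian F G t _).apply]
    exact (eval_pderiv_pderiv_volume_pos hF hG hFG ht K.2 H.2 (hge.ssubset_of_ne hne.symm)).le
  rw [flatHessian, of_apply, pderiv_pderiv_volume_eq_zero hF hG hFG H.2 hle hge, map_zero]

omit hFG in
/-- Any two flats are linked through points `a ⊆ H` and `b ⊆ K` and the line through `a` and
`b`. -/
theorem eqvGen_between (hr : M.rk F + 4 ≤ M.rk G) {r : M.between F G → M.between F G → Prop}
    (hrel : ∀ H K : M.between F G, H.1 ⊂ K.1 → r H K) (H K : M.between F G) :
    Relation.EqvGen r H K := by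
  have hsub (H K : M.between F G) (h : H.1 ⊆ K.1) : Relation.EqvGen r H K := by
    rcases eq_or_ne H K with rfl | hne
    · exact .refl H
    · exact .rel _ _ (hrel H K (h.ssubset_of_ne fun h => hne (Subtype.ext h)))
  obtain ⟨⟨hFH, hHG⟩, hH⟩ := mem_between.1 H.2
  obtain ⟨⟨hFK, hKG⟩, hK⟩ := mem_between.1 K.2
  obtain ⟨i, hiH, hiF⟩ := Finset.exists_of_ssubset hFH
  obtain ⟨j, hjK, hjF⟩ := Finset.exists_of_ssubset hFK
  let a : M.between F G := ⟨_, hF.closure_insert_mem_between hiF hG (hFH.trans hHG).subset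
    (hHG.subset hiH) (by omega)⟩
  let b : M.between F G := ⟨_, hF.closure_insert_mem_between hjF hG (hFH.trans hHG).subset
    (hKG.subset hjK) (by omega)⟩
  set L := M.closure (insert i (insert j F))
  have hins : insert i (insert j F) ⊆ L := M.subset_closure _
  have hLrk : M.rk L ≤ M.rk F + 2 := by
    rw [M.rk_closure]
    exact (M.rk_insert_le i _).trans (Nat.succ_le_succ (M.rk_insert_le j F))
  have hLG : L ⊆ G := hG.closure_subset
    (Finset.insert_subset (hHG.subset hiH) (Finset.insert_subset (hKG.subset hjK)
      (hFH.trans hHG).subset))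
  let l : M.between F G := ⟨L, mem_between.2 ⟨⟨Finset.ssubset_iff_subset_ne.2
    ⟨((Finset.subset_insert _ _).trans (Finset.subset_insert _ _)).trans hins,
      fun h => hiF (h ▸ hins (Finset.mem_insert_self _ _))⟩,
    hLG.ssubset_of_ne fun h => by rw [h] at hLrk; omega⟩, M.isFlat_closure _⟩⟩
  have haH := hsub a H (hH.closure_subset (Finset.insert_subset hiH hFH.subset))
  have hbK := hsub b K (hK.closure_subset (Finset.insert_subset hjK hFK.subset))
  have hal := hsub a l (l.2 |> isFlat_of_mem_between |>.closure_subset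
    ((Finset.insert_subset_insert _ (Finset.subset_insert _ _)).trans hins))
  have hbl := hsub b l (l.2 |> isFlat_of_mem_between |>.closure_subset
    ((Finset.subset_insert _ _).trans hins))
  exact (haH.symm.trans _ _ _ hal).trans _ _ _ (hbl.symm.trans _ _ _ hbK)

theorem hessian_volume_le_sum (ht : IsAboveChords t) (hr : M.rk G = M.rk F + d + 4)
    (ih : ∀ H ∈ M.between F G, IsRootConcaveAt t (d + 2) (pderiv H (M.volume F G)))
    (x : Finset E → ℝ) :
    hessian t (M.volume F G) x x ≤ ∑ H ∈ M.between F G, chordGap F G t H *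
      MvPolynomial.eval t (directionalDeriv x (pderiv H (M.volume F G))) ^ 2 /
        MvPolynomial.eval t (directionalDeriv t (pderiv H (M.volume F G))) := by
  have hg : M.IsIntervalPoly F G (d + 3) (M.volume F G) := isIntervalPoly_volume hF hG hr hFG
  refine le_of_mul_le_mul_left ?_ (show (0 : ℝ) < (d + 1 : ℕ) by positivity)
  rw [hg.mul_hessian_eq_sum hFG, Finset.mul_sum]
  refine Finset.sum_le_sum fun H hH => ?_
  have hgap := ht (left_ssubset_of_mem_between hH) (ssubset_right_of_mem_between hH)
  have hpos := eval_pderiv_volume_pos hF hG hFG ht hH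
  have hconc := ih H hH x
  rw [eval_directionalDeriv_self (hg.pderiv H).isHomogeneous, mul_div_assoc, mul_left_comm]
  refine mul_le_mul_of_nonneg_left ?_ hgap.le
  rw [← mul_div_assoc, le_div_iff₀ (mul_pos (Nat.cast_pos.2 (by omega)) hpos)]
  push_cast at hconc ⊢
  linarith

theorem isRootConcaveAt_volume_of_forall_between (ht : IsAboveChords t)
    (hr : M.rk G = M.rk F + d + 4)
    (ih : ∀ H ∈ M.between F G, IsRootConcaveAt t (d + 2) (pderiv H (M.volume F G))) :
    IsRootConcaveAt t (d + 3) (M.volume F G) := by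
  have hg : M.IsIntervalPoly F G (d + 3) (M.volume F G) := isIntervalPoly_volume hF hG hr hFG
  obtain ⟨i, hiG, hiF⟩ := Finset.exists_of_ssubset hFG
  have : Nonempty (M.between F G) :=
    ⟨⟨_, hF.closure_insert_mem_between hiF hG hFG.subset hiG (by omega)⟩⟩
  refine isRootConcaveAt_of_hessian_mul_le hg.isHomogeneous fun x => ?_
  have key := dotProduct_mulVec_mul_le_sq (isSymm_flatHessian F G t (M.volume F G))
    (w := M.gapVector F G t)
    (fun H => ht (left_ssubset_of_mem_between H.2) (ssubset_right_of_mem_between H.2))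
    (fun H => ?_) (fun H K hHK => flatHessian_volume_nonneg hF hG hFG ht hHK)
    (eqvGen_between hF hG (by omega) fun H K hHK =>
      eval_pderiv_pderiv_volume_pos hF hG hFG ht H.2 K.2 hHK)
    (fun z => ?_) (M.gapVector F G x)
  · simpa only [hg.dotProduct_flatHessian_mulVec hFG, (isSymm_hessian t _).eq t x] using key
  · rw [hg.flatHessian_mulVec hFG, eval_directionalDeriv_self (hg.pderiv H).isHomogeneous]
    exact mul_pos (Nat.cast_pos.2 (by omega)) (eval_pderiv_volume_pos hF hG hFG ht H.2)
  · obtain ⟨y, rfl⟩ := exists_gapVector_eq z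
    rw [hg.dotProduct_flatHessian_mulVec hFG]
    simp only [hg.flatHessian_mulVec hFG, gapVector]
    rw [Finset.sum_coe_sort (M.between F G) fun H => chordGap F G t H *
      MvPolynomial.eval t (directionalDeriv y (pderiv H (M.volume F G))) ^ 2 /
        MvPolynomial.eval t (directionalDeriv t (pderiv H (M.volume F G)))]
    exact hessian_volume_le_sum hF hG hFG ht hr ih y

end Volume

theorem isRootConcaveAt_volume [Finite E] (ht : IsAboveChords t) (hF : M.IsFlat F) (hG : M.IsFlat G)
    (hFG : F ⊂ G) (hd : M.rk G = M.rk F + d + 1) : IsRootConcaveAt t d (M.volume F G) := by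
  induction F, G using between_induction (M := M) generalizing d with
  | step F G ih =>
    match d with
    | 0 =>
      exact isRootConcaveAt_of_degree_le_one (isIntervalPoly_volume hF hG hd hFG).isHomogeneous
        zero_le_one t
    | 1 =>
      exact isRootConcaveAt_of_degree_le_one (isIntervalPoly_volume hF hG hd hFG).isHomogeneous
        le_rfl t
    | 2 => exact isRootConcaveAt_volume_of_rank_three hF hG hd hFG (eval_volume_pos ht hF hG hFG)
    | d + 3 =>
      refine isRootConcaveAt_volume_of_forall_between hF hG hFG ht hd fun H hH => ?_
      obtain ⟨⟨hFH, hHG⟩, hH'⟩ := mem_between.1 hH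
      obtain ⟨a, ha⟩ := Nat.exists_eq_add_of_lt (hF.rk_lt hFH)
      obtain ⟨b, hb⟩ := Nat.exists_eq_add_of_lt (hH'.rk_lt hHG)
      rw [pderiv_volume hF hG hFG hH, show d + 2 = a + b by omega]
      exact ((ih H hH).1 hF hH' hFH ha).mul ((ih H hH).2 hH' hG hHG hb)
        (isIntervalPoly_volume hF hH' ha hFH).isHomogeneous
        (isIntervalPoly_volume hH' hG hb hHG).isHomogeneous
        (eval_volume_pos ht hF hH' hFH) (eval_volume_pos ht hH' hG hHG)

end RankFunction

/-! ### Derivatives at the boundary point -/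

section Polynomial

variable {σ : Type*} {d m : ℕ} {f g : MvPolynomial σ ℝ} {s : σ}

theorem directionalDeriv_single [DecidableEq σ] (s : σ) (g : MvPolynomial σ ℝ) :
    directionalDeriv (Pi.single s 1) g = pderiv s g := by
  have h : directionalDeriv (Pi.single s 1) = pderiv (R := ℝ) s :=
    MvPolynomial.derivation_ext fun r => by
      rw [directionalDeriv_X, MvPolynomial.pderiv_X, Pi.single_apply, Pi.single_apply, apply_ite
        MvPolynomial.C, map_one, map_zero]
  rw [h]

theorem iterate_pderiv_mul (hf : pderiv s f = 0) (m : ℕ) :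
    (pderiv s)^[m] (f * g) = f * (pderiv s)^[m] g := by
  induction m with
  | zero => rfl
  | succ m ih =>
    rw [Function.iterate_succ_apply', Function.iterate_succ_apply', ih, MvPolynomial.pderiv_mul,
      hf, zero_mul, zero_add]

theorem iterate_pderiv_sum {ι : Type*} (u : Finset ι) (p : ι → MvPolynomial σ ℝ) (m : ℕ) :
    (pderiv s)^[m] (∑ i ∈ u, p i) = ∑ i ∈ u, (pderiv s)^[m] (p i) := by
  induction m with
  | zero => rfl
  | succ m ih => simp only [Function.iterate_succ_apply', ih, map_sum]

theorem iterate_pderiv_eq_zero (hg : g.IsHomogeneous d) (h : d < m) : (pderiv s)^[m] g = 0 := by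
  induction m generalizing d g with
  | zero => exact absurd h d.not_lt_zero
  | succ m ih =>
    rw [Function.iterate_succ_apply]
    rcases d.eq_zero_or_pos with rfl | hd
    · rw [eq_C_of_isHomogeneous_zero hg, MvPolynomial.pderiv_C, iterate_map_zero]
    · exact ih hg.pderiv (by omega)

theorem isRootConcaveAt_of_forall_pos {a b : σ → ℝ}
    (h : ∀ ε : ℝ, 0 < ε → IsRootConcaveAt (a + ε • b) d g) : IsRootConcaveAt a d g := fun x => by
  have hcont (f : MvPolynomial σ ℝ) : Continuous fun ε : ℝ => MvPolynomial.eval (a + ε • b) f :=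
    (MvPolynomial.continuous_eval f).comp (by fun_prop)
  have hleft := ((hcont g).const_mul (d : ℝ)).mul
    (hcont (directionalDeriv x (directionalDeriv x g)))
  have hright := ((hcont (directionalDeriv x g)).pow 2).const_mul ((d : ℝ) - 1)
  have hlim := le_of_tendsto_of_tendsto (b := nhdsWithin 0 (Set.Ioi 0))
    (hleft.continuousWithinAt (x := 0)) (hright.continuousWithinAt (x := 0))
    (Filter.mem_of_superset self_mem_nhdsWithin fun ε hε => h ε hε x)
  simpa only [Pi.mul_apply, Pi.pow_apply, zero_smul, add_zero, ← hessian_apply] using hlim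

end Polynomial

section EmptyPoint

variable {E : Type*} [DecidableEq E]

variable (E) in
/-- The boundary point at which the volume polynomials and their derivatives take the values
`reducedWhitney`, up to sign and a factorial. -/
noncomputable def emptyPoint : Finset E → ℝ := Pi.single ∅ (-1)

theorem emptyPoint_empty : emptyPoint E ∅ = -1 := Pi.single_eq_same _ _

theorem emptyPoint_of_ne {S : Finset E} (hS : S ≠ ∅) : emptyPoint E S = 0 :=
  Pi.single_eq_of_ne hS _

variable {F G H : Finset E}

theorem chordGap_emptyPoint_nonneg (hFH : F ⊂ H) (hHG : H ⊂ G) :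
    0 ≤ chordGap F G (emptyPoint E) H := by
  have hH : H ≠ ∅ := ne_bot_of_gt hFH
  have hG : G ≠ ∅ := ne_bot_of_gt hHG
  rw [chordGap, emptyPoint_of_ne hH, emptyPoint_of_ne hG]
  rcases eq_or_ne F ∅ with rfl | hF
  · have hle : (H.card : ℝ) / G.card ≤ 1 :=
      div_le_one_of_le₀ (mod_cast Finset.card_le_card hHG.subset) (Nat.cast_nonneg _)
    simpa [emptyPoint_empty] using hle
  · simp [emptyPoint_of_ne hF]

omit [DecidableEq E] in
theorem chordGap_neg_sq_card_pos (hFH : F ⊂ H) (hHG : H ⊂ G) :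
    0 < chordGap F G (fun S => -(S.card : ℝ) ^ 2) H := by
  have hFH' : (F.card : ℝ) < H.card := mod_cast Finset.card_lt_card hFH
  have hHG' : (H.card : ℝ) < G.card := mod_cast Finset.card_lt_card hHG
  have hFG : (G.card : ℝ) - F.card ≠ 0 := (sub_pos.2 (hFH'.trans hHG')).ne'
  have hprod : chordGap F G (fun S => -(S.card : ℝ) ^ 2) H =
      ((H.card : ℝ) - F.card) * (G.card - H.card) := by
    rw [chordGap, smul_eq_mul]
    field_simp
    ring
  rw [hprod]
  exact mul_pos (sub_pos.2 hFH') (sub_pos.2 hHG')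

theorem isAboveChords_emptyPoint_add {ε : ℝ} (hε : 0 < ε) :
    IsAboveChords (emptyPoint E + ε • fun S => -(S.card : ℝ) ^ 2) := fun F H G hFH hHG => by
  rw [← gapFunctional_apply, map_add, map_smul, gapFunctional_apply, gapFunctional_apply]
  exact add_pos_of_nonneg_of_pos (chordGap_emptyPoint_nonneg hFH hHG)
    (smul_pos hε (chordGap_neg_sq_card_pos hFH hHG))

end EmptyPoint

namespace RankFunction

variable {E : Type*} [DecidableEq E] {M : RankFunction E} {F G H : Finset E} {d m : ℕ}
  {g : MvPolynomial (Finset E) ℝ}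

theorem isRootConcaveAt_volume_emptyPoint [Finite E] (hF : M.IsFlat F) (hG : M.IsFlat G)
    (hFG : F ⊂ G) (hd : M.rk G = M.rk F + d + 1) :
    IsRootConcaveAt (emptyPoint E) d (M.volume F G) :=
  isRootConcaveAt_of_forall_pos fun _ hε =>
    isRootConcaveAt_volume (isAboveChords_emptyPoint_add hε) hF hG hFG hd

theorem IsIntervalPoly.iterate_pderiv (hg : M.IsIntervalPoly F G d g) (T : Finset E) (m : ℕ) :
    M.IsIntervalPoly F G (d - m) ((pderiv T)^[m] g) := by
  induction m with
  | zero => exact hg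
  | succ m ih =>
    rw [Function.iterate_succ_apply', ← Nat.sub_sub]
    exact ih.pderiv T

theorem IsIntervalPoly.eval_emptyPoint_eq_zero (hg : M.IsIntervalPoly F G d g) (hF : F ≠ ∅)
    (hFG : F ⊂ G) (hd : d ≠ 0) : MvPolynomial.eval (emptyPoint E) g = 0 := by
  have hzero {S : Finset E} (hS : S ≠ ∅) : MvPolynomial.C (emptyPoint E S) =
      (0 : MvPolynomial (Finset E) ℝ) := by rw [emptyPoint_of_ne hS, map_zero]
  have heuler := eval_directionalDeriv_self hg.isHomogeneous (emptyPoint E)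
  rw [directionalDeriv, hg.mkDerivation_eq_sum_between (hzero hF)
    (hzero (ne_bot_of_gt hFG)), Finset.sum_eq_zero fun H hH => by
      rw [hzero (ne_bot_of_gt (left_ssubset_of_mem_between hH)), zero_mul],
    map_zero] at heuler
  exact (mul_eq_zero.1 heuler.symm).resolve_left (Nat.cast_ne_zero.2 hd)

theorem IsIntervalPoly.mul_eval_emptyPoint (hg : M.IsIntervalPoly ∅ G d g) {i : E} (hi : i ∈ G) :
    d * MvPolynomial.eval (emptyPoint E) g =
      ∑ H ∈ M.between ∅ G with i ∉ H, MvPolynomial.eval (emptyPoint E) (pderiv H g) := by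
  set y : Finset E → MvPolynomial (Finset E) ℝ := fun S => -1 + if i ∈ S then 1 else 0
  have hy : IsModular y := (isModular_const _).add (isModular_ite_mem i _)
  rw [← eval_directionalDeriv_self hg.isHomogeneous, directionalDeriv,
    hg.mkDerivation_eq_sum_sub hy (by simp [y, emptyPoint_empty])
      (by simp [y, hi, emptyPoint_of_ne (Finset.ne_empty_of_mem hi)]), map_sum, Finset.sum_filter]
  refine Finset.sum_congr rfl fun H hH => ?_
  rw [emptyPoint_of_ne (ne_bot_of_gt (left_ssubset_of_mem_between hH))]
  by_cases hiH : i ∈ H <;> simp [y, hiH]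

section TopDerivative

variable [Finite E] (hF : M.IsFlat F) (hG : M.IsFlat G) (hFG : F ⊂ G)
include hF hG hFG

theorem iterate_pderiv_volume_eq_zero (h : M.rk G < M.rk F + m + 1) (T : Finset E) :
    (pderiv T)^[m] (M.volume F G) = 0 := by
  have hrk := hF.rk_lt hFG
  exact iterate_pderiv_eq_zero
    (isIntervalPoly_volume (d := M.rk G - M.rk F - 1) hF hG (by omega) hFG).isHomogeneous (by omega)

omit hG hFG in
theorem iterate_pderiv_volume_mul_volume (hH : H ∈ M.between F G) (m : ℕ) :
    (pderiv G)^[m] (M.volume F H * M.volume H G) =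
      M.volume F H * (pderiv G)^[m] (M.volume H G) :=
  iterate_pderiv_mul ((volumeSpec hF (isFlat_of_mem_between hH)
    (left_ssubset_of_mem_between hH)).isIntervalPoly.pderiv_eq_zero G fun h =>
      (ssubset_right_of_mem_between hH).2 h.2.2) m

theorem pderiv_top_volume {i : E} (hiG : i ∈ G) (hiF : i ∉ F) :
    pderiv G (M.volume F G) =
      -∑ H ∈ M.between F G with i ∈ H, M.volume F H * M.volume H G := by
  have hy : IsModular fun S : Finset E => if i ∈ S then (1 : MvPolynomial (Finset E) ℝ) else 0 :=
    isModular_ite_mem i 1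
  rw [← directionalDeriv_single, directionalDeriv,
    (volumeSpec hF hG hFG).isIntervalPoly.mkDerivation_eq_sum_sub hy (by simp [hiF, hFG.ne])
      (by simp [hiG]), Finset.sum_filter, ← Finset.sum_neg_distrib]
  refine Finset.sum_congr rfl fun H hH => ?_
  rw [Pi.single_eq_of_ne (ssubset_right_of_mem_between hH).ne, map_zero, zero_sub,
    pderiv_volume hF hG hFG hH, neg_mul, ite_mul, one_mul, zero_mul]

theorem iterate_pderiv_top_volume (hr : M.rk G = M.rk F + m + 1) :
    (pderiv G)^[m] (M.volume F G) = (-1) ^ m := by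
  induction m generalizing F with
  | zero => rw [Function.iterate_zero_apply, volume_eq_one hr.le, pow_zero]
  | succ m ih =>
    obtain ⟨i, hiG, hiF⟩ := Finset.exists_of_ssubset hFG
    have hclosure := hF.closure_insert_mem_between hiF hG hFG.subset hiG (by omega)
    have hrk : M.rk (M.closure (insert i F)) = M.rk F + 1 := by
      rw [rk_closure, hF.rk_insert hiF]
    rw [Function.iterate_succ_apply, pderiv_top_volume hF hG hFG hiG hiF, iterate_map_neg,
      iterate_pderiv_sum, Finset.sum_congr rfl fun H hH =>
        iterate_pderiv_volume_mul_volume hF (Finset.mem_filter.1 hH).1 m,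
      hF.sum_between_mem hiF hG hFG.subset hiG (by omega) fun H hH _ hne => ?_,
      volume_eq_one hrk.le, one_mul, ih (M.isFlat_closure _) (ssubset_right_of_mem_between hclosure)
        (by omega), pow_succ, mul_neg_one]
    have hlt := hF.rk_lt_of_mem_between hH
    rw [iterate_pderiv_volume_eq_zero (isFlat_of_mem_between hH) hG
      (ssubset_right_of_mem_between hH) (by omega), mul_zero]

end TopDerivative

theorem eval_emptyPoint_iterate_pderiv_top_volume [Finite E] (hF : M.IsFlat F) (hG : M.IsFlat G)
    (hFG : F ⊂ G) (hF₀ : F ≠ ∅) (m : ℕ) :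
    MvPolynomial.eval (emptyPoint E) ((pderiv G)^[m] (M.volume F G)) =
      if M.rk G = M.rk F + m + 1 then (-1) ^ m else 0 := by
  have hrk := hF.rk_lt hFG
  split_ifs with hr
  · rw [iterate_pderiv_top_volume hF hG hFG hr, map_pow, map_neg, map_one]
  rcases lt_or_gt_of_ne hr with hlt | hgt
  · rw [iterate_pderiv_volume_eq_zero hF hG hFG hlt, map_zero]
  · exact ((isIntervalPoly_volume (d := M.rk G - M.rk F - 1) hF hG (by omega)
      hFG).iterate_pderiv G m).eval_emptyPoint_eq_zero hF₀ hFG (by omega)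

end RankFunction

/-! ### Coefficients of the reduced characteristic polynomial -/

namespace RankFunction

variable {E : Type*} [DecidableEq E] (M : RankFunction E) {F G H K : Finset E} {i : E} {k m : ℕ}

/-- The absolute value of the coefficient of codegree `k - 1` in the reduced characteristic
polynomial of the restriction of `M` to `G`, for `k ≤ M.rk G`. The shift of the index makes the
value at `0` vanish. -/
noncomputable def reducedWhitney (G : Finset E) (k : ℕ) : ℝ :=
  (-1) ^ (k + 1) * ∑ S ∈ G.powerset with M.rk S < k, (-1) ^ S.card

open Classical in
/-- The flats of rank `k` contained in `G` that avoid the element `i`. -/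
noncomputable def flatsAvoiding (G : Finset E) (i : E) (k : ℕ) : Finset (Finset E) :=
  {H ∈ G.powerset | M.IsFlat H ∧ M.rk H = k ∧ i ∉ H}

variable {M}

theorem mem_flatsAvoiding :
    H ∈ M.flatsAvoiding G i k ↔ H ⊆ G ∧ M.IsFlat H ∧ M.rk H = k ∧ i ∉ H := by
  simp [flatsAvoiding]

theorem filter_between_empty (hi : i ∈ G) (hk : k ≠ 0) :
    {H ∈ M.between ∅ G | i ∉ H ∧ M.rk H = k} = M.flatsAvoiding G i k := by
  ext H
  simp only [Finset.mem_filter, mem_between, mem_flatsAvoiding]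
  constructor
  · rintro ⟨⟨⟨-, hHG⟩, hH⟩, hiH, hr⟩
    exact ⟨hHG.subset, hH, hr, hiH⟩
  · rintro ⟨hHG, hH, hr, hiH⟩
    exact ⟨⟨⟨Finset.empty_ssubset.2 (M.nonempty_of_rk_ne_zero (hr ▸ hk)),
      hHG.ssubset_of_ne fun h => hiH (h ▸ hi)⟩, hH⟩, hiH, hr⟩

theorem sum_neg_one_pow_rk_eq (hG : M.rk G = k) (hk : k ≠ 0) :
    ∑ S ∈ G.powerset with M.rk S = k, (-1 : ℝ) ^ S.card =
      -∑ S ∈ G.powerset with M.rk S < k, (-1) ^ S.card := by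
  have hne : G.Nonempty := M.nonempty_of_rk_ne_zero (hG ▸ hk)
  have htotal : ∑ S ∈ G.powerset, (-1 : ℝ) ^ S.card = 0 := mod_cast
    congrArg (Int.cast (R := ℝ)) (Finset.sum_powerset_neg_one_pow_card_of_nonempty hne)
  rw [eq_neg_iff_add_eq_zero, ← htotal,
    ← Finset.sum_filter_add_sum_filter_not G.powerset fun S => M.rk S = k]
  congr 2
  refine Finset.filter_congr fun S hS => ?_
  have := M.rk_mono (Finset.mem_powerset.1 hS)
  omega

@[simp]
theorem reducedWhitney_zero : M.reducedWhitney G 0 = 0 := by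
  simp [reducedWhitney]

theorem reducedWhitney_one : M.reducedWhitney G 1 = 1 := by
  have h : {S ∈ G.powerset | M.rk S < 1} = {∅} := Finset.ext fun S => by
    simp only [Finset.mem_filter, Finset.mem_powerset, Nat.lt_one_iff, Finset.mem_singleton]
    exact ⟨fun h => M.eq_empty_of_rk_eq_zero h.2, by rintro rfl; simp [M.rk_empty]⟩
  rw [reducedWhitney, h, Finset.sum_singleton, Finset.card_empty, pow_zero, mul_one, neg_one_sq]

theorem reducedWhitney_eq_zero (hG : G.Nonempty) (h : M.rk G < k) :
    M.reducedWhitney G k = 0 := by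
  rw [reducedWhitney, Finset.filter_true_of_mem fun S hS =>
    (M.rk_mono (Finset.mem_powerset.1 hS)).trans_lt h]
  refine mul_eq_zero_of_right _ ?_
  exact_mod_cast congrArg (Int.cast (R := ℝ)) (Finset.sum_powerset_neg_one_pow_card_of_nonempty hG)

theorem reducedWhitney_truncate (hm : 0 < m) (h : k ≤ m) :
    (M.truncate m hm).reducedWhitney G k = M.reducedWhitney G k := by
  have hrk (S : Finset E) : (M.truncate m hm).rk S < k ↔ M.rk S < k := by
    change min (M.rk S) m < k ↔ _
    omega
  simp only [reducedWhitney, hrk]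

variable [Finite E]

/- Toggling `i` cancels the sets whose rank stays within the bound. -/
theorem sum_neg_one_pow_rk_lt_succ (hi : i ∈ G) (k : ℕ) :
    ∑ S ∈ G.powerset with M.rk S < k + 1, (-1 : ℝ) ^ S.card =
      ∑ S ∈ G.powerset with M.rk S = k ∧ i ∉ M.closure S, (-1) ^ S.card := by
  rw [Finset.sum_filter, Finset.sum_filter, ← Finset.insert_erase hi,
    Finset.sum_powerset_insert (Finset.notMem_erase i G),
    Finset.sum_powerset_insert (Finset.notMem_erase i G), ← Finset.sum_add_distrib,
    ← Finset.sum_add_distrib]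
  refine Finset.sum_congr rfl fun S hS => ?_
  have hiS : i ∉ S := fun h => Finset.notMem_erase i G (Finset.mem_powerset.1 hS h)
  have hle := M.rk_insert_le i S
  have hge := M.rk_mono (Finset.subset_insert i S)
  rw [Finset.card_insert_of_notMem hiS, if_neg (c := _ ∧ i ∉ M.closure (insert i S)) fun h =>
    h.2 (M.subset_closure _ (Finset.mem_insert_self i S)), pow_succ]
  simp only [M.mem_closure]
  split_ifs <;> first | omega | ring

theorem IsFlat.sum_rk_eq_notMem_closure (hG : M.IsFlat G) (f : Finset E → ℝ) :
    ∑ S ∈ G.powerset with M.rk S = k ∧ i ∉ M.closure S, f S =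
      ∑ H ∈ M.flatsAvoiding G i k, ∑ S ∈ H.powerset with M.rk S = k, f S := by
  rw [← Finset.sum_fiberwise_of_maps_to (t := M.flatsAvoiding G i k) (g := M.closure)]
  · refine Finset.sum_congr rfl fun H hH => Finset.sum_congr (Finset.ext fun S => ?_) fun _ _ => rfl
    obtain ⟨hHG, hHflat, hr, hiH⟩ := mem_flatsAvoiding.1 hH
    simp only [Finset.mem_filter, Finset.mem_powerset]
    constructor
    · rintro ⟨⟨-, hS, -⟩, rfl⟩
      exact ⟨M.subset_closure S, hS⟩
    · rintro ⟨hSH, hS⟩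
      obtain rfl := hHflat.eq_closure hSH (hr.trans hS.symm)
      exact ⟨⟨hSH.trans hHG, hS, hiH⟩, rfl⟩
  · intro S hS
    obtain ⟨hSG, hr, hiS⟩ := Finset.mem_filter.1 hS
    exact mem_flatsAvoiding.2 ⟨hG.closure_subset (Finset.mem_powerset.1 hSG), M.isFlat_closure S,
      (M.rk_closure S).trans hr, hiS⟩

theorem IsFlat.reducedWhitney_succ (hG : M.IsFlat G) (hi : i ∈ G) (hk : k ≠ 0) :
    M.reducedWhitney G (k + 1) = ∑ H ∈ M.flatsAvoiding G i k, M.reducedWhitney H k := by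
  rw [reducedWhitney, sum_neg_one_pow_rk_lt_succ hi, hG.sum_rk_eq_notMem_closure, Finset.mul_sum]
  refine Finset.sum_congr rfl fun H hH => ?_
  rw [sum_neg_one_pow_rk_eq (mem_flatsAvoiding.1 hH).2.2.1 hk, reducedWhitney, pow_succ]
  ring

theorem IsFlat.nonempty_flatsAvoiding (hG : M.IsFlat G) (hk : k < M.rk G) :
    (M.flatsAvoiding G i k).Nonempty := by
  induction k with
  | zero => exact ⟨∅, mem_flatsAvoiding.2
      ⟨G.empty_subset, M.isFlat_empty, M.rk_empty, Finset.notMem_empty i⟩⟩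
  | succ k ih =>
    obtain ⟨H, hH⟩ := ih (by omega)
    obtain ⟨hHG, hHflat, hr, hiH⟩ := mem_flatsAvoiding.1 hH
    have hri : M.rk (insert i H) = k + 1 := by rw [hHflat.rk_insert hiH, hr]
    obtain ⟨j, hjG, hj⟩ : ∃ j ∈ G, j ∉ M.closure (insert i H) := by
      by_contra! h
      have := M.rk_mono (show G ⊆ _ from h)
      rw [M.rk_closure] at this
      omega
    have hjH : j ∉ H := fun h => hj (M.subset_closure _ (Finset.mem_insert_of_mem h))
    have hrj : M.rk (insert j H) = k + 1 := by rw [hHflat.rk_insert hjH, hr]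
    refine ⟨M.closure (insert j H), mem_flatsAvoiding.2
      ⟨hG.closure_subset (Finset.insert_subset hjG hHG), M.isFlat_closure _,
        by rw [M.rk_closure, hrj], fun h => hj ?_⟩⟩
    rw [M.mem_closure, Finset.insert_comm, hrj] at h
    rw [M.mem_closure, h, hri]

theorem IsFlat.reducedWhitney_pos (hG : M.IsFlat G) (hk : k ≠ 0) (hkG : k ≤ M.rk G) :
    0 < M.reducedWhitney G k := by
  induction k generalizing G with
  | zero => exact absurd rfl hk
  | succ k ih =>
    rcases eq_or_ne k 0 with rfl | hk'
    · rw [reducedWhitney_one]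
      exact one_pos
    obtain ⟨i, hi⟩ : G.Nonempty := M.nonempty_of_rk_ne_zero (by omega)
    rw [hG.reducedWhitney_succ hi hk']
    refine Finset.sum_pos (fun H hH => ?_) (hG.nonempty_flatsAvoiding hkG)
    obtain ⟨-, hHflat, hr, -⟩ := mem_flatsAvoiding.1 hH
    exact ih hHflat hk' hr.ge

theorem eval_emptyPoint_iterate_pderiv_volume_mul_volume (hG : M.IsFlat G)
    (hH : H ∈ M.between ∅ G) (m : ℕ) :
    MvPolynomial.eval (emptyPoint E) (pderiv H ((pderiv G)^[m] (M.volume ∅ G))) =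
      if M.rk G = M.rk H + m + 1 then
        (-1) ^ m * MvPolynomial.eval (emptyPoint E) (M.volume ∅ H) else 0 := by
  have hHG := ssubset_right_of_mem_between hH
  have hH₀ := left_ssubset_of_mem_between hH
  rw [(Function.Commute.iterate_right (fun g => pderiv_comm H G g) m).eq,
    pderiv_volume M.isFlat_empty hG (hH₀.trans hHG) hH,
    iterate_pderiv_volume_mul_volume M.isFlat_empty hH, map_mul,
    eval_emptyPoint_iterate_pderiv_top_volume (isFlat_of_mem_between hH) hG hHG
      (ne_bot_of_gt hH₀), mul_ite, mul_zero, mul_comm]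

theorem IsFlat.succ_mul_eval_emptyPoint (hG : M.IsFlat G) (hi : i ∈ G)
    (hr : M.rk G = k + m + 2) :
    (k + 1) * MvPolynomial.eval (emptyPoint E) ((pderiv G)^[m] (M.volume ∅ G)) =
      (-1) ^ m * ∑ H ∈ M.flatsAvoiding G i (k + 1),
        MvPolynomial.eval (emptyPoint E) (M.volume ∅ H) := by
  have hpoly := (isIntervalPoly_volume (d := k + m + 1) M.isFlat_empty hG
    (by rw [M.rk_empty]; omega) (Finset.empty_ssubset.2 ⟨i, hi⟩)).iterate_pderiv G m
  have heuler := hpoly.mul_eval_emptyPoint hi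
  rw [show k + m + 1 - m = k + 1 by omega] at heuler
  rw [← Nat.cast_succ, heuler, ← filter_between_empty hi k.succ_ne_zero, ← Finset.filter_filter,
    Finset.mul_sum, Finset.sum_filter (fun H => M.rk H = k + 1)]
  refine Finset.sum_congr rfl fun H hH => ?_
  rw [eval_emptyPoint_iterate_pderiv_volume_mul_volume hG (Finset.mem_filter.1 hH).1]
  exact if_congr (by omega) rfl rfl

theorem IsFlat.factorial_mul_eval_emptyPoint (hG : M.IsFlat G) (hr : M.rk G = k + m + 1) :
    k.factorial * MvPolynomial.eval (emptyPoint E) ((pderiv G)^[m] (M.volume ∅ G)) =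
      (-1) ^ m * M.reducedWhitney G (k + 1) := by
  have hne : G.Nonempty := M.nonempty_of_rk_ne_zero (by omega)
  induction k generalizing G m with
  | zero =>
    rw [iterate_pderiv_top_volume M.isFlat_empty hG (Finset.empty_ssubset.2 hne)
      (by rw [M.rk_empty, hr]), reducedWhitney_one]
    simp
  | succ k ih =>
    obtain ⟨i, hi⟩ := hne
    rw [Nat.factorial_succ, Nat.cast_mul, Nat.cast_succ, mul_comm ((k : ℝ) + 1), mul_assoc,
      hG.succ_mul_eval_emptyPoint hi (by omega), hG.reducedWhitney_succ hi k.succ_ne_zero,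
      mul_left_comm, Finset.mul_sum]
    congr 1
    refine Finset.sum_congr rfl fun H hH => ?_
    obtain ⟨-, hHflat, hrH, -⟩ := mem_flatsAvoiding.1 hH
    simpa using ih hHflat (m := 0) hrH (M.nonempty_of_rk_ne_zero (by omega))

theorem IsFlat.reducedWhitney_mul_le_sq_of_rk_eq (hG : M.IsFlat G) (hr : M.rk G = k + 3) :
    M.reducedWhitney G (k + 3) * M.reducedWhitney G (k + 1) ≤ M.reducedWhitney G (k + 2) ^ 2 := by
  have hne : ∅ ⊂ G := Finset.empty_ssubset.2 (M.nonempty_of_rk_ne_zero (by omega))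
  have h0 := hG.factorial_mul_eval_emptyPoint (k := k + 2) (m := 0) hr
  have h1 := hG.factorial_mul_eval_emptyPoint (k := k + 1) (m := 1) hr
  have h2 := hG.factorial_mul_eval_emptyPoint (k := k) (m := 2) hr
  have hconcave := isRootConcaveAt_volume_emptyPoint M.isFlat_empty hG hne
    (d := k + 2) (by rw [M.rk_empty, hr]; omega) (Pi.single G 1)
  rw [hessian_apply, directionalDeriv_single, directionalDeriv_single] at hconcave
  simp only [Function.iterate_succ_apply, Function.iterate_zero_apply, pow_zero, one_mul, pow_one,
    neg_one_sq, Nat.factorial_succ, Nat.cast_mul] at h0 h1 h2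
  rw [← h0, ← h2, ← neg_sq (M.reducedWhitney G (k + 2)), ← neg_one_mul, ← h1]
  have hmul := mul_le_mul_of_nonneg_left hconcave
    (show (0 : ℝ) ≤ (k + 1) * k.factorial ^ 2 by positivity)
  push_cast at hmul ⊢
  linarith

end RankFunction

/-! ### Unimodality of Whitney numbers -/

theorem exists_monotoneOn_antitoneOn {α : Type*} [LinearOrder α] {h : ℕ → α}
    (hstep : ∀ k, h (k + 1) ≤ h k → h (k + 2) ≤ h (k + 1)) (n : ℕ) :
    ∃ j ≤ n, MonotoneOn h (Set.Iic j) ∧ AntitoneOn h (Set.Icc j n) := by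
  have hexists : ∃ j, j = n ∨ h (j + 1) ≤ h j := ⟨n, Or.inl rfl⟩
  refine ⟨Nat.find hexists, Nat.find_le (Or.inl rfl),
    monotoneOn_of_le_add_one Set.ordConnected_Iic fun k _ _ hk => ?_,
    antitoneOn_of_add_one_le Set.ordConnected_Icc fun k _ hk hk' => ?_⟩
  · exact (lt_of_not_ge fun hle => Nat.find_min hexists (Set.mem_Iic.1 hk) (Or.inr hle)).le
  · have hpeak := (Nat.find_spec hexists).resolve_left fun h => by
      have := hk.1
      have := hk'.2
      omega
    exact Nat.le_induction hpeak (fun m _ ih => hstep m ih) k hk.1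

theorem le_of_mul_le_sq {a b c d : ℝ} (hb : 0 < b) (hc : 0 ≤ c) (hca : c ≤ a)
    (hcb : c * a ≤ b ^ 2) (hdb : d * b ≤ c ^ 2) : d ≤ b := by
  refine le_of_mul_le_mul_right ?_ hb
  calc d * b ≤ c * c := hdb.trans_eq (sq c)
    _ ≤ c * a := mul_le_mul_of_nonneg_left hca hc
    _ ≤ b * b := hcb.trans_eq (sq b)

namespace RankFunction

variable {E : Type*} [DecidableEq E] [Fintype E] (M : RankFunction E) {k : ℕ}

/-- The signed Whitney number of the first kind, that is, the coefficient of codegree `k` in the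
characteristic polynomial of `M`, written as a sum over subsets instead of flats. -/
def whitneyNumber (k : ℕ) : ℤ := ∑ S with M.rk S = k, (-1) ^ S.card

/- The characteristic polynomial is `X - 1` times the reduced one. -/
theorem cast_whitneyNumber_eq (k : ℕ) : (M.whitneyNumber k : ℝ) =
    (-1) ^ k * (M.reducedWhitney Finset.univ (k + 1) + M.reducedWhitney Finset.univ k) := by
  have hsplit : ∑ S with M.rk S < k + 1, (-1 : ℝ) ^ S.card =
      ∑ S with M.rk S < k, (-1) ^ S.card + ∑ S with M.rk S = k, (-1) ^ S.card := by
    rw [← Finset.sum_union (Finset.disjoint_filter.2 fun S _ h => h.ne), ← Finset.filter_or]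
    simp only [← Nat.lt_succ_iff_lt_or_eq]
  rw [whitneyNumber, reducedWhitney, reducedWhitney, Finset.powerset_univ, hsplit, pow_succ,
    pow_succ]
  push_cast
  have hsign : (-1 : ℝ) ^ k * (-1) ^ k = 1 := pow_mul_pow_eq_one k (by norm_num)
  linear_combination (-∑ S with M.rk S = k, (-1 : ℝ) ^ S.card) * hsign

theorem whitneyNumber_eq_zero (h : M.rk Finset.univ < k) : M.whitneyNumber k = 0 := by
  rw [whitneyNumber, Finset.filter_false_of_mem fun S _ =>
    ((M.rk_mono S.subset_univ).trans_lt h).ne, Finset.sum_empty]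

theorem reducedWhitney_univ_nonneg [Nonempty E] (k : ℕ) :
    0 ≤ M.reducedWhitney Finset.univ k := by
  rcases eq_or_ne k 0 with rfl | hk
  · rw [reducedWhitney_zero]
  rcases le_or_gt k (M.rk Finset.univ) with h | h
  · exact (M.isFlat_univ.reducedWhitney_pos hk h).le
  · rw [reducedWhitney_eq_zero Finset.univ_nonempty h]

theorem cast_abs_whitneyNumber [Nonempty E] (k : ℕ) : ((|M.whitneyNumber k| : ℤ) : ℝ) =
    M.reducedWhitney Finset.univ (k + 1) + M.reducedWhitney Finset.univ k := by
  rw [Int.cast_abs, cast_whitneyNumber_eq, abs_mul, abs_neg_one_pow, one_mul, abs_of_nonneg]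
  exact add_nonneg (M.reducedWhitney_univ_nonneg _) (M.reducedWhitney_univ_nonneg _)

theorem reducedWhitney_univ_mul_le_sq [Nonempty E] (k : ℕ) :
    M.reducedWhitney Finset.univ (k + 2) * M.reducedWhitney Finset.univ k ≤
      M.reducedWhitney Finset.univ (k + 1) ^ 2 := by
  rcases lt_or_ge (M.rk Finset.univ) (k + 2) with h | h
  · rw [reducedWhitney_eq_zero Finset.univ_nonempty h, zero_mul]
    exact sq_nonneg _
  cases k with
  | zero =>
    rw [reducedWhitney_zero, mul_zero]
    exact sq_nonneg _
  | succ k =>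
    have htop := (M.truncate (k + 3) (by omega)).isFlat_univ.reducedWhitney_mul_le_sq_of_rk_eq
      (min_eq_right h)
    rwa [reducedWhitney_truncate _ le_rfl, reducedWhitney_truncate _ (by omega),
      reducedWhitney_truncate _ (by omega)] at htop

theorem abs_whitneyNumber_add_two_le (h : |M.whitneyNumber (k + 1)| ≤ |M.whitneyNumber k|) :
    |M.whitneyNumber (k + 2)| ≤ |M.whitneyNumber (k + 1)| := by
  rcases lt_or_ge (M.rk Finset.univ) (k + 2) with hk | hk
  · rw [M.whitneyNumber_eq_zero hk, abs_zero]
    exact abs_nonneg _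
  have : Nonempty E := Finset.univ_nonempty_iff.1 (M.nonempty_of_rk_ne_zero (by omega))
  rw [← Int.cast_le (R := ℝ), cast_abs_whitneyNumber, cast_abs_whitneyNumber] at h ⊢
  have hle : M.reducedWhitney Finset.univ (k + 3) ≤ M.reducedWhitney Finset.univ (k + 1) :=
    le_of_mul_le_sq (M.isFlat_univ.reducedWhitney_pos k.succ_ne_zero (by omega))
      (M.reducedWhitney_univ_nonneg (k + 2)) (by linarith) (M.reducedWhitney_univ_mul_le_sq k)
      (M.reducedWhitney_univ_mul_le_sq (k + 1))
  linarith

theorem exists_abs_whitneyNumber_monotoneOn_antitoneOn (n : ℕ) :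
    ∃ j ≤ n, MonotoneOn (fun k => |M.whitneyNumber k|) (Set.Iic j) ∧
      AntitoneOn (fun k => |M.whitneyNumber k|) (Set.Icc j n) :=
  exists_monotoneOn_antitoneOn (fun _ => M.abs_whitneyNumber_add_two_le) n

end RankFunction

/-! ### Colorings and the cycle matroid -/

/-- The rank function of the matroid represented by the nonzero vectors `v`. -/
noncomputable def RankFunction.ofVectors {E K W : Type*} [DecidableEq E] [Field K] [AddCommGroup W]
    [Module K W] (v : E → W) (hv : ∀ e, v e ≠ 0) : RankFunction E where
  rk S := Module.finrank K (Submodule.span K (v '' S))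
  rk_empty := by rw [Finset.coe_empty, Set.image_empty, Submodule.span_empty, finrank_bot]
  rk_singleton e := by
    rw [Finset.coe_singleton, Set.image_singleton, finrank_span_singleton (hv e)]
  rk_mono S T h := by
    have := FiniteDimensional.span_of_finite K (T.finite_toSet.image v)
    exact Submodule.finrank_mono (Submodule.span_mono (Set.image_mono h))
  rk_union_add_rk_inter_le S T := by
    have := FiniteDimensional.span_of_finite K (S.finite_toSet.image v)
    have := FiniteDimensional.span_of_finite K (T.finite_toSet.image v)
    rw [← Submodule.finrank_sup_add_finrank_inf_eq (Submodule.span K (v '' S)), Finset.coe_union,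
      Set.image_union, Submodule.span_union]
    refine Nat.add_le_add_left (Submodule.finrank_mono (le_inf ?_ ?_)) _
    · exact Submodule.span_mono (Set.image_mono (mod_cast Finset.inter_subset_left))
    · exact Submodule.span_mono (Set.image_mono (mod_cast Finset.inter_subset_right))

section EdgeFunctional

variable {V : Type*} {f : V → ZMod 2}

/-- The functional `f ↦ f a + f b` attached to the edge `s(a, b)`, over the field with two
elements. -/
def edgeFunctional : Sym2 V → Module.Dual (ZMod 2) (V → ZMod 2) :=
  Sym2.lift ⟨fun a b => LinearMap.proj a + LinearMap.proj b, fun _ _ => add_comm _ _⟩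

theorem edgeFunctional_apply_eq_zero {e : Sym2 V} :
    edgeFunctional e f = 0 ↔ (e.map f).IsDiag := by
  induction e with
  | _ a b => exact CharTwo.add_eq_zero

theorem edgeFunctional_ne_zero {e : Sym2 V} (he : ¬e.IsDiag) : edgeFunctional e ≠ 0 := by
  classical
  induction e with
  | _ a b =>
    intro h
    have hab := DFunLike.congr_fun h (Pi.single a 1)
    simp [edgeFunctional, Pi.single_eq_of_ne' he] at hab

end EdgeFunctional

section Graph

variable {V : Type*} (G : SimpleGraph V)

/-- The `ZMod 2`-valued functions that are constant on each edge in `S`. -/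
def constantOnEdges (S : Finset G.edgeSet) : Submodule (ZMod 2) (V → ZMod 2) :=
  (Submodule.span (ZMod 2) ((fun e : G.edgeSet => edgeFunctional e.1) '' S)).dualCoannihilator

variable {G}

theorem mem_constantOnEdges {S : Finset G.edgeSet} {f : V → ZMod 2} :
    f ∈ constantOnEdges G S ↔ ∀ e ∈ S, (e.1.map f).IsDiag := by
  rw [constantOnEdges, ← SetLike.mem_coe, Submodule.coe_dualCoannihilator_span]
  exact Set.forall_mem_image.trans (forall₂_congr fun _ _ => edgeFunctional_apply_eq_zero)

theorem isProper_iff_forall_edge {k : ℕ} {f : V → Fin k} :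
    (∀ a b, G.Adj a b → f a ≠ f b) ↔ ∀ e : G.edgeSet, ¬(e.1.map f).IsDiag := by
  refine ⟨?_, fun h a b hab => h ⟨s(a, b), hab⟩⟩
  rintro h ⟨e, he⟩
  induction e with
  | _ a b => exact h a b he

variable [DecidableEq V]

variable (G) in
/-- The rank function of the cycle matroid of `G`, represented over the field with two elements. -/
noncomputable def cycleMatroid : RankFunction G.edgeSet :=
  .ofVectors (K := ZMod 2) (fun e => edgeFunctional e.1)
    fun e => edgeFunctional_ne_zero (G.not_isDiag_of_mem_edgeSet e.2)

variable [Fintype V]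

theorem rk_add_finrank_constantOnEdges (S : Finset G.edgeSet) :
    (cycleMatroid G).rk S + Module.finrank (ZMod 2) (constantOnEdges G S) = Fintype.card V :=
  (Subspace.finrank_add_finrank_dualCoannihilator_eq _).trans
    (Module.finrank_fintype_fun_eq_card (ZMod 2))

theorem card_monochromatic_on (S : Finset G.edgeSet) (m : ℕ) :
    Nat.card {f : V → Fin (2 ^ m) // ∀ e ∈ S, (e.1.map f).IsDiag} =
      (2 ^ m) ^ (Fintype.card V - (cycleMatroid G).rk S) := by
  let bits : Fin (2 ^ m) ≃ (Fin m → ZMod 2) := Fintype.equivOfCardEq (by simp [ZMod.card])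
  have isDiag_iff (f : V → Fin (2 ^ m)) (e : Sym2 V) :
      (e.map f).IsDiag ↔ ∀ i, (e.map fun v => bits (f v) i).IsDiag := by
    induction e with
    | _ a b => exact bits.injective.eq_iff.symm.trans funext_iff
  let slices : {f : V → Fin (2 ^ m) // ∀ e ∈ S, (e.1.map f).IsDiag} ≃
      (Fin m → constantOnEdges G S) :=
    (((Equiv.refl V).arrowCongr bits).trans (Equiv.piComm _)).subtypeEquiv
      (q := fun g => ∀ i, g i ∈ constantOnEdges G S) (fun f => by
        simp only [isDiag_iff, mem_constantOnEdges]
        exact ⟨fun h i e he => h e he i, fun h e he i => h i e he⟩) |>.trans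
      (Equiv.subtypePiEquivPi)
  rw [← rk_add_finrank_constantOnEdges S, Nat.add_sub_cancel_left, Nat.card_congr slices,
    Nat.card_fun, Module.natCard_eq_pow_finrank (K := ZMod 2), Nat.card_zmod,
    Nat.card_fin, pow_right_comm]

variable [DecidableRel G.Adj]

theorem numColorings_eq_sum (k : ℕ) :
    (G.numColorings k : ℤ) = ∑ S : Finset G.edgeSet,
      (-1) ^ S.card * (Nat.card {f : V → Fin k // ∀ e ∈ S, (e.1.map f).IsDiag} : ℤ) := by
  let monochromatic (e : G.edgeSet) : Finset (V → Fin k) := {f | (e.1.map f).IsDiag}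
  have h := Finset.inclusion_exclusion_card_inf_compl Finset.univ monochromatic
  rw [Finset.powerset_univ] at h
  convert h using 1
  · rw [SimpleGraph.numColorings, Fintype.card_subtype]
    congr 2
    ext f
    simp [monochromatic, isProper_iff_forall_edge, Finset.mem_inf]
  · refine Finset.sum_congr rfl fun S _ => ?_
    rw [Nat.card_eq_fintype_card, Fintype.card_subtype]
    congr 3
    ext f
    simp [monochromatic, Finset.mem_inf]

variable {P : Polynomial ℤ}

theorem eq_sum_of_eval_eq_numColorings (hP : ∀ k : ℕ, P.eval (k : ℤ) = G.numColorings k) :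
    P = ∑ S : Finset G.edgeSet,
      C ((-1) ^ S.card) * X ^ (Fintype.card V - (cycleMatroid G).rk S) := by
  -- With `2 ^ m` colors the colorings constant on given edges form a vector space over `ZMod 2`.
  refine Polynomial.eq_of_infinite_eval_eq _ _
    (Set.infinite_of_injective_forall_mem (f := fun m : ℕ => (2 : ℤ) ^ m)
      (pow_right_injective₀ two_pos (by norm_num)) fun m => ?_)
  have h := hP (2 ^ m)
  rw [numColorings_eq_sum] at h
  simp only [card_monochromatic_on, Nat.cast_pow, Nat.cast_ofNat] at h
  simp [h, Polynomial.eval_finsetSum]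

theorem coeff_eq_whitneyNumber (hP : ∀ k : ℕ, P.eval (k : ℤ) = G.numColorings k) {i : ℕ}
    (hi : i ≤ Fintype.card V) :
    P.coeff (Fintype.card V - i) = (cycleMatroid G).whitneyNumber i := by
  rw [eq_sum_of_eval_eq_numColorings hP, Polynomial.finsetSum_coeff,
    RankFunction.whitneyNumber, Finset.sum_filter]
  refine Finset.sum_congr rfl fun S _ => ?_
  have hS := rk_add_finrank_constantOnEdges S
  rw [Polynomial.coeff_C_mul, Polynomial.coeff_X_pow, mul_ite, mul_one, mul_zero]
  exact if_congr (by omega) rfl rfl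

end Graph

end ChromaticUnimodality

/-- The absolute values of the coefficients of the chromatic polynomial of a finite
simple graph form a unimodal sequence: with `h_i = |c_{n−i}|`, there is an index
`0 ≤ j ≤ n` such that `h_0 ≤ h_1 ≤ … ≤ h_j` and `h_j ≥ h_{j+1} ≥ … ≥ h_n`. -/
theorem chromaticPolynomial_coeff_unimodal {V : Type*} [Fintype V] [DecidableEq V]
    (G : SimpleGraph V) [DecidableRel G.Adj] (P : Polynomial ℤ)
    (hP : ∀ k : ℕ, P.eval (k : ℤ) = G.numColorings k) :
    ∃ j ≤ Fintype.card V,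
      (∀ i₁ i₂, i₁ ≤ i₂ → i₂ ≤ j →
        |P.coeff (Fintype.card V - i₁)| ≤ |P.coeff (Fintype.card V - i₂)|) ∧
      (∀ i₁ i₂, j ≤ i₁ → i₁ ≤ i₂ → i₂ ≤ Fintype.card V →
        |P.coeff (Fintype.card V - i₂)| ≤ |P.coeff (Fintype.card V - i₁)|) := by
  obtain ⟨j, hj, hmono, hanti⟩ := (ChromaticUnimodality.cycleMatroid
    G).exists_abs_whitneyNumber_monotoneOn_antitoneOn (Fintype.card V)
  have hcoeff {i : ℕ} (hi : i ≤ Fintype.card V) :=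
    ChromaticUnimodality.coeff_eq_whitneyNumber hP hi
  refine ⟨j, hj, fun i₁ i₂ h12 h2 => ?_, fun i₁ i₂ h1 h12 h2 => ?_⟩
  · rw [hcoeff ((h12.trans h2).trans hj), hcoeff (h2.trans hj)]
    exact hmono (h12.trans h2) h2 h12
  · rw [hcoeff h2, hcoeff (h12.trans h2)]
    exact hanti ⟨h1, h12.trans h2⟩ ⟨h1.trans h12, h2⟩ h12
end

section
/- Cycle graphs are chromatically unique: for n ≥ 3, if H is a finite simple graph whose chromatic polynomial equals the chromatic polynomial of the cycle graph C_n on n vertices, then H is isomorphic to C_n. -/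
open Polynomial

/-!
By Whitney's expansion `P_G = ∑ (-1) ^ |A| * X ^ c(A)` over the sets `A` of edges, the two leading
coefficients of `P_G` give the numbers of vertices and edges of `G`. Every `c(A)` is at least
`c(G)`, so `0` is a multiple root of `P_G` as soon as `G` is disconnected. If `G` is connected with
at least three vertices and has a leaf `v`, then `P_G = (X - 1) * P_(G - v)`, and `1` is a multiple
root.

A copy of a `d`-regular graph in a connected `d`-regular graph is the whole graph. So a connected
`2`-regular graph is a single cycle and its proper subgraphs are forests, which gives
`P_C = (X - 1) ^ n + (-1) ^ n * (X - 1)`; its roots `0` and `1` are simple. A graph `H` with this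
polynomial is therefore connected of minimum degree at least `2`, with as many edges as vertices,
hence `2`-regular and a cycle.
-/

section

open SimpleGraph Finset

section Forests

variable {V : Type*} {G : SimpleGraph V}

theorem degree_toSimpleGraph (c : G.ConnectedComponent) (v : c) [Fintype (G.neighborSet v)]
    [Fintype (c.toSimpleGraph.neighborSet v)] : c.toSimpleGraph.degree v = G.degree v := by
  rw [← card_neighborSet_eq_degree, ← card_neighborSet_eq_degree]
  exact Fintype.card_congr
    { toFun w := ⟨w.1, w.2⟩
      invFun w := ⟨⟨w, c.mem_supp_of_adj_mem_supp v.2 w.2⟩, w.2⟩ }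

theorem sum_connectedComponent [Fintype V] [Fintype G.ConnectedComponent]
    [∀ c : G.ConnectedComponent, Fintype c] {M : Type*} [AddCommMonoid M] (f : V → M) :
    ∑ c : G.ConnectedComponent, ∑ v : c, f v = ∑ v, f v := by
  classical
  convert Fintype.sum_fiberwise G.connectedComponentMk f <;> rfl

theorem card_connectedComponent_add_card_edgeFinset_of_isAcyclic [Fintype V] [Fintype G.edgeSet]
    (hG : G.IsAcyclic) : Nat.card G.ConnectedComponent + #G.edgeFinset = Fintype.card V := by
  classical
  have hedges : ∑ c : G.ConnectedComponent, #c.toSimpleGraph.edgeFinset = #G.edgeFinset := by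
    apply Nat.eq_of_mul_eq_mul_left two_pos
    calc 2 * ∑ c : G.ConnectedComponent, #c.toSimpleGraph.edgeFinset
        = ∑ c : G.ConnectedComponent, ∑ v : c, G.degree v := by
          simp only [mul_sum, ← sum_degrees_eq_twice_card_edges, degree_toSimpleGraph]
      _ = ∑ v, G.degree v := sum_connectedComponent (G := G) fun v ↦ G.degree v
      _ = 2 * #G.edgeFinset := by convert G.sum_degrees_eq_twice_card_edges
  calc Nat.card G.ConnectedComponent + #G.edgeFinset
      = ∑ c : G.ConnectedComponent, (#c.toSimpleGraph.edgeFinset + 1) := by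
        rw [sum_add_distrib, hedges, ← Fintype.card_eq_sum_ones, Nat.card_eq_fintype_card, add_comm]
    _ = ∑ c : G.ConnectedComponent, ∑ v : c, 1 := sum_congr rfl fun c _ ↦ by
        rw [(hG.isTree_connectedComponent c).card_edgeFinset, ← Fintype.card_eq_sum_ones]
    _ = Fintype.card V := by
        rw [sum_connectedComponent (G := G) fun _ ↦ 1, ← Fintype.card_eq_sum_ones]

end Forests

section SpanningSubgraphs

variable {V : Type*} {G : SimpleGraph V} {A B : Finset (Sym2 V)}

/-- The number `c(A)` of connected components of the spanning subgraph with edge set `A`. -/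
noncomputable def numComponents (A : Finset (Sym2 V)) : ℕ :=
  Nat.card (fromEdgeSet (A : Set (Sym2 V))).ConnectedComponent

theorem numComponents_edgeFinset [Fintype G.edgeSet] :
    numComponents G.edgeFinset = Nat.card G.ConnectedComponent := by
  rw [numComponents, coe_edgeFinset, fromEdgeSet_edgeSet]

theorem numComponents_le_card [Finite V] : numComponents A ≤ Nat.card V :=
  Nat.card_le_card_of_surjective (fromEdgeSet (A : Set (Sym2 V))).connectedComponentMk
    Quot.mk_surjective

theorem numComponents_anti [Finite V] (h : A ⊆ B) : numComponents B ≤ numComponents A :=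
  ConnectedComponent.card_le_card_of_le (fromEdgeSet_mono (mod_cast h))

theorem isAcyclic_fromEdgeSet_of_card_lt_three (hA : #A < 3) :
    (fromEdgeSet (A : Set (Sym2 V))).IsAcyclic := by
  classical
  intro v p hp
  have hsub : p.edges.toFinset ⊆ A := fun e he ↦ by
    have := p.edges_subset_edgeSet (List.mem_toFinset.1 he)
    rw [edgeSet_fromEdgeSet] at this
    exact this.1
  have hle := card_le_card hsub
  rw [List.toFinset_card_of_nodup hp.edges_nodup, Walk.length_edges] at hle
  exact absurd (hp.three_le_length.trans hle) hA.not_ge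

theorem edgeFinset_fromEdgeSet_of_subset [Fintype G.edgeSet]
    [Fintype (fromEdgeSet (A : Set (Sym2 V))).edgeSet] (hA : A ⊆ G.edgeFinset) :
    (fromEdgeSet (A : Set (Sym2 V))).edgeFinset = A := by
  ext e
  have h : e ∈ A → ¬ e.IsDiag := fun he ↦ G.not_isDiag_of_mem_edgeSet (mem_edgeFinset.1 (hA he))
  simpa [mem_edgeFinset, edgeSet_fromEdgeSet] using h

theorem numComponents_add_card_of_isAcyclic [Fintype V] [Fintype G.edgeSet]
    (hA : A ⊆ G.edgeFinset) (hacyc : (fromEdgeSet (A : Set (Sym2 V))).IsAcyclic) :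
    numComponents A + #A = Fintype.card V := by
  classical
  rw [← card_connectedComponent_add_card_edgeFinset_of_isAcyclic hacyc,
    edgeFinset_fromEdgeSet_of_subset hA, numComponents]

theorem numComponents_add_two_le [Fintype V] [Fintype G.edgeSet] (hA : A ⊆ G.edgeFinset)
    (hcard : 2 ≤ #A) : numComponents A + 2 ≤ Fintype.card V := by
  obtain ⟨B, hBA, hB⟩ := exists_subset_card_eq hcard
  rw [← numComponents_add_card_of_isAcyclic (hBA.trans hA)
    (isAcyclic_fromEdgeSet_of_card_lt_three (by omega)), hB]
  gcongr
  exact numComponents_anti hBA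

theorem numComponents_add_eq_iff [Fintype V] [Fintype G.edgeSet] (hA : A ⊆ G.edgeFinset) {j : ℕ}
    (hj : j < 2) : numComponents A + j = Fintype.card V ↔ #A = j := by
  obtain hcard | hcard := lt_or_ge #A 2
  · have := numComponents_add_card_of_isAcyclic hA
      (isAcyclic_fromEdgeSet_of_card_lt_three (by omega))
    omega
  · have := numComponents_add_two_le hA hcard
    omega

end SpanningSubgraphs

section Whitney

variable {V : Type*} {G : SimpleGraph V}

theorem eq_of_reachable {α : Type*} {f : V → α} (hf : ∀ a b, G.Adj a b → f a = f b) {a b : V}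
    (h : G.Reachable a b) : f a = f b := by
  rw [reachable_iff_reflTransGen] at h
  simpa only [Relation.reflTransGen_eq_self] using h.lift f hf

theorem card_forall_adj_eq [Finite V] (G : SimpleGraph V) (α : Type*) :
    Nat.card {f : V → α // ∀ a b, G.Adj a b → f a = f b} =
      Nat.card α ^ Nat.card G.ConnectedComponent := by
  rw [← Nat.card_fun]
  exact Nat.card_congr
    { toFun f := ConnectedComponent.lift f.1 fun _ _ p _ ↦ eq_of_reachable f.2 p.reachable
      invFun g := ⟨g ∘ G.connectedComponentMk,
        fun _ _ h ↦ congrArg g (ConnectedComponent.connectedComponentMk_eq_of_adj h)⟩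
      left_inv _ := rfl
      right_inv g := funext (ConnectedComponent.ind fun _ ↦ rfl) }

/-- The chromatic polynomial of `G`, defined by Whitney's expansion
`∑ (-1) ^ |A| * X ^ c(A)` over the sets `A` of edges, where `c(A)` is the number of connected
components of the spanning subgraph with edge set `A`. -/
noncomputable def chromaticPolynomial (G : SimpleGraph V) [Fintype G.edgeSet] : ℤ[X] :=
  ∑ A ∈ G.edgeFinset.powerset, (-1) ^ #A * X ^ numComponents A

theorem eval_chromaticPolynomial [Fintype V] [DecidableEq V] [DecidableRel G.Adj] (k : ℕ) :
    (chromaticPolynomial G).eval (k : ℤ) = G.numColorings k := by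
  let monochromatic (e : Sym2 V) : Finset (V → Fin k) := {f | (e.map f).IsDiag}
  have hproper : G.numColorings k = #(G.edgeFinset.inf fun e ↦ (monochromatic e)ᶜ) := by
    rw [numColorings, Fintype.card_subtype]
    congr 1
    ext f
    simp [monochromatic, Finset.mem_inf, Sym2.forall]
  have hconst (A : Finset (Sym2 V)) : #(A.inf monochromatic) = k ^ numComponents A := by
    have := card_forall_adj_eq (fromEdgeSet (A : Set (Sym2 V))) (Fin k)
    rw [Nat.card_fin, Nat.card_eq_fintype_card, Fintype.card_subtype] at this
    rw [numComponents, ← this]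
    congr 1
    ext f
    simp only [monochromatic, Finset.mem_inf, Sym2.forall, mem_filter_univ, Sym2.map_mk,
      Sym2.mk_isDiag_iff, fromEdgeSet_adj]
    grind
  rw [hproper, inclusion_exclusion_card_inf_compl, chromaticPolynomial, eval_finsetSum]
  simp [hconst]

theorem eq_chromaticPolynomial [Fintype V] [DecidableEq V] [DecidableRel G.Adj] {P : ℤ[X]}
    (h : ∀ k : ℕ, P.eval (k : ℤ) = G.numColorings k) : P = chromaticPolynomial G :=
  eq_of_infinite_eval_eq _ _ <| (Set.infinite_range_of_injective Nat.cast_injective).mono <| by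
    rintro _ ⟨k, rfl⟩
    exact (h k).trans (eval_chromaticPolynomial k).symm

end Whitney

section Coefficients

variable {V : Type*} {G : SimpleGraph V}

theorem coeff_chromaticPolynomial [Fintype G.edgeSet] (i : ℕ) :
    (chromaticPolynomial G).coeff i =
      ∑ A ∈ G.edgeFinset.powerset with numComponents A = i, (-1) ^ #A := by
  have hC (A : Finset (Sym2 V)) : ((-1) ^ #A : ℤ[X]) = C ((-1) ^ #A) := by simp
  simp only [chromaticPolynomial, hC, finsetSum_coeff, coeff_C_mul_X_pow, sum_filter, eq_comm]

theorem coeff_card_sub_chromaticPolynomial [Fintype V] [Fintype G.edgeSet] {j : ℕ} (hj : j < 2)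
    (hjV : j ≤ Fintype.card V) : (chromaticPolynomial G).coeff (Fintype.card V - j) =
      (-1) ^ j * (#G.edgeFinset).choose j := by
  have hfilter : {A ∈ G.edgeFinset.powerset | numComponents A = Fintype.card V - j} =
      powersetCard j G.edgeFinset := by
    ext A
    rw [mem_filter, mem_powerset, mem_powersetCard]
    refine and_congr_right fun hA ↦ ?_
    rw [← numComponents_add_eq_iff hA hj]
    omega
  rw [coeff_chromaticPolynomial, hfilter,
    sum_congr rfl fun A hA ↦ by rw [(mem_powersetCard.1 hA).2], sum_const, card_powersetCard,
    nsmul_eq_mul, mul_comm]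

theorem natDegree_chromaticPolynomial [Fintype V] [Fintype G.edgeSet] :
    (chromaticPolynomial G).natDegree = Fintype.card V := by
  refine natDegree_eq_of_le_of_coeff_ne_zero (natDegree_sum_le_of_forall_le _ _ fun A _ ↦ ?_) ?_
  · rw [← Nat.card_eq_fintype_card]
    grw [natDegree_mul_le, natDegree_X_pow, numComponents_le_card]
    simp
  · have := coeff_card_sub_chromaticPolynomial (G := G) two_pos (Nat.zero_le _)
    simp_all

theorem nextCoeff_chromaticPolynomial [Finite V] [Nonempty V] [Fintype G.edgeSet] :
    (chromaticPolynomial G).nextCoeff = -#G.edgeFinset := by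
  have := Fintype.ofFinite V
  have hpos : 0 < Fintype.card V := Fintype.card_pos
  rw [nextCoeff_of_natDegree_pos (by rwa [natDegree_chromaticPolynomial]),
    natDegree_chromaticPolynomial, coeff_card_sub_chromaticPolynomial one_lt_two hpos]
  simp

theorem card_eq_of_chromaticPolynomial_eq [Fintype V] [Fintype G.edgeSet] {W : Type*} [Fintype W]
    {H : SimpleGraph W} [Fintype H.edgeSet] (h : chromaticPolynomial H = chromaticPolynomial G) :
    Fintype.card W = Fintype.card V := by
  rw [← natDegree_chromaticPolynomial (G := H), h, natDegree_chromaticPolynomial]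

theorem card_edgeFinset_eq_of_chromaticPolynomial_eq [Finite V] [Nonempty V] [Fintype G.edgeSet]
    {W : Type*} [Finite W] [Nonempty W] {H : SimpleGraph W} [Fintype H.edgeSet]
    (h : chromaticPolynomial H = chromaticPolynomial G) : #H.edgeFinset = #G.edgeFinset := by
  rw [← Nat.cast_inj (R := ℤ), ← neg_inj, ← nextCoeff_chromaticPolynomial, h,
    nextCoeff_chromaticPolynomial]

theorem X_pow_card_connectedComponent_dvd_chromaticPolynomial [Finite V] [Fintype G.edgeSet] :
    X ^ Nat.card G.ConnectedComponent ∣ chromaticPolynomial G :=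
  dvd_sum fun A hA ↦ Dvd.dvd.mul_left (pow_dvd_pow _ <| by
    rw [← numComponents_edgeFinset]
    exact numComponents_anti (mem_powerset.1 hA)) _

theorem X_sq_dvd_chromaticPolynomial [Finite V] [Nonempty V] [Fintype G.edgeSet]
    (hG : ¬ G.Connected) : X ^ 2 ∣ chromaticPolynomial G := by
  refine (pow_dvd_pow X ?_).trans X_pow_card_connectedComponent_dvd_chromaticPolynomial
  rw [Nat.succ_le_iff, Finite.one_lt_card_iff_nontrivial]
  by_contra h
  rw [not_nontrivial_iff_subsingleton] at h
  exact hG ⟨fun u v ↦ ConnectedComponent.exact (Subsingleton.elim _ _)⟩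

end Coefficients

section Leaf

variable {V : Type*} {G : SimpleGraph V}

/-- A proper coloring of a graph with a leaf `v` attached to `u` is a proper coloring of the graph
without `v` together with a color for `v` other than that of `u`. -/
def coloringsEquivOfLeaf [DecidableEq V] {v : V} {u : ({v}ᶜ : Set V)}
    (hv : ∀ b, G.Adj v b ↔ b = u) (α : Type*) :
    {f : V → α // ∀ a b, G.Adj a b → f a ≠ f b} ≃
      Σ g : {g : ({v}ᶜ : Set V) → α // ∀ a b, (G.induce {v}ᶜ).Adj a b → g a ≠ g b},
        {c // c ≠ g.1 u} where
  toFun f := ⟨⟨fun a ↦ f.1 a, fun _ _ ↦ f.2 _ _⟩, ⟨f.1 v, f.2 v u ((hv u).2 rfl)⟩⟩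
  invFun p := ⟨fun a ↦ if h : a = v then p.2 else p.1.1 ⟨a, h⟩, fun a b hab ↦ by
    have hg a b ha hb : G.Adj a b → p.1.1 ⟨a, ha⟩ ≠ p.1.1 ⟨b, hb⟩ := p.1.2 ⟨a, ha⟩ ⟨b, hb⟩
    have : p.2.1 ≠ p.1.1 u := p.2.2
    grind [G.adj_comm]⟩
  left_inv f := by ext; simp +contextual
  right_inv p := by
    ext x
    · exact dif_neg x.2
    · simp

theorem numColorings_of_degree_eq_one [Fintype V] [DecidableEq V] [DecidableRel G.Adj] {v : V}
    (hv : G.degree v = 1) (k : ℕ) :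
    (G.numColorings k : ℤ) = (k - 1) * (G.induce {v}ᶜ).numColorings k := by
  obtain ⟨u, hu⟩ := card_eq_one.1 hv
  have hadj (b : V) : G.Adj v b ↔ b = u := by rw [← mem_neighborFinset, hu, mem_singleton]
  have huv : u ∈ ({v}ᶜ : Set V) := ((hadj u).2 rfl).ne'
  have hcard (x : Fin k) : (Fintype.card {c // c ≠ x} : ℤ) = k - 1 := by
    rw [Fintype.card_subtype_compl, Fintype.card_fin, Fintype.card_subtype_eq,
      Nat.cast_sub x.pos, Nat.cast_one]
  rw [numColorings, Fintype.card_congr (coloringsEquivOfLeaf (u := ⟨u, huv⟩) hadj _),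
    Fintype.card_sigma, Nat.cast_sum, sum_congr rfl fun g _ ↦ hcard _, sum_const, nsmul_eq_mul,
    mul_comm, numColorings, Finset.card_univ]

theorem chromaticPolynomial_of_degree_eq_one [Fintype V] [DecidableEq V] [DecidableRel G.Adj]
    {v : V} (hv : G.degree v = 1) :
    chromaticPolynomial G = (X - 1) * chromaticPolynomial (G.induce {v}ᶜ) :=
  .symm <| eq_chromaticPolynomial fun k ↦ by
    rw [numColorings_of_degree_eq_one hv, eval_mul, eval_chromaticPolynomial, eval_sub, eval_X,
      eval_one]

theorem X_sub_one_dvd_chromaticPolynomial [Fintype G.edgeSet] {u v : V} (h : G.Adj u v) :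
    X - 1 ∣ chromaticPolynomial G := by
  have hne : G.edgeFinset.Nonempty := ⟨s(u, v), mem_edgeFinset.2 h⟩
  rw [← C_1, dvd_iff_isRoot, IsRoot, chromaticPolynomial, eval_finsetSum]
  simpa using sum_powerset_neg_one_pow_card_of_nonempty hne

theorem X_sub_one_sq_dvd_chromaticPolynomial [Fintype V] [DecidableRel G.Adj]
    (hV : 3 ≤ Fintype.card V) (hconn : G.Connected) {v : V} (hv : G.degree v = 1) :
    (X - 1) ^ 2 ∣ chromaticPolynomial G := by
  classical
  have : Nontrivial ({v}ᶜ : Set V) := by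
    rw [← Fintype.one_lt_card_iff_nontrivial, Fintype.card_compl_set, Set.card_singleton]
    omega
  have hconn' := hconn.induce_compl_singleton_of_degree_eq_one hv
  obtain ⟨u⟩ := hconn'.nonempty
  obtain ⟨w, huw⟩ := hconn'.preconnected.exists_adj_of_nontrivial u
  rw [chromaticPolynomial_of_degree_eq_one hv, sq]
  exact mul_dvd_mul_left _ (X_sub_one_dvd_chromaticPolynomial huw)

end Leaf

section RegularCopies

variable {V W : Type*} {G : SimpleGraph V} {H : SimpleGraph W} [G.LocallyFinite] [H.LocallyFinite]
  {d : ℕ}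

theorem exists_adj_of_copy_adj (f : Copy G H) (hG : G.IsRegularOfDegree d)
    (hH : H.IsRegularOfDegree d) {v : V} {w : W} (h : H.Adj (f v) w) :
    ∃ u, G.Adj v u ∧ f u = w := by
  have hcard : Fintype.card (G.neighborSet v) = Fintype.card (H.neighborSet (f v)) := by
    rw [card_neighborSet_eq_degree, card_neighborSet_eq_degree, hG.degree_eq, hH.degree_eq]
  obtain ⟨⟨u, hu⟩, huw⟩ := (f.mapNeighborSet v).injective.bijective_of_nat_card_le
    (by simp [Nat.card_eq_fintype_card, hcard]) |>.2 ⟨w, h⟩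
  exact ⟨u, hu, congrArg Subtype.val huw⟩

theorem exists_iso_eq_copy [Nonempty V] (f : Copy G H) (hG : G.IsRegularOfDegree d)
    (hH : H.IsRegularOfDegree d) (hconn : H.Connected) : ∃ e : G ≃g H, ⇑e = f := by
  have hsurj : Function.Surjective f := fun w ↦ by
    obtain ⟨v₀⟩ := ‹Nonempty V›
    induction (reachable_iff_reflTransGen (f v₀) w).1 (hconn.preconnected _ _) with
    | refl => exact ⟨v₀, rfl⟩
    | tail _ hadj ih =>
      obtain ⟨v, rfl⟩ := ih
      obtain ⟨u, -, hu⟩ := exists_adj_of_copy_adj f hG hH hadj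
      exact ⟨u, hu⟩
  refine ⟨⟨.ofBijective f ⟨f.injective, hsurj⟩, fun {a b} ↦ ⟨fun h ↦ ?_, f.toHom.map_adj⟩⟩, rfl⟩
  obtain ⟨u, hu, hub⟩ := exists_adj_of_copy_adj f hG hH h
  rwa [← f.injective hub]

theorem isRegularOfDegree_of_le_degree [Fintype V] [Fintype G.edgeSet] (hle : ∀ v, d ≤ G.degree v)
    (hcard : 2 * #G.edgeFinset = d * Fintype.card V) : G.IsRegularOfDegree d := by
  classical
  have hsum : ∑ _v : V, d = ∑ v, G.degree v := by
    rw [sum_const, smul_eq_mul, Finset.card_univ, mul_comm, ← hcard]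
    convert G.sum_degrees_eq_twice_card_edges.symm
  exact fun v ↦ ((sum_eq_sum_iff_of_le fun v _ ↦ hle v).1 hsum v (mem_univ v)).symm

theorem two_mul_card_edgeFinset_of_isRegularOfDegree [Fintype V] [Fintype G.edgeSet]
    (hG : G.IsRegularOfDegree d) : 2 * #G.edgeFinset = d * Fintype.card V := by
  classical
  calc 2 * #G.edgeFinset
      = ∑ v, G.degree v := by convert G.sum_degrees_eq_twice_card_edges.symm
    _ = ∑ _v : V, d := sum_congr rfl fun v _ ↦ hG v
    _ = d * Fintype.card V := by rw [sum_const, Finset.card_univ, smul_eq_mul, mul_comm]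

end RegularCopies

section TwoRegular

variable {V : Type*} {G F : SimpleGraph V} [G.LocallyFinite]

theorem cycleGraph_isRegularOfDegree_two {n : ℕ} (hn : 3 ≤ n) :
    (cycleGraph n).IsRegularOfDegree 2 := by
  obtain ⟨m, rfl⟩ := Nat.exists_eq_add_of_le' hn
  exact fun _ ↦ cycleGraph_degree_three_le

theorem exists_iso_eq_copy_cycleGraph (hconn : G.Connected) (hG : G.IsRegularOfDegree 2)
    {n : ℕ} (hn : 3 ≤ n) (f : Copy (cycleGraph n) G) : ∃ e : cycleGraph n ≃g G, ⇑e = f :=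
  have : NeZero n := ⟨by omega⟩
  exists_iso_eq_copy f (cycleGraph_isRegularOfDegree_two hn) hG hconn

theorem not_isAcyclic_of_isRegularOfDegree_two [Finite V] (hconn : G.Connected)
    (hG : G.IsRegularOfDegree 2) : ¬ G.IsAcyclic := fun hacyc ↦ by
  have := Fintype.ofFinite V
  have := Fintype.ofFinite G.edgeSet
  have htree := IsTree.card_edgeFinset ⟨hconn, hacyc⟩
  have := two_mul_card_edgeFinset_of_isRegularOfDegree hG
  omega

theorem isAcyclic_of_lt_of_isRegularOfDegree_two (hconn : G.Connected)
    (hG : G.IsRegularOfDegree 2) (hF : F < G) : F.IsAcyclic := by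
  refine isAcyclic_iff_free_cycleGraph.2 fun n hn ⟨f⟩ ↦ hF.not_ge fun a b hab ↦ ?_
  obtain ⟨e, he⟩ := exists_iso_eq_copy_cycleGraph hconn hG hn ((Copy.ofLE F G hF.le).comp f)
  have hadj := f.toHom.map_adj (e.symm.map_adj_iff.2 hab)
  have hf (x) : f (e.symm x) = x := by simpa using (congrFun he (e.symm x)).symm
  simpa [hf] using hadj

theorem nonempty_cycleGraph_iso_of_isRegularOfDegree_two [Fintype V] (hconn : G.Connected)
    (hG : G.IsRegularOfDegree 2) : Nonempty (cycleGraph (Fintype.card V) ≃g G) := by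
  have hcycle := isAcyclic_iff_free_cycleGraph.not.1
    (not_isAcyclic_of_isRegularOfDegree_two hconn hG)
  push Not at hcycle
  obtain ⟨n, hn, ⟨f⟩⟩ := hcycle
  obtain ⟨e, -⟩ := exists_iso_eq_copy_cycleGraph hconn hG hn f
  rw [← Fintype.card_congr e.toEquiv, Fintype.card_fin]
  exact ⟨e⟩

theorem nonempty_iso_of_isRegularOfDegree_two [Fintype V] {W : Type*} [Fintype W]
    {H : SimpleGraph W} [H.LocallyFinite] (hG : G.Connected) (hG' : G.IsRegularOfDegree 2)
    (hH : H.Connected) (hH' : H.IsRegularOfDegree 2) (hcard : Fintype.card V = Fintype.card W) :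
    Nonempty (G ≃g H) := by
  obtain ⟨e⟩ := nonempty_cycleGraph_iso_of_isRegularOfDegree_two hG hG'
  obtain ⟨e'⟩ := nonempty_cycleGraph_iso_of_isRegularOfDegree_two hH hH'
  exact ⟨e.symm.trans (hcard ▸ e')⟩

end TwoRegular

section CyclePolynomial

variable {V : Type*} [Fintype V] {G : SimpleGraph V} [Fintype G.edgeSet] [G.LocallyFinite]

theorem numComponents_add_card_of_ssubset (hconn : G.Connected) (hG : G.IsRegularOfDegree 2)
    {A : Finset (Sym2 V)} (hA : A ⊂ G.edgeFinset) : numComponents A + #A = Fintype.card V := by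
  classical
  refine numComponents_add_card_of_isAcyclic hA.subset
    (isAcyclic_of_lt_of_isRegularOfDegree_two hconn hG ?_)
  rwa [← edgeFinset_ssubset_edgeFinset, edgeFinset_fromEdgeSet_of_subset hA.subset]

theorem chromaticPolynomial_of_isRegularOfDegree_two (hconn : G.Connected)
    (hG : G.IsRegularOfDegree 2) : chromaticPolynomial G =
      (X - 1) ^ Fintype.card V + (-1) ^ Fintype.card V * (X - 1) := by
  have hcard : #G.edgeFinset = Fintype.card V := by
    have := two_mul_card_edgeFinset_of_isRegularOfDegree hG
    omega
  have hone : numComponents G.edgeFinset = 1 := by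
    have := hconn.nonempty
    have := hconn.preconnected.subsingleton_connectedComponent
    rw [numComponents_edgeFinset, Nat.card_unique]
  rw [← sub_eq_iff_eq_add', sub_eq_neg_add X, ← hcard, ← sum_pow_mul_eq_add_pow,
    chromaticPolynomial, ← sum_sub_distrib, sum_eq_single_of_mem _ (mem_powerset_self _), hone]
  · rw [Nat.sub_self]
    ring
  · intro A hA hne
    have := numComponents_add_card_of_ssubset hconn hG ((mem_powerset.1 hA).ssubset_of_ne hne)
    rw [hcard, ← this, Nat.add_sub_cancel, sub_self]

theorem eval_derivative_eq_zero_of_sq_dvd {R : Type*} [CommRing R] {P : R[X]} {a : R}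
    (h : (X - C a) ^ 2 ∣ P) : (derivative P).eval a = 0 := by
  have := pow_sub_one_dvd_derivative_of_pow_dvd h
  rwa [pow_one, dvd_iff_isRoot] at this

theorem not_X_sq_dvd_X_sub_one_pow_add {R : Type*} [CommRing R] [CharZero R] {n : ℕ}
    (hn : 2 ≤ n) : ¬ X ^ 2 ∣ ((X - 1) ^ n + (-1) ^ n * (X - 1) : R[X]) := fun h ↦ by
  obtain ⟨m, rfl⟩ := Nat.exists_eq_add_of_le' hn
  have hderiv : (m + 2) * (-1) ^ (m + 1) + (-1) ^ (m + 2) = (0 : R) := by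
    rw [show (X ^ 2 : R[X]) = (X - C 0) ^ 2 by rw [C_0, sub_zero]] at h
    simpa [derivative_pow] using eval_derivative_eq_zero_of_sq_dvd h
  have hprod : (-1) ^ (m + 1) * ((m + 1 : ℕ) : R) = 0 := by
    rw [← hderiv]
    push_cast
    ring
  rw [(isUnit_one.neg.pow _).mul_right_eq_zero] at hprod
  exact Nat.cast_ne_zero.2 m.succ_ne_zero hprod

theorem not_X_sub_one_sq_dvd_X_sub_one_pow_add {R : Type*} [CommRing R] [Nontrivial R] {n : ℕ}
    (hn : 2 ≤ n) : ¬ (X - 1) ^ 2 ∣ ((X - 1) ^ n + (-1) ^ n * (X - 1) : R[X]) := fun h ↦ by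
  rw [dvd_add_right (pow_dvd_pow _ hn), IsUnit.dvd_mul_left (isUnit_one.neg.pow n), ← C_1] at h
  simpa using eval_derivative_eq_zero_of_sq_dvd h

end CyclePolynomial

end

/-- Cycle graphs are chromatically unique: for `n ≥ 3`, if `H` is a finite simple graph
whose chromatic polynomial equals the chromatic polynomial of a cycle graph `C` on `n`
vertices (a connected graph in which every vertex has degree `2`), then `H ≃g C`. -/
theorem cycleGraph_chromatically_unique {V W : Type*} [Fintype V] [DecidableEq V]
    [Fintype W] [DecidableEq W]
    (C : SimpleGraph V) [DecidableRel C.Adj] (H : SimpleGraph W) [DecidableRel H.Adj]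
    (hn : 3 ≤ Fintype.card V)
    (hC : C.Connected ∧ ∀ v, C.degree v = 2)
    (hPoly : ∀ k : ℕ, H.numColorings k = C.numColorings k) :
    Nonempty (H ≃g C) := by
  obtain ⟨hconn, hreg⟩ := hC
  have := hconn.nonempty
  have hP : chromaticPolynomial H = chromaticPolynomial C :=
    eq_chromaticPolynomial fun k ↦ by rw [eval_chromaticPolynomial, hPoly]
  have hPH := hP.trans (chromaticPolynomial_of_isRegularOfDegree_two hconn hreg)
  have hcardV := card_eq_of_chromaticPolynomial_eq hP
  have : Nontrivial W := Fintype.one_lt_card_iff_nontrivial.1 (by omega)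
  have hcardE := card_edgeFinset_eq_of_chromaticPolynomial_eq hP
  have hHconn : H.Connected := by
    by_contra hdisc
    exact not_X_sq_dvd_X_sub_one_pow_add (by omega) (hPH ▸ X_sq_dvd_chromaticPolynomial hdisc)
  have hdeg (w : W) : 2 ≤ H.degree w := by
    have hleaf : H.degree w ≠ 1 := fun hleaf ↦ not_X_sub_one_sq_dvd_X_sub_one_pow_add (by omega)
      (hPH ▸ X_sub_one_sq_dvd_chromaticPolynomial (by omega) hHconn hleaf)
    have hpos := hHconn.preconnected.degree_pos_of_nontrivial w
    omega
  have hHreg : H.IsRegularOfDegree 2 := isRegularOfDegree_of_le_degree hdeg <| by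
    rw [hcardE, hcardV, two_mul_card_edgeFinset_of_isRegularOfDegree hreg]
  exact nonempty_iso_of_isRegularOfDegree_two hHconn hHreg hconn hreg hcardV
end

section
/- Let G and H be finite connected simple graphs with equal chromatic polynomials, P_G = P_H. Then G and H have the same number of vertices, the same number of edges, and the same number of triangles (3-element vertex subsets that are pairwise adjacent); moreover, G contains a cycle if and only if H does, and in that case G and H have the same girth. -/
open Polynomial

/-!
By the Whitney expansion `P_G = ∑ (-1) ^ |S| x ^ c(S)`, where `S` runs over the sets of edges of
`G` and `c(S)` is the number of components of `(V, S)`, the coefficient of `x ^ (n - k)` in `P_G`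
collects the sets of rank `k`. For `k` less than the girth these are all `k`-sets of edges together
with the cycles of length `k + 1`: two edges that each complete the same `k`-set to a cycle of
length `k + 1` have the same endpoints. So with `m` edges the coefficient is
`(-1) ^ k (m.choose k - c)`, `c` being the number of cycles of length `k + 1`. The degree of `P_G`
gives the number of vertices, and `k = 1`, `k = 2` and `k + 1 = girth` give the edges, the
triangles and the girth.
-/

namespace ChromaticPolynomial

open SimpleGraph Finset

section Rank

variable {V : Type*} {F G : SimpleGraph V}

lemma ncard_edgeSet_add_card_connectedComponent_of_isAcyclic [Finite V] (hG : G.IsAcyclic) :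
    G.edgeSet.ncard + Nat.card G.ConnectedComponent = Nat.card V := by
  classical
  have := Fintype.ofFinite V
  have := Fintype.ofFinite G.ConnectedComponent
  have sum_degree_add_two (c : G.ConnectedComponent) :
      ∑ v with G.connectedComponentMk v = c, G.degree v + 2 =
        2 * #{v | G.connectedComponentMk v = c} := by
    have mem_fiber_iff (v : V) : v ∈ ({v | G.connectedComponentMk v = c} : Finset V) ↔ v ∈ c.supp :=
      mem_filter_univ v
    have htree : (G.induce c.supp).IsTree := hG.isTree_connectedComponent c
    have hdeg (v : c.supp) : (G.induce c.supp).degree v = G.degree v :=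
      degree_induce_of_neighborSet_subset fun w hw => c.mem_supp_of_adj_mem_supp v.2 hw
    rw [sum_subtype _ mem_fiber_iff, ← Fintype.card_of_subtype _ mem_fiber_iff,
      ← Fintype.sum_congr _ _ hdeg, sum_degrees_eq_twice_card_edges, ← htree.card_edgeFinset,
      mul_add_one]
  have sum_degree := sum_fiberwise univ G.connectedComponentMk fun v => G.degree v
  have sum_card := card_eq_sum_card_fiberwise (s := univ) fun v _ =>
    mem_univ (G.connectedComponentMk v)
  have hsum := Fintype.sum_congr _ _ sum_degree_add_two
  rw [sum_add_distrib, sum_degree, sum_degrees_eq_twice_card_edges, sum_const,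
    smul_eq_mul, ← mul_sum, ← sum_card, card_univ, card_univ] at hsum
  rw [← coe_edgeFinset, Set.ncard_coe_finset, Nat.card_eq_fintype_card, Nat.card_eq_fintype_card]
  lia

/-- The rank of a finite graph, i.e. the number of edges of any of its spanning forests. The
subtraction does not truncate, as there are at most as many components as vertices. -/
noncomputable def rank (G : SimpleGraph V) : ℕ :=
  Nat.card V - Nat.card G.ConnectedComponent

lemma rank_eq_of_reachable_eq (h : F.Reachable = G.Reachable) : rank F = rank G := by
  simp only [rank, ConnectedComponent, h]

variable [Finite V]

lemma card_connectedComponent_add_rank (G : SimpleGraph V) :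
    Nat.card G.ConnectedComponent + rank G = Nat.card V :=
  Nat.add_sub_cancel' <| Nat.card_le_card_of_surjective G.connectedComponentMk Quot.mk_surjective

lemma rank_mono : Monotone (rank : SimpleGraph V → ℕ) := fun _ _ h =>
  Nat.sub_le_sub_left (ConnectedComponent.card_le_card_of_le h) _

lemma rank_eq_ncard_edgeSet_of_isAcyclic (hG : G.IsAcyclic) : rank G = G.edgeSet.ncard := by
  rw [rank, ← ncard_edgeSet_add_card_connectedComponent_of_isAcyclic hG, Nat.add_sub_cancel]

lemma rank_le_ncard_edgeSet (G : SimpleGraph V) : rank G ≤ G.edgeSet.ncard := by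
  obtain ⟨F, hFG, hF, hreach⟩ := G.exists_isAcyclic_reachable_eq_le
  rw [← rank_eq_of_reachable_eq hreach, rank_eq_ncard_edgeSet_of_isAcyclic hF]
  exact Set.ncard_le_ncard (edgeSet_mono hFG)

lemma isAcyclic_iff_rank_eq_ncard_edgeSet : G.IsAcyclic ↔ rank G = G.edgeSet.ncard := by
  refine ⟨rank_eq_ncard_edgeSet_of_isAcyclic, fun h => ?_⟩
  obtain ⟨F, hFG, hF, hreach⟩ := G.exists_isAcyclic_reachable_eq_le
  rw [← rank_eq_of_reachable_eq hreach, rank_eq_ncard_edgeSet_of_isAcyclic hF] at h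
  have hedges : F.edgeSet = G.edgeSet :=
    Set.eq_of_subset_of_ncard_le (edgeSet_mono hFG) h.ge
  exact edgeSet_injective hedges ▸ hF

end Rank

section EdgeGraph

variable {V : Type*} {G : SimpleGraph V} {S T : Finset (Sym2 V)}

/-- The graph on all of `V` whose edges are the non-diagonal elements of `S`. -/
abbrev edgeGraph (S : Finset (Sym2 V)) : SimpleGraph V := fromEdgeSet (S : Set (Sym2 V))

lemma edgeGraph_mono (h : S ⊆ T) : edgeGraph S ≤ edgeGraph T :=
  fromEdgeSet_mono (coe_subset.2 h)

lemma edgeSet_edgeGraph_subset : (edgeGraph S).edgeSet ⊆ S := by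
  rw [edgeSet_fromEdgeSet]
  exact Set.sdiff_subset

lemma edgeGraph_le (hS : (S : Set (Sym2 V)) ⊆ G.edgeSet) : edgeGraph S ≤ G :=
  (fromEdgeSet_mono hS).trans_eq (fromEdgeSet_edgeSet G)

lemma edgeSet_edgeGraph (hS : (S : Set (Sym2 V)) ⊆ G.edgeSet) : (edgeGraph S).edgeSet = S := by
  rw [edgeSet_fromEdgeSet, sdiff_eq_left, Set.disjoint_left]
  exact fun _ he => G.not_isDiag_of_mem_edgeSet (hS he)

lemma rank_edgeGraph_le_card [Finite V] (S : Finset (Sym2 V)) : rank (edgeGraph S) ≤ #S :=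
  (rank_le_ncard_edgeSet _).trans <|
    (Set.ncard_le_ncard edgeSet_edgeGraph_subset).trans_eq (Set.ncard_coe_finset S)

lemma isAcyclic_edgeGraph_iff [Finite V] (hS : (S : Set (Sym2 V)) ⊆ G.edgeSet) :
    (edgeGraph S).IsAcyclic ↔ rank (edgeGraph S) = #S := by
  rw [isAcyclic_iff_rank_eq_ncard_edgeSet, edgeSet_edgeGraph hS, Set.ncard_coe_finset]

lemma lt_egirth_of_lt_three {k : ℕ} (hk : k < 3) : k < G.egirth :=
  (Nat.cast_lt.2 hk).trans_le three_le_egirth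

lemma exists_isCycle_of_not_isAcyclic (hG : ¬ G.IsAcyclic) :
    ∃ (a : V) (w : G.Walk a a), w.IsCycle := by
  simpa only [IsAcyclic, not_forall, not_not] using hG

lemma card_edges_toFinset_of_isTrail [DecidableEq V] {a b : V} {w : G.Walk a b} (hw : w.IsTrail) :
    #w.edges.toFinset = w.length := by
  rw [List.toFinset_card_of_nodup hw.edges_nodup, Walk.length_edges]

lemma edges_toFinset_subset [DecidableEq V] {a b : V} (w : (edgeGraph S).Walk a b) :
    w.edges.toFinset ⊆ S :=
  fun _ he => edgeSet_edgeGraph_subset (w.edges_subset_edgeSet (List.mem_toFinset.1 he))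

lemma length_le_card_of_isTrail {a b : V} {w : (edgeGraph S).Walk a b} (hw : w.IsTrail) :
    w.length ≤ #S := by
  classical
  rw [← card_edges_toFinset_of_isTrail hw]
  exact card_le_card (edges_toFinset_subset w)

lemma egirth_edgeGraph_le_card (hS : ¬ (edgeGraph S).IsAcyclic) : (edgeGraph S).egirth ≤ #S := by
  obtain ⟨a, w, hw⟩ := exists_isCycle_of_not_isAcyclic hS
  exact (egirth_le_length hw).trans (mod_cast length_le_card_of_isTrail hw.isTrail)

lemma isAcyclic_edgeGraph_of_card_lt_egirth (hS : (S : Set (Sym2 V)) ⊆ G.edgeSet)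
    (hcard : #S < G.egirth) : (edgeGraph S).IsAcyclic := by
  by_contra hcyclic
  exact (egirth_anti (edgeGraph_le hS)).not_gt
    ((egirth_edgeGraph_le_card hcyclic).trans_lt hcard)

lemma even_card_filter_mem [DecidableEq V] (hS : ¬ (edgeGraph S).IsAcyclic)
    (hcard : #S ≤ (edgeGraph S).egirth) (x : V) : Even #{e ∈ S | x ∈ e} := by
  obtain ⟨a, w, hw⟩ := exists_isCycle_of_not_isAcyclic hS
  have hlength : #S ≤ w.length := by exact_mod_cast hcard.trans (egirth_le_length hw)
  have hedges : w.edges.toFinset = S := eq_of_subset_of_card_le (edges_toFinset_subset w) <| by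
    rwa [card_edges_toFinset_of_isTrail hw.isTrail]
  have heven : Even (w.edges.countP fun e => x ∈ e) :=
    (hw.isTrail.even_countP_edges_iff x).2 fun h => absurd rfl h
  have hfilter : {e ∈ w.edges.toFinset | x ∈ e} =
      (w.edges.filter fun e => x ∈ e).toFinset := by
    ext
    simp
  rwa [← hedges, hfilter, List.toFinset_card_of_nodup (hw.edges_nodup.filter _),
    ← List.countP_eq_length_filter]

-- In `insert e S` every vertex has even degree, so the endpoints of `e` are exactly the vertices
-- of odd degree in `S`.
lemma eq_of_not_isAcyclic_insert [DecidableEq V] {e f : Sym2 V} (he : e ∉ S) (hf : f ∉ S)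
    (hecyclic : ¬ (edgeGraph (insert e S)).IsAcyclic)
    (hfcyclic : ¬ (edgeGraph (insert f S)).IsAcyclic)
    (hecard : #(insert e S) ≤ (edgeGraph (insert e S)).egirth)
    (hfcard : #(insert f S) ≤ (edgeGraph (insert f S)).egirth) : e = f := by
  have mem_iff_odd {e : Sym2 V} (he : e ∉ S) (hcyclic : ¬ (edgeGraph (insert e S)).IsAcyclic)
      (hcard : #(insert e S) ≤ (edgeGraph (insert e S)).egirth) (x : V) :
      x ∈ e ↔ Odd #{e ∈ S | x ∈ e} := by
    have heven := even_card_filter_mem hcyclic hcard x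
    rw [filter_insert] at heven
    split_ifs at heven with hx
    · rw [card_insert_of_notMem fun h => he (mem_filter.1 h).1, Nat.even_add_one,
        Nat.not_even_iff_odd] at heven
      exact iff_of_true hx heven
    · exact iff_of_false hx (Nat.not_odd_iff_even.2 heven)
  exact Sym2.ext fun x => (mem_iff_odd he hecyclic hecard x).trans
    (mem_iff_odd hf hfcyclic hfcard x).symm

lemma card_le_rank_add_one [Finite V] (hS : (S : Set (Sym2 V)) ⊆ G.edgeSet)
    (hgirth : rank (edgeGraph S) < G.egirth) : #S ≤ rank (edgeGraph S) + 1 := by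
  classical
  obtain ⟨T, hTS, hT⟩ := exists_subset_card_eq (rank_edgeGraph_le_card S)
  have card_insert {e : Sym2 V} (he : e ∈ S \ T) : #(insert e T) = rank (edgeGraph S) + 1 := by
    rw [card_insert_of_notMem (mem_sdiff.1 he).2, hT]
  have insert_subset {e : Sym2 V} (he : e ∈ S \ T) : insert e T ⊆ S :=
    insert_subset (mem_sdiff.1 he).1 hTS
  have insert_subset_edgeSet {e : Sym2 V} (he : e ∈ S \ T) :
      (↑(insert e T) : Set (Sym2 V)) ⊆ G.edgeSet :=
    (coe_subset.2 (insert_subset he)).trans hS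
  have cyclic {e : Sym2 V} (he : e ∈ S \ T) : ¬ (edgeGraph (insert e T)).IsAcyclic := by
    rw [isAcyclic_edgeGraph_iff (insert_subset_edgeSet he), card_insert he]
    have := rank_mono (edgeGraph_mono (insert_subset he))
    lia
  have short {e : Sym2 V} (he : e ∈ S \ T) :
      #(insert e T) ≤ (edgeGraph (insert e T)).egirth := by
    refine le_trans ?_ (egirth_anti (edgeGraph_le (insert_subset_edgeSet he)))
    rw [card_insert he]
    exact_mod_cast Order.add_one_le_of_lt hgirth
  have hsdiff : #(S \ T) ≤ 1 := card_le_one.2 fun e he f hf =>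
    eq_of_not_isAcyclic_insert (mem_sdiff.1 he).2 (mem_sdiff.1 hf).2 (cyclic he) (cyclic hf)
      (short he) (short hf)
  rw [card_sdiff_of_subset hTS] at hsdiff
  lia

lemma rank_edgeGraph_eq_iff [Finite V] (hS : (S : Set (Sym2 V)) ⊆ G.edgeSet) {k : ℕ}
    (hk : k < G.egirth) :
    rank (edgeGraph S) = k ↔ #S = k ∨ #S = k + 1 ∧ ¬ (edgeGraph S).IsAcyclic := by
  rw [isAcyclic_edgeGraph_iff hS]
  constructor
  · rintro rfl
    have := rank_edgeGraph_le_card S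
    have := card_le_rank_add_one hS hk
    lia
  · have rank_of_card {T : Finset (Sym2 V)} (hTS : T ⊆ S) (hT : #T = k) :
        rank (edgeGraph T) = k := by
      have hTG := (coe_subset.2 hTS).trans hS
      rw [← hT, ← isAcyclic_edgeGraph_iff hTG]
      exact isAcyclic_edgeGraph_of_card_lt_egirth hTG (hT ▸ hk)
    rintro (hcard | ⟨hcard, hrank⟩)
    · exact rank_of_card subset_rfl hcard
    · obtain ⟨T, hTS, hT⟩ := exists_subset_card_eq (by lia : k ≤ #S)
      have := rank_of_card hTS hT
      have := rank_mono (edgeGraph_mono hTS)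
      have := rank_edgeGraph_le_card S
      lia

end EdgeGraph

section Whitney

variable {V : Type*}

lemma apply_eq_of_walk {G : SimpleGraph V} {α : Type*} {f : V → α}
    (hf : ∀ a b, G.Adj a b → f a = f b) {a b : V} (w : G.Walk a b) : f a = f b := by
  induction w with
  | nil => rfl
  | cons h _ ih => exact (hf _ _ h).trans ih

/-- The functions constant on each connected component of `G`, encoded as the functions that do not
change along edges. -/
def constOnComponentsEquiv (G : SimpleGraph V) (α : Type*) :
    {f : V → α // ∀ a b, G.Adj a b → f a = f b} ≃ (G.ConnectedComponent → α) where
  toFun f c := c.lift f.1 fun _ _ w _ => apply_eq_of_walk f.2 w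
  invFun g := ⟨fun v => g (G.connectedComponentMk v), fun _ _ h =>
    congrArg g (ConnectedComponent.eq.2 h.reachable)⟩
  left_inv _ := rfl
  right_inv _ := funext fun c => c.ind fun _ => rfl

variable [Fintype V] (G : SimpleGraph V) [DecidableRel G.Adj]

/-- The expansion of the chromatic polynomial over all spanning subgraphs, due to Whitney. -/
noncomputable def whitneyPolynomial : ℤ[X] :=
  ∑ S ∈ G.edgeFinset.powerset,
    C ((-1) ^ #S) * X ^ Nat.card (edgeGraph S).ConnectedComponent

lemma coeff_reflect_whitneyPolynomial (k : ℕ) :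
    ((whitneyPolynomial G).reflect (Fintype.card V)).coeff k =
      ∑ S ∈ G.edgeFinset.powerset with rank (edgeGraph S) = k, (-1) ^ #S := by
  have revAt_eq_iff (S : Finset (Sym2 V)) :
      revAt (Fintype.card V) k = Nat.card (edgeGraph S).ConnectedComponent ↔
        rank (edgeGraph S) = k := by
    have hcard := card_connectedComponent_add_rank (edgeGraph S)
    rw [Nat.card_eq_fintype_card (α := V)] at hcard
    rw [← revAt_invol (N := Fintype.card V) (i := Nat.card _), (revAt _).injective.eq_iff,
      revAt_le (by lia)]
    lia
  rw [coeff_reflect, whitneyPolynomial, finsetSum_coeff, sum_filter]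
  simp only [coeff_C_mul_X_pow, revAt_eq_iff]

variable [DecidableEq V]

lemma card_inf_filter_isDiag_map (S : Finset (Sym2 V)) (k : ℕ) :
    #(S.inf fun e => ({f | (e.map f).IsDiag} : Finset (V → Fin k))) =
      k ^ Nat.card (edgeGraph S).ConnectedComponent := by
  classical
  have mem_inf_iff (f : V → Fin k) :
      f ∈ (S.inf fun e => ({f | (e.map f).IsDiag} : Finset (V → Fin k))) ↔
        ∀ a b, (edgeGraph S).Adj a b → f a = f b := by
    simp only [mem_inf, Sym2.forall, mem_filter_univ, Sym2.map_mk, Sym2.mk_isDiag_iff,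
      fromEdgeSet_adj, mem_coe]
    exact forall₂_congr fun a b =>
      ⟨fun h hab => h hab.1, fun h hab => by_contra fun hne => hne <| h ⟨hab, mt (congrArg f) hne⟩⟩
  rw [← Fintype.card_of_subtype _ mem_inf_iff, ← Nat.card_eq_fintype_card,
    Nat.card_congr (constOnComponentsEquiv _ _), Nat.card_fun, Nat.card_fin]

lemma numColorings_eq_card_inf_compl (k : ℕ) :
    G.numColorings k =
      #(G.edgeFinset.inf fun e => ({f | (e.map f).IsDiag} : Finset (V → Fin k))ᶜ) := by
  rw [numColorings, Fintype.card_of_subtype]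
  simp only [mem_inf, Sym2.forall, mem_edgeFinset, mem_edgeSet, mem_compl, mem_filter_univ,
    Sym2.map_mk, Sym2.mk_isDiag_iff, implies_true]

lemma eval_whitneyPolynomial (k : ℕ) : (whitneyPolynomial G).eval (k : ℤ) = G.numColorings k := by
  rw [numColorings_eq_card_inf_compl, inclusion_exclusion_card_inf_compl, whitneyPolynomial,
    eval_finsetSum]
  simp only [eval_mul, eval_C, eval_pow, eval_X, card_inf_filter_isDiag_map, Nat.cast_pow]

lemma whitneyPolynomial_eq_of_numColorings_eq {W : Type*} [Fintype W] [DecidableEq W]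
    {G : SimpleGraph V} [DecidableRel G.Adj] {H : SimpleGraph W} [DecidableRel H.Adj]
    (h : ∀ k, G.numColorings k = H.numColorings k) : whitneyPolynomial G = whitneyPolynomial H := by
  refine eq_of_infinite_eval_eq _ _ <|
    (Set.infinite_range_of_injective (Nat.cast_injective (R := ℤ))).mono ?_
  rintro _ ⟨k, rfl⟩
  rw [Set.mem_ofPred_eq, eval_whitneyPolynomial, eval_whitneyPolynomial, h]

end Whitney

section CyclicEdgeSets

variable {V : Type*} [Fintype V] {G : SimpleGraph V} [DecidableRel G.Adj] {k : ℕ}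
  {S : Finset (Sym2 V)}

variable (G k) in
open Classical in
/-- The sets of `k` edges of `G` that contain a cycle. For `k` at most the girth of `G`, these are
the edge sets of the cycles of length `k`. -/
noncomputable def cyclicEdgeSets : Finset (Finset (Sym2 V)) :=
  {S ∈ G.edgeFinset.powersetCard k | ¬ (edgeGraph S).IsAcyclic}

lemma mem_cyclicEdgeSets :
    S ∈ cyclicEdgeSets G k ↔ (S ⊆ G.edgeFinset ∧ #S = k) ∧ ¬ (edgeGraph S).IsAcyclic := by
  simp only [cyclicEdgeSets, mem_filter, mem_powersetCard]

lemma cyclicEdgeSets_eq_empty (hk : k < G.egirth) : cyclicEdgeSets G k = ∅ := by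
  refine eq_empty_of_forall_notMem fun S hS => ?_
  obtain ⟨⟨hSG, rfl⟩, hcyclic⟩ := mem_cyclicEdgeSets.1 hS
  exact hcyclic (isAcyclic_edgeGraph_of_card_lt_egirth (Set.subset_toFinset.1 hSG) hk)

lemma edges_toFinset_mem_cyclicEdgeSets [DecidableEq V] {a : V} {w : G.Walk a a} (hw : w.IsCycle) :
    w.edges.toFinset ∈ cyclicEdgeSets G w.length := by
  have hsub : (w.edges.toFinset : Set (Sym2 V)) ⊆ G.edgeSet := by
    rw [List.coe_toFinset]
    exact w.edges_subset_edgeSet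
  have htransfer : ∀ e ∈ w.edges, e ∈ (edgeGraph w.edges.toFinset).edgeSet := by
    rw [edgeSet_edgeGraph hsub]
    exact fun e he => List.mem_toFinset.2 he
  exact mem_cyclicEdgeSets.2
    ⟨⟨Set.subset_toFinset.2 hsub, card_edges_toFinset_of_isTrail hw.isTrail⟩,
      fun h => h _ (hw.transfer htransfer)⟩

lemma cyclicEdgeSets_nonempty (hk : k = G.egirth) : (cyclicEdgeSets G k).Nonempty := by
  classical
  have hG : ¬ G.IsAcyclic := by
    rw [← egirth_eq_top, ← hk]
    exact ENat.natCast_ne_top k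
  obtain ⟨a, w, hw, hlength⟩ := exists_egirth_eq_length.2 hG
  obtain rfl : k = w.length := by exact_mod_cast hk.trans hlength
  exact ⟨_, edges_toFinset_mem_cyclicEdgeSets hw⟩

lemma coeff_reflect_whitneyPolynomial_of_lt_egirth (hk : k < G.egirth) :
    ((whitneyPolynomial G).reflect (Fintype.card V)).coeff k =
      (-1) ^ k * ((#G.edgeFinset).choose k - #(cyclicEdgeSets G (k + 1))) := by
  classical
  have filter_rank : {S ∈ G.edgeFinset.powerset | rank (edgeGraph S) = k} =
      G.edgeFinset.powersetCard k ∪ cyclicEdgeSets G (k + 1) := by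
    ext S
    simp only [mem_filter, mem_powerset, mem_union, mem_powersetCard, mem_cyclicEdgeSets,
      and_assoc, ← and_or_left]
    exact and_congr_right fun hS => rank_edgeGraph_eq_iff (Set.subset_toFinset.1 hS) hk
  have hdisjoint : Disjoint (G.edgeFinset.powersetCard k) (cyclicEdgeSets G (k + 1)) :=
    disjoint_left.2 fun S hS hS' => by
      have := (mem_powersetCard.1 hS).2
      have := (mem_cyclicEdgeSets.1 hS').1.2
      lia
  have sum_powersetCard : ∑ S ∈ G.edgeFinset.powersetCard k, (-1 : ℤ) ^ #S =
      (#G.edgeFinset).choose k * (-1) ^ k := by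
    rw [sum_congr rfl fun S hS => by rw [(mem_powersetCard.1 hS).2], sum_const, card_powersetCard,
      nsmul_eq_mul]
  have sum_cyclicEdgeSets : ∑ S ∈ cyclicEdgeSets G (k + 1), (-1 : ℤ) ^ #S =
      #(cyclicEdgeSets G (k + 1)) * (-1) ^ (k + 1) := by
    rw [sum_congr rfl fun S hS => by rw [(mem_cyclicEdgeSets.1 hS).1.2], sum_const, nsmul_eq_mul]
  rw [coeff_reflect_whitneyPolynomial, filter_rank, sum_union hdisjoint, sum_powersetCard,
    sum_cyclicEdgeSets]
  ring

variable (G) in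
lemma natDegree_whitneyPolynomial : (whitneyPolynomial G).natDegree = Fintype.card V := by
  refine natDegree_eq_of_le_of_coeff_ne_zero ?_ ?_
  · refine natDegree_sum_le_of_forall_le _ _ fun S _ => (natDegree_C_mul_X_pow_le _ _).trans ?_
    rw [← Nat.card_eq_fintype_card, ← card_connectedComponent_add_rank (edgeGraph S)]
    exact Nat.le_add_right _ _
  · rw [← revAt_zero (Fintype.card V), ← coeff_reflect,
      coeff_reflect_whitneyPolynomial_of_lt_egirth (lt_egirth_of_lt_three zero_lt_three),
      cyclicEdgeSets_eq_empty (lt_egirth_of_lt_three (by norm_num))]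
    simp

end CyclicEdgeSets

section Triangles

variable {V : Type*} [DecidableEq V] {G : SimpleGraph V} {t : Finset V}

/-- The edges of the complete graph on `t`. -/
def cliqueEdges (t : Finset V) : Finset (Sym2 V) := t.offDiag.image Sym2.mk.uncurry

lemma mk_mem_cliqueEdges {a b : V} : s(a, b) ∈ cliqueEdges t ↔ a ∈ t ∧ b ∈ t ∧ a ≠ b := by
  rw [cliqueEdges]
  aesop

lemma isClique_iff_cliqueEdges_subset :
    G.IsClique t ↔ (cliqueEdges t : Set (Sym2 V)) ⊆ G.edgeSet := by
  simp only [IsClique, Set.Pairwise, Set.subset_def, Sym2.forall, mem_coe, mk_mem_cliqueEdges,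
    mem_edgeSet]
  exact ⟨fun h a b hab => h hab.1 hab.2.1 hab.2.2, fun h a ha b hb hne => h a b ⟨ha, hb, hne⟩⟩

lemma exists_mem_cliqueEdges_iff (ht : 1 < #t) (x : V) : (∃ e ∈ cliqueEdges t, x ∈ e) ↔ x ∈ t := by
  constructor
  · rintro ⟨e, he, hx⟩
    obtain ⟨y, rfl⟩ := hx
    exact (mk_mem_cliqueEdges.1 he).1
  · intro hx
    obtain ⟨y, hy, hne⟩ := exists_mem_ne ht x
    exact ⟨s(x, y), mk_mem_cliqueEdges.2 ⟨hx, hy, hne.symm⟩, Sym2.mem_mk_left x y⟩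

lemma cliqueEdges_injOn : Set.InjOn (cliqueEdges (V := V)) {t | 1 < #t} := fun s hs t ht h => by
  ext x
  rw [← exists_mem_cliqueEdges_iff hs, ← exists_mem_cliqueEdges_iff ht, h]

variable [Fintype V] [DecidableRel G.Adj]

lemma cliqueEdges_mem_cyclicEdgeSets (ht : G.IsNClique 3 t) :
    cliqueEdges t ∈ cyclicEdgeSets G 3 := by
  have hsub := isClique_iff_cliqueEdges_subset.1 ht.isClique
  have hcard : #(cliqueEdges t) = 3 := by
    rw [cliqueEdges, Sym2.card_image_offDiag, ht.card_eq]
    rfl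
  have hclique : (edgeGraph (cliqueEdges t)).IsNClique 3 t :=
    ⟨isClique_iff_cliqueEdges_subset.2 (edgeSet_edgeGraph hsub).ge, ht.card_eq⟩
  exact mem_cyclicEdgeSets.2
    ⟨⟨Set.subset_toFinset.2 hsub, hcard⟩, fun h => h.cliqueFree le_rfl t hclique⟩

lemma exists_isNClique_cliqueEdges_eq {S : Finset (Sym2 V)} (hS : S ∈ cyclicEdgeSets G 3) :
    ∃ t, G.IsNClique 3 t ∧ cliqueEdges t = S := by
  obtain ⟨⟨hSG, hcard⟩, hcyclic⟩ := mem_cyclicEdgeSets.1 hS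
  obtain ⟨a, w, hw⟩ := exists_isCycle_of_not_isAcyclic hcyclic
  have hlength : w.length = 3 :=
    (hcard ▸ length_le_card_of_isTrail hw.isTrail).antisymm hw.three_le_length
  obtain ⟨t, ht⟩ := is3Clique_iff_exists_cycle_length_three.2 ⟨a, w, hw, hlength⟩
  have htG : G.IsNClique 3 t := ht.mono (edgeGraph_le (Set.subset_toFinset.1 hSG))
  have hsub : cliqueEdges t ⊆ S :=
    coe_subset.1 ((isClique_iff_cliqueEdges_subset.1 ht.isClique).trans edgeSet_edgeGraph_subset)
  refine ⟨t, htG, eq_of_subset_of_card_le hsub ?_⟩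
  rw [hcard, (mem_cyclicEdgeSets.1 (cliqueEdges_mem_cyclicEdgeSets htG)).1.2]

variable (G) in
lemma card_cyclicEdgeSets_three : #(cyclicEdgeSets G 3) = #(G.cliqueFinset 3) := by
  refine (card_bij (fun t _ => cliqueEdges t) (fun t ht => ?_) (fun s hs t ht h => ?_)
    fun S hS => ?_).symm
  · exact cliqueEdges_mem_cyclicEdgeSets (mem_cliqueFinset_iff.1 ht)
  · have one_lt_card {t : Finset V} (ht : t ∈ G.cliqueFinset 3) : 1 < #t :=
      (mem_cliqueFinset_iff.1 ht).card_eq ▸ (by norm_num)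
    exact cliqueEdges_injOn (one_lt_card hs) (one_lt_card ht) h
  · simpa only [mem_cliqueFinset_iff, exists_prop] using exists_isNClique_cliqueEdges_eq hS

end Triangles

section Comparison

variable {V W : Type*} [Fintype V] [Fintype W] {G : SimpleGraph V} [DecidableRel G.Adj]
  {H : SimpleGraph W} [DecidableRel H.Adj]

lemma card_eq_of_whitneyPolynomial_eq (h : whitneyPolynomial G = whitneyPolynomial H) :
    Fintype.card V = Fintype.card W := by
  rw [← natDegree_whitneyPolynomial G, h, natDegree_whitneyPolynomial]

lemma choose_sub_card_cyclicEdgeSets_eq (h : whitneyPolynomial G = whitneyPolynomial H) {k : ℕ}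
    (hG : k < G.egirth) (hH : k < H.egirth) :
    ((#G.edgeFinset).choose k - #(cyclicEdgeSets G (k + 1)) : ℤ) =
      (#H.edgeFinset).choose k - #(cyclicEdgeSets H (k + 1)) := by
  have hcoeff := coeff_reflect_whitneyPolynomial_of_lt_egirth hG
  rw [h, card_eq_of_whitneyPolynomial_eq h, coeff_reflect_whitneyPolynomial_of_lt_egirth hH]
    at hcoeff
  exact (mul_left_cancel₀ (pow_ne_zero k (by norm_num)) hcoeff).symm

lemma card_edgeFinset_eq_of_whitneyPolynomial_eq (h : whitneyPolynomial G = whitneyPolynomial H) :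
    #G.edgeFinset = #H.edgeFinset := by
  have heq := choose_sub_card_cyclicEdgeSets_eq h (k := 1) (lt_egirth_of_lt_three (by norm_num))
    (lt_egirth_of_lt_three (by norm_num))
  rw [cyclicEdgeSets_eq_empty (lt_egirth_of_lt_three (by norm_num)),
    cyclicEdgeSets_eq_empty (lt_egirth_of_lt_three (by norm_num))] at heq
  simpa using heq

lemma card_cyclicEdgeSets_eq_of_whitneyPolynomial_eq
    (h : whitneyPolynomial G = whitneyPolynomial H) {k : ℕ} (hG : k < G.egirth)
    (hH : k < H.egirth) : #(cyclicEdgeSets G (k + 1)) = #(cyclicEdgeSets H (k + 1)) := by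
  have heq := choose_sub_card_cyclicEdgeSets_eq h hG hH
  rw [card_edgeFinset_eq_of_whitneyPolynomial_eq h] at heq
  exact_mod_cast sub_right_injective heq

lemma card_cliqueFinset_three_eq_of_whitneyPolynomial_eq [DecidableEq V] [DecidableEq W]
    (h : whitneyPolynomial G = whitneyPolynomial H) :
    #(G.cliqueFinset 3) = #(H.cliqueFinset 3) := by
  rw [← card_cyclicEdgeSets_three, ← card_cyclicEdgeSets_three]
  exact card_cyclicEdgeSets_eq_of_whitneyPolynomial_eq h (lt_egirth_of_lt_three (by norm_num))
    (lt_egirth_of_lt_three (by norm_num))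

lemma egirth_le_of_whitneyPolynomial_eq (h : whitneyPolynomial G = whitneyPolynomial H) :
    H.egirth ≤ G.egirth := by
  by_contra! hlt
  obtain ⟨g, hg⟩ := ENat.ne_top_iff_exists.1 hlt.ne_top
  obtain ⟨k, rfl⟩ : ∃ k, g = k + 1 := Nat.exists_eq_succ_of_ne_zero fun hzero => by
    simpa [← hg, hzero] using three_le_egirth (G := G)
  have hk : k < G.egirth := hg ▸ Nat.cast_lt.2 k.lt_succ_self
  have hcard := card_cyclicEdgeSets_eq_of_whitneyPolynomial_eq h hk (hk.trans hlt)
  rw [cyclicEdgeSets_eq_empty (hg.trans_lt hlt), card_empty] at hcard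
  exact (cyclicEdgeSets_nonempty hg).card_ne_zero hcard

end Comparison

end ChromaticPolynomial

theorem chromaticPolynomial_determines_general {V W : Type*} [Fintype V] [DecidableEq V]
    [Fintype W] [DecidableEq W]
    (G : SimpleGraph V) [DecidableRel G.Adj] (H : SimpleGraph W) [DecidableRel H.Adj]
    (hPoly : ∀ k : ℕ, G.numColorings k = H.numColorings k) :
    Fintype.card V = Fintype.card W ∧
    G.edgeFinset.card = H.edgeFinset.card ∧
    (G.cliqueFinset 3).card = (H.cliqueFinset 3).card ∧
    G.egirth = H.egirth :=
  have h := ChromaticPolynomial.whitneyPolynomial_eq_of_numColorings_eq hPoly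
  ⟨ChromaticPolynomial.card_eq_of_whitneyPolynomial_eq h,
    ChromaticPolynomial.card_edgeFinset_eq_of_whitneyPolynomial_eq h,
    ChromaticPolynomial.card_cliqueFinset_three_eq_of_whitneyPolynomial_eq h,
    (ChromaticPolynomial.egirth_le_of_whitneyPolynomial_eq h.symm).antisymm
      (ChromaticPolynomial.egirth_le_of_whitneyPolynomial_eq h)⟩

/-- Finite connected simple graphs with equal chromatic polynomials have the same number
of vertices, edges, and triangles; moreover one contains a cycle iff the other does, and
in that case they have the same girth. -/
theorem chromaticPolynomial_determines {V W : Type*} [Fintype V] [DecidableEq V]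
    [Fintype W] [DecidableEq W]
    (G : SimpleGraph V) [DecidableRel G.Adj] (H : SimpleGraph W) [DecidableRel H.Adj]
    (hG : G.Connected) (hH : H.Connected)
    (hPoly : ∀ k : ℕ, G.numColorings k = H.numColorings k) :
    Fintype.card V = Fintype.card W ∧
    G.edgeFinset.card = H.edgeFinset.card ∧
    (G.cliqueFinset 3).card = (H.cliqueFinset 3).card ∧
    (¬ G.IsAcyclic ↔ ¬ H.IsAcyclic) ∧
    (¬ G.IsAcyclic → G.girth = H.girth) := by
  obtain ⟨hV, hE, hT, hegirth⟩ := chromaticPolynomial_determines_general G H hPoly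
  exact ⟨hV, hE, hT, by rw [← SimpleGraph.egirth_eq_top, hegirth, SimpleGraph.egirth_eq_top],
    fun _ => congrArg ENat.toNat hegirth⟩
end
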